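/- Let 𝕋_4 denote the 4-uniform generalized triangle. There exist constants N_0 and c > 0 such that for all integers n ≥ N_0 and all integers t with 0 ≤ t ≤ c·n, one has EX(n,(t+1)𝕋_4) = { K_t^4 ⋈ T_4(n−t,4) }. -/

import Mathlib

open Filter

namespace DensityCH

/-- An `r`-uniform hypergraph with vertices in `ℕ`:
a finite vertex set together with a set of `r`-element edges. -/
structure HGraph (r : ℕ) where
  verts : Finset ℕ
  edges : Finset (Finset ℕ)
  edges_sub : ∀ e ∈ edges, e ⊆ verts
  edges_card : ∀ e ∈ edges, e.card = r

namespace HGraph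

/-- Build an `r`-graph from a vertex set and a set of candidate edges,
keeping exactly the well-formed candidates. -/
def ofEdges (r : ℕ) (V : Finset ℕ) (E : Finset (Finset ℕ)) : HGraph r where
  verts := V
  edges := E.filter fun e => e ⊆ V ∧ e.card = r
  edges_sub := fun e he => ((Finset.mem_filter.mp he).2).1
  edges_card := fun e he => ((Finset.mem_filter.mp he).2).2

variable {r : ℕ}

/-- `H` contains a copy of `F`, i.e. a subgraph isomorphic to `F`. -/
def IsCopyIn (F H : HGraph r) : Prop :=
  ∃ f : ℕ → ℕ, Set.InjOn f ↑F.verts ∧ (∀ v ∈ F.verts, f v ∈ H.verts) ∧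
    ∀ e ∈ F.edges, e.image f ∈ H.edges

/-- The subgraph of `H` induced on `S`. -/
def induce (H : HGraph r) (S : Finset ℕ) : HGraph r :=
  ofEdges r (H.verts ∩ S) (H.edges.filter fun e => e ⊆ S)

/-- Delete a vertex from `H`. -/
def deleteVert (H : HGraph r) (v : ℕ) : HGraph r :=
  ofEdges r (H.verts.erase v) (H.edges.filter fun e => v ∉ e)

/-- The degree of a vertex. -/
def deg (H : HGraph r) (v : ℕ) : ℕ := (H.edges.filter fun e => v ∈ e).card

/-- The maximum degree `Δ(H)`. -/
def maxDeg (H : HGraph r) : ℕ := H.verts.sup H.deg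

/-- The minimum degree `δ(H)`. -/
def minDeg (H : HGraph r) : ℕ :=
  if h : H.verts.Nonempty then H.verts.inf' h H.deg else 0

/-- The average degree `d(H) = r·|E(H)|/|V(H)|`. -/
noncomputable def avgDeg (H : HGraph r) : ℝ :=
  (r : ℝ) * (H.edges.card : ℝ) / (H.verts.card : ℝ)

/-- `H` contains `k` pairwise vertex-disjoint copies of `F`, i.e. `ν(F,H) ≥ k`. -/
def HasMatching (F H : HGraph r) (k : ℕ) : Prop :=
  ∃ S : Fin k → Finset ℕ,
    (∀ i, S i ⊆ H.verts ∧ (S i).card = F.verts.card) ∧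
    (∀ i j, i ≠ j → Disjoint (S i) (S j)) ∧
    ∀ i, F.IsCopyIn (H.induce (S i))

/-- Isomorphism of hypergraphs. -/
def Iso (G H : HGraph r) : Prop :=
  ∃ f : ℕ → ℕ, Set.BijOn f ↑G.verts ↑H.verts ∧
    ∀ e ∈ Finset.powersetCard r G.verts, (e ∈ G.edges ↔ e.image f ∈ H.edges)

/-- The join `G ⋈ H`: all edges of `G`, all edges of `H`, and all `r`-sets meeting
both vertex sets. -/
def join (G H : HGraph r) : HGraph r :=
  ofEdges r (G.verts ∪ H.verts)
    (G.edges ∪ H.edges ∪ ((Finset.powersetCard r (G.verts ∪ H.verts)).filter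
      fun e => (e ∩ G.verts).Nonempty ∧ (e ∩ H.verts).Nonempty))

end HGraph

/-- The complete `r`-graph on a vertex set `S`. -/
def completeOn (r : ℕ) (S : Finset ℕ) : HGraph r :=
  HGraph.ofEdges r S (Finset.powersetCard r S)

/-- The `r`-graph on `V` with no edges. -/
def emptyOn (r : ℕ) (V : Finset ℕ) : HGraph r := HGraph.ofEdges r V ∅

/-- The Turán number `ex(n,F)`. -/
noncomputable def exN (r n : ℕ) (F : HGraph r) : ℕ :=
  sSup {m | ∃ H : HGraph r, H.verts.card = n ∧ ¬ F.IsCopyIn H ∧ H.edges.card = m}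

/-- `d(n,F) = r·ex(n,F)/n`. -/
noncomputable def dN (r n : ℕ) (F : HGraph r) : ℝ := (r : ℝ) * (exN r n F : ℝ) / (n : ℝ)

/-- `δ(n,F) = ex(n,F) − ex(n−1,F)` (as a real number). -/
noncomputable def deltaN (r n : ℕ) (F : HGraph r) : ℝ := (exN r n F : ℝ) - (exN r (n-1) F : ℝ)

/-- `x` is the Turán density `π(F)`, i.e. the limit of `ex(n,F)/C(n,r)`. -/
def HasTuranDensity (r : ℕ) (F : HGraph r) (x : ℝ) : Prop :=
  Tendsto (fun n : ℕ => (exN r n F : ℝ) / (n.choose r : ℝ)) atTop (nhds x)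

/-- `ex(n,(t+1)F)`: the maximum number of edges of an `n`-vertex `r`-graph with no
`t+1` pairwise vertex-disjoint copies of `F`. -/
noncomputable def exMatchN (r n t : ℕ) (F : HGraph r) : ℕ :=
  sSup {m | ∃ H : HGraph r, H.verts.card = n ∧ ¬ F.HasMatching H (t+1) ∧ H.edges.card = m}

/-- `H ∈ EX(n,F)`. -/
def IsExtremalFree (r n : ℕ) (F H : HGraph r) : Prop :=
  H.verts.card = n ∧ ¬ F.IsCopyIn H ∧ H.edges.card = exN r n F

/-- `H ∈ EX(n,(t+1)F)`. -/
def IsExtremalMatchingFree (r n t : ℕ) (F H : HGraph r) : Prop :=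
  H.verts.card = n ∧ ¬ F.HasMatching H (t+1) ∧ H.edges.card = exMatchN r n t F

/-- `F` is `(f1, f2)`-bounded at `n`. -/
def BoundedAt (r n : ℕ) (F : HGraph r) (f1 f2 : ℝ) : Prop :=
  ∀ H : HGraph r, H.verts.card = n → ¬ F.IsCopyIn H →
    dN r n F - f1 ≤ H.avgDeg → (H.maxDeg : ℝ) ≤ dN r n F + f2

/-- `ex(·,F)` is `g`-smooth at `n`: `|δ(n,F) − d(n−1,F)| ≤ g(n)`. -/
def SmoothAt (r n : ℕ) (F : HGraph r) (g : ℝ) : Prop :=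
  |deltaN r n F - dN r (n-1) F| ≤ g

/-- The collection `H 0, …, H t` (on a common vertex set) has a rainbow `F`-matching. -/
def HasRainbowMatching (r t : ℕ) (F : HGraph r) (H : Fin (t+1) → HGraph r) : Prop :=
  ∃ S : Fin (t+1) → Finset ℕ,
    (∀ i, S i ⊆ (H i).verts ∧ (S i).card = F.verts.card) ∧
    (∀ i j, i ≠ j → Disjoint (S i) (S j)) ∧
    ∀ i, F.IsCopyIn ((H i).induce (S i))

/-!  Patterns -/

/-- An `r`-uniform pattern: a finite index set together with a collection of
`r`-multisets on it. -/
structure Pattern (r : ℕ) where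
  idx : Finset ℕ
  mE : Finset (Multiset ℕ)
  card_eq : ∀ s ∈ mE, Multiset.card s = r
  mem_idx : ∀ s ∈ mE, ∀ i ∈ s, i ∈ idx

namespace Pattern

variable {r : ℕ}

/-- The pattern `P − i`. -/
def erase (P : Pattern r) (i : ℕ) : Pattern r where
  idx := P.idx.erase i
  mE := P.mE.filter fun s => i ∉ s
  card_eq := fun s hs => P.card_eq s (Finset.mem_filter.mp hs).1
  mem_idx := by
    intro s hs j hj
    have h1 := Finset.mem_filter.mp hs
    refine Finset.mem_erase.mpr ⟨?_, P.mem_idx s h1.1 j hj⟩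
    rintro rfl
    exact h1.2 hj

/-- `H` is a `P`-construction: a blowup of the pattern `P`. -/
def IsConstruction (P : Pattern r) (H : HGraph r) : Prop :=
  ∃ part : ℕ → ℕ, (∀ v ∈ H.verts, part v ∈ P.idx) ∧
    ∀ e : Finset ℕ, e ∈ H.edges ↔ (e ⊆ H.verts ∧ e.card = r ∧ Multiset.map part e.val ∈ P.mE)

/-- `H` is a `P`-subconstruction: a subgraph of a `P`-construction. -/
def IsSubconstruction (P : Pattern r) (H : HGraph r) : Prop :=
  ∃ G : HGraph r, P.IsConstruction G ∧ H.verts ⊆ G.verts ∧ H.edges ⊆ G.edges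

end Pattern

/-- `Λ(P,n)`: the maximum number of edges of an `n`-vertex `P`-construction. -/
noncomputable def patEx (r : ℕ) (P : Pattern r) (n : ℕ) : ℕ :=
  sSup {m | ∃ H : HGraph r, P.IsConstruction H ∧ H.verts.card = n ∧ H.edges.card = m}

/-- The Lagrangian `λ(P) = lim Λ(P,n)/C(n,r)`. -/
noncomputable def patLagrangian (r : ℕ) (P : Pattern r) : ℝ :=
  limUnder atTop fun n : ℕ => (patEx r P n : ℝ) / (n.choose r : ℝ)

/-- The pattern `P` is minimal: `λ(P−i) < λ(P)` for all `i`. -/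
def Pattern.Minimal {r : ℕ} (P : Pattern r) : Prop :=
  ∀ i ∈ P.idx, patLagrangian r (P.erase i) < patLagrangian r P

/-- `(F,P)` is a Turán pair. -/
def IsTuranPair (r : ℕ) (F : HGraph r) (P : Pattern r) : Prop :=
  (∀ H : HGraph r, P.IsConstruction H → ¬ F.IsCopyIn H) ∧
  (∀ H : HGraph r, ¬ F.IsCopyIn H → H.edges.card = exN r H.verts.card F →
    P.IsConstruction H)

/-- `F` is edge-stable with respect to `P` (with Turán density `π`). -/
def EdgeStable (r : ℕ) (F : HGraph r) (P : Pattern r) (π : ℝ) : Prop :=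
  ∀ δ : ℝ, 0 < δ → ∃ N₀ : ℕ, ∃ ζ : ℝ, 0 < ζ ∧
    ∀ H : HGraph r, N₀ ≤ H.verts.card → ¬ F.IsCopyIn H →
      (π - ζ) * (H.verts.card.choose r : ℝ) ≤ (H.edges.card : ℝ) →
      ∃ H' : HGraph r, H'.verts ⊆ H.verts ∧ H'.edges ⊆ H.edges ∧
        (π - δ) * (H.verts.card.choose r : ℝ) ≤ (H'.edges.card : ℝ) ∧
        P.IsSubconstruction H'

/-- `F` is weakly vertex-extendable with respect to `P` (with Turán density `π`). -/
def WeaklyVertexExtendable (r : ℕ) (F : HGraph r) (P : Pattern r) (π : ℝ) : Prop :=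
  ∀ δ : ℝ, 0 < δ → ∃ N₀ : ℕ, ∃ ζ : ℝ, 0 < ζ ∧
    ∀ H : HGraph r, N₀ ≤ H.verts.card → ¬ F.IsCopyIn H →
      (π - ζ) * (((H.verts.card - 1).choose (r-1) : ℕ) : ℝ) ≤ (H.minDeg : ℝ) →
      ∀ v ∈ H.verts, P.IsSubconstruction (H.deleteVert v) →
        (H.deg v : ℝ) ≤ (π + δ) * (((H.verts.card - 1).choose (r-1) : ℕ) : ℝ)

/-- `F` is degree-stable with respect to `P` (with Turán density `π`). -/
def DegreeStable (r : ℕ) (F : HGraph r) (P : Pattern r) (π : ℝ) : Prop :=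
  ∃ ζ : ℝ, 0 < ζ ∧ ∃ N₀ : ℕ,
    ∀ H : HGraph r, N₀ ≤ H.verts.card → ¬ F.IsCopyIn H →
      (π - ζ) * (((H.verts.card - 1).choose (r-1) : ℕ) : ℝ) ≤ (H.minDeg : ℝ) →
      P.IsSubconstruction H

/-!  Concrete constructions -/

/-- The generalized Turán graph `T_r(·,ℓ)` on vertex set `V` (parts are residue
classes mod `ℓ`; on an interval these are balanced). -/
def turanOn (r ℓ : ℕ) (V : Finset ℕ) : HGraph r :=
  HGraph.ofEdges r V ((Finset.powersetCard r V).filter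
    fun e => ∀ u ∈ e, ∀ v ∈ e, u % ℓ = v % ℓ → u = v)

/-- The `r`-graph on `V₁ ∪ V₂` whose edges are all `r`-sets meeting both parts. -/
def crossOn (r : ℕ) (V₁ V₂ : Finset ℕ) : HGraph r :=
  HGraph.ofEdges r (V₁ ∪ V₂) ((Finset.powersetCard r (V₁ ∪ V₂)).filter
    fun e => (e ∩ V₁).Nonempty ∧ (e ∩ V₂).Nonempty)

/-- The `r`-graph on `V₁ ∪ V₂` whose edges are all `r`-sets meeting `V₁` in an odd
number of vertices. -/
def oddCross (r : ℕ) (V₁ V₂ : Finset ℕ) : HGraph r :=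
  HGraph.ofEdges r (V₁ ∪ V₂) ((Finset.powersetCard r (V₁ ∪ V₂)).filter
    fun e => Odd (e ∩ V₁).card)

/-- The Fano plane. -/
def fano : HGraph 3 :=
  HGraph.ofEdges 3 (Finset.Icc 1 7)
    {({1,2,3} : Finset ℕ), {3,4,5}, {5,6,1}, {1,7,4}, {2,7,5}, {3,7,6}, {2,4,6}}

/-- The generalized triangle `𝕋_r`, with edges `{1,…,r}`, `{1,…,r−1,r+1}` and
`{r,…,2r−1}`. -/
def genTri (r : ℕ) : HGraph r :=
  HGraph.ofEdges r (Finset.Icc 1 (2*r - 1))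
    {Finset.Icc 1 r, Finset.Icc 1 (r-1) ∪ {r+1}, Finset.Icc r (2*r - 1)}

/-- `G` is a blowup of the `r`-graph `W` (viewing `W` as a pattern). -/
def IsBlowupOf {r : ℕ} (W G : HGraph r) : Prop :=
  ∃ part : ℕ → ℕ, (∀ v ∈ G.verts, part v ∈ W.verts) ∧
    ∀ e : Finset ℕ, e ∈ G.edges ↔
      (e ⊆ G.verts ∧ e.card = r ∧ ∃ f ∈ W.edges, Multiset.map part e.val = f.val)

/-- The expansion `H^F` of an `r`-graph `F`: for every pair of vertices not covered
by an edge of `F`, add an edge consisting of this pair plus `r−2` new vertices,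
these sets of new vertices being pairwise disjoint. -/
def HGraph.expansion {r : ℕ} (F : HGraph r) : HGraph r :=
  HGraph.ofEdges r
    (F.verts ∪ (((F.verts ×ˢ F.verts).filter fun p =>
        p.1 < p.2 ∧ ∀ e ∈ F.edges, ¬ (p.1 ∈ e ∧ p.2 ∈ e)).biUnion fun p =>
      (Finset.range (r-2)).image fun s =>
        (F.verts.sup id + 1) + (p.1 * (F.verts.sup id + 1) + p.2) * r + s))
    (F.edges ∪ (((F.verts ×ˢ F.verts).filter fun p =>
        p.1 < p.2 ∧ ∀ e ∈ F.edges, ¬ (p.1 ∈ e ∧ p.2 ∈ e)).image fun p =>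
      insert p.1 (insert p.2 ((Finset.range (r-2)).image fun s =>
        (F.verts.sup id + 1) + (p.1 * (F.verts.sup id + 1) + p.2) * r + s))))

/-- A `2`-graph is a tree on `k` vertices: `k` vertices, `k−1` edges, connected. -/
def IsTreeGraph (k : ℕ) (T : HGraph 2) : Prop :=
  T.verts.card = k ∧ T.edges.card = k - 1 ∧
  ∀ S : Finset ℕ, S ⊆ T.verts → S.Nonempty → S ≠ T.verts →
    ∃ e ∈ T.edges, (e ∩ S).Nonempty ∧ (e \ S).Nonempty

/-- `T` satisfies the Erdős–Sós property for `k`: every graph with average degree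
greater than `k−2` contains `T`. -/
def ErdosSos (k : ℕ) (T : HGraph 2) : Prop :=
  ∀ G : HGraph 2, ((k : ℝ) - 2) * (G.verts.card : ℝ) < 2 * (G.edges.card : ℝ) →
    T.IsCopyIn G

/-- The `(r−2)`-expansion `Exp(T)` of a `2`-graph `T`: enlarge every edge by one
common fixed set of `r−2` new vertices. -/
def expTree (r : ℕ) (T : HGraph 2) : HGraph r :=
  HGraph.ofEdges r
    (T.verts ∪ ((Finset.range (r-2)).image fun s => T.verts.sup id + 1 + s))
    (T.edges.image fun e =>
      e ∪ ((Finset.range (r-2)).image fun s => T.verts.sup id + 1 + s))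

/-- The chromatic number of a `2`-graph. -/
noncomputable def chrom (F : HGraph 2) : ℕ :=
  sInf {k | ∃ c : ℕ → ℕ, (∀ v ∈ F.verts, c v < k) ∧
    ∀ e ∈ F.edges, ∀ u ∈ e, ∀ v ∈ e, u ≠ v → c u ≠ c v}

/-- A graph is edge-critical if deleting some edge lowers its chromatic number. -/
def EdgeCritical (F : HGraph 2) : Prop :=
  ∃ e ∈ F.edges, chrom (HGraph.ofEdges 2 F.verts (F.edges.erase e)) < chrom F

/-- `H` is semibipartite: the vertex set splits into `V₁ ∪ V₂` so that every edge
has exactly one vertex in `V₁`. -/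
def Semibipartite (r : ℕ) (H : HGraph r) : Prop :=
  ∃ V₁ ⊆ H.verts, ∀ e ∈ H.edges, (e ∩ V₁).card = 1

/-- `H` is a `K_ℓ^r`-subconstruction, i.e. an `ℓ`-partite `r`-graph. -/
def IsKlSub (r ℓ : ℕ) (H : HGraph r) : Prop :=
  ∃ f : ℕ → ℕ, (∀ v ∈ H.verts, f v < ℓ) ∧
    ∀ e ∈ H.edges, ∀ u ∈ e, ∀ v ∈ e, f u = f v → u = v

/-- The Lagrangian `λ(W)` of an `r`-graph `W`, viewing `W` as a pattern. -/
noncomputable def hgLagrangian (r : ℕ) (W : HGraph r) : ℝ :=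
  limUnder atTop fun n : ℕ =>
    ((sSup {m | ∃ G : HGraph r, IsBlowupOf W G ∧ G.verts.card = n ∧ G.edges.card = m} : ℕ) : ℝ)
      / (n.choose r : ℝ)

/-- The `r`-graph `B(r,ℓ+1)`. -/
def BGraph (r ℓ : ℕ) : HGraph r :=
  HGraph.ofEdges r (Finset.Icc 1 (ℓ+1))
    (insert (Finset.Icc 1 r)
      ((Finset.powersetCard r (Finset.Icc 2 (ℓ+1))).filter
        fun e => (e ∩ Finset.Icc 2 r).card ≤ 1))

/-- The `r`-uniform matching of size two, `M_2^r`. -/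
def matching2 (r : ℕ) : HGraph r :=
  HGraph.ofEdges r (Finset.Icc 1 (2*r)) {Finset.Icc 1 r, Finset.Icc (r+1) (2*r)}

/-- The expanded triangle `𝓒_3^{2r}`. -/
def expandedTriangle (r : ℕ) : HGraph (2*r) :=
  HGraph.ofEdges (2*r) (Finset.Icc 1 (3*r))
    {Finset.Icc 1 (2*r), Finset.Icc (r+1) (3*r), Finset.Icc 1 r ∪ Finset.Icc (2*r+1) (3*r)}

/-- The `4`-graph `𝔽_{4,3}`. -/
def F43 : HGraph 4 :=
  HGraph.ofEdges 4 (Finset.Icc 1 7)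
    {({1,2,3,4} : Finset ℕ), {1,2,3,5}, {1,2,3,6}, {1,2,3,7}, {4,5,6,7}}

/-- The `3`-graph `𝔽_{3,2}`. -/
def F32 : HGraph 3 :=
  HGraph.ofEdges 3 (Finset.Icc 1 5)
    {({1,2,3} : Finset ℕ), {1,2,4}, {1,2,5}, {3,4,5}}

/-- `H` contains pairwise vertex-disjoint copies of `F i`, `ts i` many of each. -/
def HasMixedMatching (r k : ℕ) (F : Fin k → HGraph r) (ts : Fin k → ℕ)
    (H : HGraph r) : Prop :=
  ∃ S : (i : Fin k) → Fin (ts i) → Finset ℕ,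
    (∀ i j, S i j ⊆ H.verts ∧ (S i j).card = (F i).verts.card) ∧
    (∀ p q : Σ i : Fin k, Fin (ts i), p ≠ q → Disjoint (S p.1 p.2) (S q.1 q.2)) ∧
    ∀ i j, (F i).IsCopyIn (H.induce (S i j))

/-- `ex(n, ⊔ᵢ tᵢ Fᵢ)`. -/
noncomputable def exMixedN (r k : ℕ) (F : Fin k → HGraph r) (ts : Fin k → ℕ)
    (n : ℕ) : ℕ :=
  sSup {m | ∃ H : HGraph r, H.verts.card = n ∧ ¬ HasMixedMatching r k F ts H ∧
    H.edges.card = m}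

/-- `ex(n, {F₁,…,F_k})`. -/
noncomputable def exFamN (r k : ℕ) (F : Fin k → HGraph r) (n : ℕ) : ℕ :=
  sSup {m | ∃ H : HGraph r, H.verts.card = n ∧ (∀ i, ¬ (F i).IsCopyIn H) ∧
    H.edges.card = m}


theorem sum_offDiag_mul (I : Finset ℕ) (f g : ℕ → ℝ) :
    ∑ p ∈ I.offDiag, f p.1 * g p.2 = (∑ i ∈ I, f i) * (∑ i ∈ I, g i) - ∑ i ∈ I, f i * g i := by
  have h : ∑ p ∈ I ×ˢ I, f p.1 * g p.2 = ∑ p ∈ I.diag, f p.1 * g p.2 + ∑ p ∈ I.offDiag, f p.1 * g p.2 := by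
    rw [← Finset.diag_union_offDiag, Finset.sum_union (Finset.disjoint_diag_offDiag I)]
  have h2 : ∑ p ∈ I.diag, f p.1 * g p.2 = ∑ i ∈ I, f i * g i := by
    rw [Finset.sum_diag]
  rw [Finset.sum_mul_sum, ← Finset.sum_product', h, h2]; ring

theorem pairSum (G : Finset (Finset ℕ)) (I : Finset ℕ) (hG : ∀ T ∈ G, T ⊆ I)
    (hlin : ∀ S ∈ G, ∀ T ∈ G, S ≠ T → (S ∩ T).card ≤ 1) (F : ℕ × ℕ → ℝ) (hF : ∀ p, 0 ≤ F p) :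
    ∑ T ∈ G, ∑ p ∈ T.offDiag, F p ≤ ∑ p ∈ I.offDiag, F p := by
  rw [← Finset.sum_biUnion]
  · apply Finset.sum_le_sum_of_subset_of_nonneg
    · intro p hp
      simp only [Finset.mem_biUnion, Finset.mem_offDiag] at hp ⊢
      obtain ⟨T, hT, h1, h2, h3⟩ := hp
      exact ⟨hG T hT h1, hG T hT h2, h3⟩
    · intro p _ _; exact hF p
  · intro S hS T hT hne
    rw [Function.onFun, Finset.disjoint_left]
    intro p hp hq
    simp only [Finset.mem_offDiag] at hp hq
    have := hlin S hS T hT hne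
    rw [Finset.card_le_one] at this
    exact hp.2.2 (this p.1 (by simp [hp.1, hq.1]) p.2 (by simp [hp.2.1, hq.2.1]))

theorem offDiag3 {x y z : ℕ} (hxy : x ≠ y) (hxz : x ≠ z) (hyz : y ≠ z) (F : ℕ × ℕ → ℝ) :
    ∑ p ∈ ({x, y, z} : Finset ℕ).offDiag, F p =
      F (x, y) + F (x, z) + F (y, x) + F (y, z) + F (z, x) + F (z, y) := by
  have : ({x, y, z} : Finset ℕ).offDiag = {(x, y), (x, z), (y, x), (y, z), (z, x), (z, y)} := by
    ext ⟨a, b⟩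
    simp only [Finset.mem_offDiag, Finset.mem_insert, Finset.mem_singleton, Prod.mk.injEq]
    grind
  rw [this]
  rw [Finset.sum_insert, Finset.sum_insert, Finset.sum_insert, Finset.sum_insert,
    Finset.sum_insert, Finset.sum_singleton]
  · ring
  all_goals simp; try grind

theorem num_b2 (a : ℝ) (h1 : 0.172 ≤ a) (h2 : a ≤ 0.2501) :
    (0.455 + 1.5 * (a - 0.173)) / 18 * ((1 - a) ^ 2 - (0.455 + 1.5 * (a - 0.173)) ^ 2 / 3) ≤ 0.998 / 64 := by
  nlinarith [mul_nonneg (sub_nonneg.2 h1) (sub_nonneg.2 h2), sq_nonneg (a - 0.2), mul_nonneg (mul_nonneg (sub_nonneg.2 h1) (sub_nonneg.2 h2)) (sub_nonneg.2 h2),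
   mul_nonneg (mul_nonneg (sub_nonneg.2 h1) (sub_nonneg.2 h2)) (sub_nonneg.2 h1), mul_nonneg (sub_nonneg.2 h1) (sq_nonneg (a - 0.21)), mul_nonneg (sub_nonneg.2 h2) (sq_nonneg (a - 0.21))]

theorem num_b3 (a : ℝ) (h1 : 0.172 ≤ a) (h2 : a ≤ 0.2501) :
    ((0.455 + 1.5 * (a - 0.173)) / 3) ^ 3 + a * (1 - a - (0.455 + 1.5 * (a - 0.173))) ^ 2 / 2
     + 1 / 10000 * (1 - a - (0.455 + 1.5 * (a - 0.173))) ≤ 1 / 64 := by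
  nlinarith [mul_nonneg (sub_nonneg.2 h1) (sub_nonneg.2 h2), sq_nonneg (a - 0.2), mul_nonneg (mul_nonneg (sub_nonneg.2 h1) (sub_nonneg.2 h2)) (sub_nonneg.2 h2),
   mul_nonneg (mul_nonneg (sub_nonneg.2 h1) (sub_nonneg.2 h2)) (sub_nonneg.2 h1)]

theorem chord (p q u A B k M : ℝ) (hp : 0 ≤ p) (hpu : p ≤ u) (huq : u ≤ q) (hA : 0 ≤ A)
    (h1 : (p / 3) ^ 3 + A * (B - p) ^ 2 / 2 + k * (B - p) ≤ M)
    (h2 : (q / 3) ^ 3 + A * (B - q) ^ 2 / 2 + k * (B - q) ≤ M) :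
    (u / 3) ^ 3 + A * (B - u) ^ 2 / 2 + k * (B - u) ≤ M := by
  rcases eq_or_lt_of_le (hpu.trans huq) with h | h
  · have : u = p := by linarith
    rw [this]; exact h1
  · have key : (q - p) * ((u / 3) ^ 3 + A * (B - u) ^ 2 / 2 + k * (B - u)) =
      (q - u) * ((p / 3) ^ 3 + A * (B - p) ^ 2 / 2 + k * (B - p)) +
      (u - p) * ((q / 3) ^ 3 + A * (B - q) ^ 2 / 2 + k * (B - q))
      - (q - u) * (u - p) * (q - p) * ((p + u + q) / 27 + A / 2) := by ring
    have h3 : 0 ≤ (q - u) * (u - p) * (q - p) * ((p + u + q) / 27 + A / 2) := by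
      have := sub_nonneg.2 hpu
      have := sub_nonneg.2 huq
      have := sub_nonneg.2 h.le
      have : 0 ≤ (p + u + q) / 27 + A / 2 := by linarith
      positivity
    have h4 := mul_le_mul_of_nonneg_left h1 (sub_nonneg.2 huq)
    have h5 := mul_le_mul_of_nonneg_left h2 (sub_nonneg.2 hpu)
    have h6 : (q - p) * ((u / 3) ^ 3 + A * (B - u) ^ 2 / 2 + k * (B - u)) ≤ (q - p) * M := by
      rw [key]; linarith
    exact le_of_mul_le_mul_left h6 (by linarith)

theorem num_lo (a : ℝ) (h : a ≤ 0.172) : a * (1 - a) * (1 - 2 * a) ≤ 0.0935 := by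
  have h1 : 0 ≤ (a - 0.172) ^ 2 * (3 - 2 * a - 4 * 0.172) :=
    mul_nonneg (sq_nonneg _) (by linarith)
  nlinarith

/-- numeric core -/
theorem lag_num (a u L pr : ℝ) (ha0 : 0 ≤ a) (ha1 : a ≤ 1) (hu0 : 0 ≤ u) (hu3 : u ≤ 3 * a) (hus : u ≤ 1 - a)
    (hb1 : a ≤ 1 / 3 → 6 * L ≤ a * (1 - a) * (1 - 2 * a)) (hb1' : 6 * L ≤ (1 - a) ^ 3 / 4)
    (hb2 : L ≤ u / 18 * ((1 - a) ^ 2 - u ^ 2 / 3))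
    (hb3 : L ≤ pr + a * (1 - a - u) ^ 2 / 2) (hpr : pr ≤ (u / 3) ^ 3)
    (hL : 1 / 64 - 1 / 10 ^ 10 ≤ L) : 1 / 256 - 1 / 10 ^ 8 ≤ a * pr := by
  have hA3 : a ≤ 1 / 3 := by
    by_contra h
    push Not at h
    have : (1 - a) ^ 3 ≤ (2 / 3) ^ 3 := by gcongr <;> linarith
    norm_num at *
    linarith
  have hb := hb1 hA3
  have hlo : 0.172 ≤ a := by
    by_contra h
    push Not at h
    have h' := num_lo a h.le
    norm_num at *
    linarith
  have hhi : a ≤ 1 / 4 + 1 / 10 ^ 8 := by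
    by_contra h
    push Not at h
    have h' : a * (1 - a) * (1 - 2 * a) ≤ 6 / 64 - (a - 1 / 4) / 8 := by
      nlinarith [mul_nonneg (sq_nonneg (a - 1 / 4)) (sub_nonneg.2 hA3), sq_nonneg (a - 1 / 4)]
    norm_num at *
    linarith
  have hhi2 : a ≤ 0.2501 := by norm_num at *; linarith
  set us := 0.455 + 1.5 * (a - 0.173) with hus_def
  have hust : us ≤ 1 - a := by rw [hus_def]; linarith
  have hus0 : 0 ≤ us := by rw [hus_def]; linarith
  have hgt : us ≤ u := by
    by_contra h
    push Not at h
    have h1 : u / 18 * ((1 - a) ^ 2 - u ^ 2 / 3) ≤ us / 18 * ((1 - a) ^ 2 - us ^ 2 / 3) := by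
      have h2 : us / 18 * ((1 - a) ^ 2 - us ^ 2 / 3) - u / 18 * ((1 - a) ^ 2 - u ^ 2 / 3) =
        (us - u) / 18 * ((1 - a) ^ 2 - (us ^ 2 + us * u + u ^ 2) / 3) := by ring
      have h3 : us ^ 2 ≤ (1 - a) ^ 2 := by gcongr
      have h4 : u ^ 2 ≤ (1 - a) ^ 2 := by gcongr
      have h5 : us * u ≤ (1 - a) * (1 - a) := by gcongr
      have h6 : 0 ≤ (us - u) / 18 * ((1 - a) ^ 2 - (us ^ 2 + us * u + u ^ 2) / 3) := by
        apply mul_nonneg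
        · linarith
        · nlinarith
      linarith
    have h7 := num_b2 a hlo hhi2
    rw [← hus_def] at h7
    norm_num at *
    linarith
  have hE1 := num_b3 a hlo hhi2
  have key : (u / 3) ^ 3 + a * (1 - a - u) ^ 2 / 2 + 1 / 10000 * (1 - a - u) ≤ 1 / 64 := by
    rcases le_total a (1 / 4) with h | h
    · apply chord us (3 * a) u a (1 - a) (1 / 10000) (1 / 64) hus0 hgt hu3 ha0 hE1
      have h8 : (1 - 4 * a) * (-3 + 11 * (1 - 4 * a) - 9 * (1 - 4 * a) ^ 2 + 64 / 10000) ≤ 0 := by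
        apply mul_nonpos_of_nonneg_of_nonpos
        · linarith
        · nlinarith
      nlinarith
    · apply chord us (1 - a) u a (1 - a) (1 / 10000) (1 / 64) hus0 hgt hus ha0 hE1
      have : (1 - a) / 3 ≤ 1 / 4 := by linarith
      have h9 : ((1 - a) / 3) ^ 3 ≤ (1 / 4) ^ 3 := by gcongr
      norm_num at *
      linarith
  have hr : 1 - a - u ≤ 1 / 10 ^ 6 := by
    norm_num at *
    linarith
  have ha4 : 1 / 4 - 1 / (4 * 10 ^ 6) ≤ a := by norm_num at *; linarith
  have hr2 : (1 - a - u) ^ 2 ≤ (1 / 10 ^ 6) ^ 2 := by gcongr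
  have hpr1 : 1 / 64 - 1 / 10 ^ 9 ≤ pr := by
    have : a * (1 - a - u) ^ 2 ≤ 1 * (1 / 10 ^ 6) ^ 2 := by gcongr
    norm_num at *
    linarith
  have : (1 / 4 - 1 / (4 * 10 ^ 6)) * (1 / 64 - 1 / 10 ^ 9) ≤ a * pr := by
    apply mul_le_mul ha4 hpr1 (by norm_num) ha0
  norm_num at *
  linarith

theorem lagrangian (I : Finset ℕ) (y : ℕ → ℝ) (hy : ∀ i, 0 ≤ y i) (a : ℝ) (ha0 : 0 ≤ a) (ha1 : a ≤ 1)
    (hya : ∀ i ∈ I, y i ≤ a) (hs : ∑ i ∈ I, y i = 1 - a)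
    (G : Finset (Finset ℕ)) (hG : ∀ T ∈ G, T ⊆ I) (hG3 : ∀ T ∈ G, T.card = 3)
    (hlin : ∀ S ∈ G, ∀ T ∈ G, S ≠ T → (S ∩ T).card ≤ 1)
    (hL : 1 / 64 - 1 / 10 ^ 10 ≤ ∑ T ∈ G, ∏ i ∈ T, y i) :
    ∃ T ∈ G, 1 / 256 - 1 / 10 ^ 8 ≤ a * ∏ i ∈ T, y i := by
  have hGne : G.Nonempty := by
    by_contra h
    rw [Finset.not_nonempty_iff_eq_empty] at h
    rw [h] at hL
    norm_num at hL
  obtain ⟨T0, hT0, hmax⟩ := Finset.exists_max_image G (fun T => ∑ i ∈ T, y i) hGne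
  refine ⟨T0, hT0, ?_⟩
  have tri : ∀ T ∈ G, ∃ p q z, p ≠ q ∧ p ≠ z ∧ q ≠ z ∧ T = {p, q, z} := fun T hT =>
    Finset.card_eq_three.1 (hG3 T hT)
  have prod3 : ∀ p q z : ℕ, p ≠ q → p ≠ z → q ≠ z → ∏ i ∈ ({p, q, z} : Finset ℕ), y i = y p * y q * y z := by
    intro p q z h1 h2 h3
    rw [Finset.prod_insert (by simp [h1, h2]), Finset.prod_insert (by simp [h3]), Finset.prod_singleton]
    ring
  have sum3 : ∀ p q z : ℕ, p ≠ q → p ≠ z → q ≠ z → ∀ f : ℕ → ℝ, ∑ i ∈ ({p, q, z} : Finset ℕ), f i = f p + f q + f z := by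
    intro p q z h1 h2 h3 f
    rw [Finset.sum_insert (by simp [h1, h2]), Finset.sum_insert (by simp [h3]), Finset.sum_singleton]
    ring
  set u := ∑ i ∈ T0, y i with hu
  set L := ∑ T ∈ G, ∏ i ∈ T, y i with hLdef
  have h6 : 6 * L ≤ (1 - a) * (∑ i ∈ I, y i ^ 2) - ∑ i ∈ I, y i ^ 2 * y i := by
    have h := pairSum G I hG hlin (fun p => y p.1 ^ 2 * y p.2) (fun p => mul_nonneg (sq_nonneg _) (hy _))
    rw [sum_offDiag_mul I (fun i => y i ^ 2) y, hs] at h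
    have h2 : 6 * L ≤ ∑ T ∈ G, ∑ p ∈ T.offDiag, y p.1 ^ 2 * y p.2 := by
      rw [hLdef, Finset.mul_sum]
      apply Finset.sum_le_sum
      intro T hT
      obtain ⟨p, q, z, h1, h2, h3, rfl⟩ := tri T hT
      rw [offDiag3 h1 h2 h3, prod3 p q z h1 h2 h3]
      simp only
      nlinarith [mul_nonneg (hy p) (sq_nonneg (y q - y z)), mul_nonneg (hy q) (sq_nonneg (y p - y z)),
        mul_nonneg (hy z) (sq_nonneg (y p - y q))]
    linarith
  have h6' : 6 * L ≤ ∑ i ∈ I, y i * (y i * ((1 - a) - y i)) := by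
    refine h6.trans (le_of_eq ?_)
    rw [Finset.mul_sum, ← Finset.sum_sub_distrib]
    apply Finset.sum_congr rfl
    intro i _
    ring
  have hpr : ∏ i ∈ T0, y i ≤ (u / 3) ^ 3 := by
    obtain ⟨p, q, z, h1, h2, h3, h⟩ := tri T0 hT0
    rw [hu, h, prod3 p q z h1 h2 h3, sum3 p q z h1 h2 h3]
    nlinarith [mul_nonneg (hy p) (sq_nonneg (y q - y z)), mul_nonneg (hy q) (sq_nonneg (y p - y z)),
        mul_nonneg (hy z) (sq_nonneg (y p - y q)), mul_nonneg (add_nonneg (add_nonneg (hy p) (hy q)) (hy z)) (sq_nonneg (y q - y z)),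
        mul_nonneg (add_nonneg (add_nonneg (hy p) (hy q)) (hy z)) (sq_nonneg (y p - y z)),
        mul_nonneg (add_nonneg (add_nonneg (hy p) (hy q)) (hy z)) (sq_nonneg (y p - y q))]
  have hu0 : 0 ≤ u := Finset.sum_nonneg (fun i _ => hy i)
  have hu3 : u ≤ 3 * a := by
    have : u ≤ ∑ i ∈ T0, a := Finset.sum_le_sum (fun i hi => hya i (hG T0 hT0 hi))
    rw [Finset.sum_const, hG3 T0 hT0] at this
    simpa using this
  have hus : u ≤ 1 - a := by
    rw [← hs]
    exact Finset.sum_le_sum_of_subset_of_nonneg (hG T0 hT0) (fun i _ _ => hy i)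
  apply lag_num a u L _ ha0 ha1 hu0 hu3 hus ?_ ?_ ?_ ?_ hpr hL
  · intro ha
    refine h6'.trans ?_
    have : ∑ i ∈ I, y i * (y i * ((1 - a) - y i)) ≤ ∑ i ∈ I, y i * (a * ((1 - a) - a)) := by
      apply Finset.sum_le_sum
      intro i hi
      apply mul_le_mul_of_nonneg_left _ (hy i)
      nlinarith [hya i hi, hy i, mul_nonneg (sub_nonneg.2 (hya i hi)) (show (0:ℝ) ≤ 1 - a - a - y i by linarith [hya i hi])]
    refine this.trans (le_of_eq ?_)
    rw [← Finset.sum_mul, hs]; ring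
  · refine h6'.trans ?_
    have : ∑ i ∈ I, y i * (y i * ((1 - a) - y i)) ≤ ∑ i ∈ I, y i * ((1 - a) ^ 2 / 4) := by
      apply Finset.sum_le_sum
      intro i hi
      apply mul_le_mul_of_nonneg_left _ (hy i)
      nlinarith [sq_nonneg (1 - a - 2 * y i)]
    refine this.trans (le_of_eq ?_)
    rw [← Finset.sum_mul, hs]; ring
  · have h := pairSum G I hG hlin (fun p => y p.1 * y p.2) (fun p => mul_nonneg (hy _) (hy _))
    rw [sum_offDiag_mul I y y, hs] at h
    have h2 : L ≤ u / 18 * ∑ T ∈ G, ∑ p ∈ T.offDiag, y p.1 * y p.2 := by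
      rw [hLdef, Finset.mul_sum]
      apply Finset.sum_le_sum
      intro T hT
      have hm := hmax T hT
      obtain ⟨p, q, z, h1, h2, h3, rfl⟩ := tri T hT
      rw [offDiag3 h1 h2 h3, prod3 p q z h1 h2 h3]
      rw [sum3 p q z h1 h2 h3] at hm
      simp only
      have hh : (y p + y q + y z) / 18 * (y p * y q + y p * y z + y q * y p + y q * y z + y z * y p + y z * y q) ≤
        u / 18 * (y p * y q + y p * y z + y q * y p + y q * y z + y z * y p + y z * y q) := by
        apply mul_le_mul_of_nonneg_right
        · linarith
        · have := hy p; have := hy q; have := hy z; positivity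
      refine le_trans ?_ hh
      nlinarith [mul_nonneg (hy p) (sq_nonneg (y q - y z)), mul_nonneg (hy q) (sq_nonneg (y p - y z)),
        mul_nonneg (hy z) (sq_nonneg (y p - y q))]
    refine h2.trans ?_
    apply mul_le_mul_of_nonneg_left _ (by linarith)
    refine h.trans ?_
    have h3 : ∑ i ∈ T0, y i * y i ≤ ∑ i ∈ I, y i * y i :=
      Finset.sum_le_sum_of_subset_of_nonneg (hG T0 hT0) (fun i _ _ => mul_nonneg (hy i) (hy i))
    have h4 : u ^ 2 / 3 ≤ ∑ i ∈ T0, y i * y i := by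
      obtain ⟨p, q, z, h1, h2, h3, h⟩ := tri T0 hT0
      rw [hu, h, sum3 p q z h1 h2 h3, sum3 p q z h1 h2 h3]
      nlinarith [sq_nonneg (y p - y q), sq_nonneg (y p - y z), sq_nonneg (y q - y z)]
    nlinarith
  · have h2 : ∑ T ∈ G.erase T0, ∏ i ∈ T, y i ≤ a / 2 * ∑ p ∈ (I \ T0).offDiag, y p.1 * y p.2 := by
      have h3 : ∑ T ∈ G.erase T0, ∏ i ∈ T, y i ≤ ∑ T ∈ G.erase T0, ∑ p ∈ T.offDiag,
          (if p.1 ∈ I \ T0 ∧ p.2 ∈ I \ T0 then a / 2 * (y p.1 * y p.2) else 0) := by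
        apply Finset.sum_le_sum
        intro T hT
        have hTG := Finset.mem_of_mem_erase hT
        have hcard := hlin T hTG T0 hT0 (Finset.ne_of_mem_erase hT)
        have hTI := hG T hTG
        have h2c : 2 ≤ (T \ T0).card := by
          have := Finset.card_sdiff_add_card_inter T T0
          have := hG3 T hTG
          omega
        obtain ⟨p, hp, q, hq, hpq⟩ := Finset.one_lt_card.1 h2c
        have hp' := Finset.mem_sdiff.1 hp
        have hq' := Finset.mem_sdiff.1 hq
        have hprod : ∏ i ∈ T, y i ≤ a * (y p * y q) := by
          have hq2 : q ∈ T.erase p := Finset.mem_erase.2 ⟨hpq.symm, hq'.1⟩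
          rw [← Finset.mul_prod_erase T y hp'.1, ← Finset.mul_prod_erase (T.erase p) y hq2]
          have hc : ((T.erase p).erase q).card = 1 := by
            rw [Finset.card_erase_of_mem hq2, Finset.card_erase_of_mem hp'.1, hG3 T hTG]
          obtain ⟨z, hz⟩ := Finset.card_eq_one.1 hc
          have hzT : z ∈ T := by
            have : z ∈ (T.erase p).erase q := by rw [hz]; simp
            exact Finset.mem_of_mem_erase (Finset.mem_of_mem_erase this)
          rw [hz, Finset.prod_singleton]
          have := mul_le_mul_of_nonneg_left (hya z (hTI hzT)) (mul_nonneg (hy p) (hy q))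
          linarith
        have hsub : ({(p, q), (q, p)} : Finset (ℕ × ℕ)) ⊆ T.offDiag := by
          intro x hx
          simp only [Finset.mem_insert, Finset.mem_singleton] at hx
          rw [Finset.mem_offDiag]
          rcases hx with rfl | rfl
          · exact ⟨hp'.1, hq'.1, hpq⟩
          · exact ⟨hq'.1, hp'.1, hpq.symm⟩
        refine le_trans ?_ (Finset.sum_le_sum_of_subset_of_nonneg hsub ?_)
        · rw [Finset.sum_pair (by simp [hpq])]
          have e1 : p ∈ I \ T0 := Finset.mem_sdiff.2 ⟨hTI hp'.1, hp'.2⟩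
          have e2 : q ∈ I \ T0 := Finset.mem_sdiff.2 ⟨hTI hq'.1, hq'.2⟩
          rw [if_pos ⟨e1, e2⟩, if_pos ⟨e2, e1⟩]
          simp only
          linarith
        · intro x _ _
          have := hy x.1; have := hy x.2
          split_ifs <;> positivity
      refine h3.trans ((pairSum (G.erase T0) I (fun T hT => hG T (Finset.mem_of_mem_erase hT))
        (fun S hS T hT => hlin S (Finset.mem_of_mem_erase hS) T (Finset.mem_of_mem_erase hT)) _ ?_).trans ?_)
      · intro x
        have := hy x.1; have := hy x.2
        split_ifs <;> positivity
      · rw [← Finset.sum_filter, Finset.mul_sum]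
        apply Finset.sum_le_sum_of_subset_of_nonneg
        · intro x hx
          simp only [Finset.mem_filter, Finset.mem_offDiag] at hx ⊢
          exact ⟨hx.2.1, hx.2.2, hx.1.2.2⟩
        · intro x _ _
          have := hy x.1; have := hy x.2
          positivity
    rw [sum_offDiag_mul] at h2
    have h5 : ∑ i ∈ I \ T0, y i = 1 - a - u := by
      have := Finset.sum_sdiff (f := y) (hG T0 hT0)
      rw [hs] at this
      linarith
    rw [h5] at h2
    have h6 : 0 ≤ ∑ i ∈ I \ T0, y i * y i := Finset.sum_nonneg (fun i _ => mul_nonneg (hy i) (hy i))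
    have h7 : L = ∏ i ∈ T0, y i + ∑ T ∈ G.erase T0, ∏ i ∈ T, y i := by
      rw [hLdef, ← Finset.add_sum_erase G (fun T => ∏ i ∈ T, y i) hT0]
    nlinarith [mul_nonneg ha0 h6]

def Uni (E : Finset (Finset ℕ)) (X : Finset ℕ) : Prop := ∀ e ∈ E, e ⊆ X ∧ e.card = 4

def dg (E : Finset (Finset ℕ)) (v : ℕ) : ℕ := (E.filter (fun e => v ∈ e)).card

def T4free (E : Finset (Finset ℕ)) : Prop := ∀ (S : Finset ℕ) (x y : ℕ) (C : Finset ℕ),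
  insert x S ∈ E → insert y S ∈ E → C ∈ E → x ≠ y → x ∈ C → y ∈ C → Disjoint S C → False

def S4free (E : Finset (Finset ℕ)) : Prop := ∀ (S : Finset ℕ) (x y : ℕ) (C : Finset ℕ),
  insert x S ∈ E → insert y S ∈ E → C ∈ E → x ≠ y → x ∉ S → y ∉ S → x ∈ C → y ∈ C → False

theorem S4free.t4 {E : Finset (Finset ℕ)} (h : S4free E) : T4free E := by
  intro S x y C h1 h2 h3 h4 h5 h6 h7
  exact h S x y C h1 h2 h3 h4 (fun hx => Finset.disjoint_left.1 h7 hx h5)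
    (fun hx => Finset.disjoint_left.1 h7 hx h6) h5 h6

theorem T4free.mono {E F : Finset (Finset ℕ)} (h : T4free E) (hF : F ⊆ E) : T4free F := by
  intro S x y C h1 h2 h3
  exact h S x y C (hF h1) (hF h2) (hF h3)

theorem Uni.mono {E F : Finset (Finset ℕ)} {X : Finset ℕ} (h : Uni E X) (hF : F ⊆ E) : Uni F X :=
  fun e he => h e (hF he)

def FourPart (E : Finset (Finset ℕ)) (U : Finset ℕ) : Prop :=
  ∃ χ : ℕ → Fin 4, ∀ e ∈ E, e ⊆ U → Set.InjOn χ (e : Set ℕ)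

def d3 (E : Finset (Finset ℕ)) (A B C : Finset ℕ) (v : ℕ) : ℕ :=
  ((A ×ˢ B ×ˢ C).filter (fun p => ({v, p.1, p.2.1, p.2.2} : Finset ℕ) ∈ E)).card

def tup (E : Finset (Finset ℕ)) (A B C D : Finset ℕ) : ℕ :=
  ((A ×ˢ B ×ˢ C ×ˢ D).filter (fun p => ({p.1, p.2.1, p.2.2.1, p.2.2.2} : Finset ℕ) ∈ E)).card

theorem tup_eq_sum (E : Finset (Finset ℕ)) (A B C D : Finset ℕ) :
    tup E A B C D = ∑ a ∈ A, d3 E B C D a := by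
  unfold tup d3
  rw [Finset.card_filter, Finset.sum_product]
  apply Finset.sum_congr rfl
  intro a _
  rw [Finset.card_filter]

theorem tup_rot (E : Finset (Finset ℕ)) (A B C D : Finset ℕ) :
    tup E A B C D = tup E B C D A := by
  unfold tup
  refine Finset.card_bij' (fun p _ => (p.2.1, p.2.2.1, p.2.2.2, p.1)) (fun p _ => (p.2.2.2, p.1, p.2.1, p.2.2.1)) ?_ ?_ ?_ ?_
  · rintro ⟨a, b, c, d⟩ h
    simp only [Finset.mem_filter, Finset.mem_product] at h ⊢
    refine ⟨⟨h.1.2.1, h.1.2.2.1, h.1.2.2.2, h.1.1⟩, ?_⟩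
    have : ({b, c, d, a} : Finset ℕ) = {a, b, c, d} := by ext x; simp; tauto
    rw [this]; exact h.2
  · rintro ⟨b, c, d, a⟩ h
    simp only [Finset.mem_filter, Finset.mem_product] at h ⊢
    refine ⟨⟨h.1.2.2.2, h.1.1, h.1.2.1, h.1.2.2.1⟩, ?_⟩
    have : ({b, c, d, a} : Finset ℕ) = {a, b, c, d} := by ext x; simp; tauto
    rw [← this]; exact h.2
  · rintro ⟨a, b, c, d⟩ _; rfl
  · rintro ⟨a, b, c, d⟩ _; rfl

theorem d3_le (E : Finset (Finset ℕ)) (A B C : Finset ℕ) (v : ℕ) :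
    d3 E A B C v ≤ A.card * B.card * C.card := by
  unfold d3
  refine (Finset.card_filter_le _ _).trans ?_
  rw [Finset.card_product, Finset.card_product, mul_assoc]

theorem tup_le (E : Finset (Finset ℕ)) (A B C D : Finset ℕ) :
    tup E A B C D ≤ A.card * B.card * C.card * D.card := by
  unfold tup
  refine (Finset.card_filter_le _ _).trans ?_
  rw [Finset.card_product, Finset.card_product, Finset.card_product]
  apply le_of_eq; ring

theorem cnt_mem (A B C X : Finset ℕ) (hA : A ⊆ X) (hB : B ⊆ X) (hC : C ⊆ X) (x : ℕ) :
    ((A ×ˢ B ×ˢ C).filter (fun p => x = p.1 ∨ x = p.2.1 ∨ x = p.2.2)).card ≤ 3 * X.card ^ 2 := by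
  have hsub : (A ×ˢ B ×ˢ C).filter (fun p => x = p.1 ∨ x = p.2.1 ∨ x = p.2.2) ⊆
      (({x} : Finset ℕ) ×ˢ X ×ˢ X) ∪ ((X ×ˢ ({x} : Finset ℕ) ×ˢ X) ∪ (X ×ˢ X ×ˢ ({x} : Finset ℕ))) := by
    rintro ⟨a, b, c⟩ h
    simp only [Finset.mem_filter, Finset.mem_product] at h
    simp only [Finset.mem_union, Finset.mem_product, Finset.mem_singleton]
    obtain ⟨⟨h1, h2, h3⟩, h4⟩ := h
    have := hA h1; have := hB h2; have := hC h3
    rcases h4 with h | h | h <;> subst h <;> tauto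
  refine (Finset.card_le_card hsub).trans ?_
  refine (Finset.card_union_le _ _).trans ?_
  have := Finset.card_union_le (X ×ˢ ({x} : Finset ℕ) ×ˢ X) (X ×ˢ X ×ˢ ({x} : Finset ℕ))
  simp only [Finset.card_product, Finset.card_singleton] at *
  nlinarith

theorem key_claim {E : Finset (Finset ℕ)} {X : Finset ℕ} (hU : Uni E X) (hT : T4free E)
    {A B C : Finset ℕ} (hA : A ⊆ X) (hB : B ⊆ X) (hC : C ⊆ X) {v w : ℕ} (hvw : v ≠ w)
    (h : A.card * B.card * C.card + 6 * X.card ^ 2 < d3 E A B C v + d3 E A B C w) :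
    ∀ e ∈ E, v ∈ e → w ∈ e → False := by
  intro e he hv hw
  set F1 := (A ×ˢ B ×ˢ C).filter (fun p => ({v, p.1, p.2.1, p.2.2} : Finset ℕ) ∈ E) with hF1
  set F2 := (A ×ˢ B ×ˢ C).filter (fun p => ({w, p.1, p.2.1, p.2.2} : Finset ℕ) ∈ E) with hF2
  have h1 : (F1 ∪ F2).card + (F1 ∩ F2).card = F1.card + F2.card := Finset.card_union_add_card_inter _ _
  have h2 : (F1 ∪ F2).card ≤ A.card * B.card * C.card := by
    have : F1 ∪ F2 ⊆ A ×ˢ B ×ˢ C := Finset.union_subset (Finset.filter_subset _ _) (Finset.filter_subset _ _)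
    refine (Finset.card_le_card this).trans ?_
    rw [Finset.card_product, Finset.card_product, mul_assoc]
  have h3 : d3 E A B C v + d3 E A B C w = F1.card + F2.card := rfl
  have hcard : ((e.erase v).erase w).card = 2 := by
    rw [Finset.card_erase_of_mem (Finset.mem_erase.2 ⟨hvw.symm, hw⟩), Finset.card_erase_of_mem hv, (hU e he).2]
  obtain ⟨x, y, hxy, hxye⟩ := Finset.card_eq_two.1 hcard
  have hsub : F1 ∩ F2 ⊆ (A ×ˢ B ×ˢ C).filter (fun p => x = p.1 ∨ x = p.2.1 ∨ x = p.2.2) ∪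
      (A ×ˢ B ×ˢ C).filter (fun p => y = p.1 ∨ y = p.2.1 ∨ y = p.2.2) := by
    rintro ⟨b, c, d⟩ hp
    rw [Finset.mem_inter, hF1, hF2, Finset.mem_filter, Finset.mem_filter] at hp
    obtain ⟨⟨hp0, hp1⟩, _, hp2⟩ := hp
    simp only at hp1 hp2
    by_contra hcon
    rw [Finset.mem_union, Finset.mem_filter, Finset.mem_filter] at hcon
    have hcon2 : ¬ (x = b ∨ x = c ∨ x = d) ∧ ¬ (y = b ∨ y = c ∨ y = d) := by tauto
    have hvS : v ∉ ({b, c, d} : Finset ℕ) := by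
      intro hh
      have h4 := (hU _ hp1).2
      rw [Finset.insert_eq_of_mem hh] at h4
      have := Finset.card_le_three (a := b) (b := c) (c := d)
      omega
    have hwS : w ∉ ({b, c, d} : Finset ℕ) := by
      intro hh
      have h4 := (hU _ hp2).2
      rw [Finset.insert_eq_of_mem hh] at h4
      have := Finset.card_le_three (a := b) (b := c) (c := d)
      omega
    apply hT {b, c, d} v w e hp1 hp2 he hvw hv hw
    rw [Finset.disjoint_left]
    intro z hz hze
    have hzv : z ≠ v := fun hh => hvS (hh ▸ hz)
    have hzw : z ≠ w := fun hh => hwS (hh ▸ hz)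
    have hz2 : z ∈ (e.erase v).erase w := Finset.mem_erase.2 ⟨hzw, Finset.mem_erase.2 ⟨hzv, hze⟩⟩
    rw [hxye] at hz2
    simp only [Finset.mem_insert, Finset.mem_singleton] at hz hz2
    rcases hz2 with rfl | rfl
    · exact hcon2.1 hz
    · exact hcon2.2 hz
  have h4 := (Finset.card_le_card hsub).trans (Finset.card_union_le _ _)
  have h5 := cnt_mem A B C X hA hB hC x
  have h6 := cnt_mem A B C X hA hB hC y
  omega

theorem d3_le_dg {E : Finset (Finset ℕ)} {A B C : Finset ℕ} {v : ℕ} (hvA : v ∉ A) (hvB : v ∉ B) (hvC : v ∉ C)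
    (hAB : Disjoint A B) (hAC : Disjoint A C) (hBC : Disjoint B C) : d3 E A B C v ≤ dg E v := by
  unfold d3 dg
  apply Finset.card_le_card_of_injOn (fun p => ({v, p.1, p.2.1, p.2.2} : Finset ℕ))
  · intro p hp
    have := (Finset.mem_filter.1 hp).2
    simp [this]
  · rintro ⟨a, b, c⟩ hp0 ⟨a', b', c'⟩ hq0 heq
    have hp := (Finset.mem_filter.1 (Finset.mem_coe.1 hp0)).1
    have hq := (Finset.mem_filter.1 (Finset.mem_coe.1 hq0)).1
    clear hp0 hq0
    simp only [Finset.mem_product] at hp hq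
    simp only at heq
    rw [Finset.disjoint_left] at hAB hAC hBC
    have ha : a ∈ ({v, a', b', c'} : Finset ℕ) := by rw [← heq]; simp
    have hb : b ∈ ({v, a', b', c'} : Finset ℕ) := by rw [← heq]; simp
    have hc : c ∈ ({v, a', b', c'} : Finset ℕ) := by rw [← heq]; simp
    simp only [Finset.mem_insert, Finset.mem_singleton] at ha hb hc
    have e1 : a = a' := by
      rcases ha with h | h | h | h
      · subst h; exact absurd hp.1 hvA
      · exact h
      · subst h; exact absurd hq.2.1 (hAB hp.1)
      · subst h; exact absurd hq.2.2 (hAC hp.1)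
    have e2 : b = b' := by
      rcases hb with h | h | h | h
      · subst h; exact absurd hp.2.1 hvB
      · subst h; exact absurd hp.2.1 (hAB hq.1)
      · exact h
      · subst h; exact absurd hq.2.2 (hBC hp.2.1)
    have e3 : c = c' := by
      rcases hc with h | h | h | h
      · subst h; exact absurd hp.2.2 hvC
      · subst h; exact absurd hp.2.2 (hAC hq.1)
      · subst h; exact absurd hp.2.2 (hBC hq.2.1)
      · exact h
    rw [e1, e2, e3]

/-- edges through `v` meeting `Bd` in another vertex -/
theorem bad_edges {E : Finset (Finset ℕ)} {X : Finset ℕ} (hU : Uni E X) (Bd : Finset ℕ) (v : ℕ) :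
    (E.filter (fun e => v ∈ e ∧ ∃ w ∈ Bd, w ≠ v ∧ w ∈ e)).card ≤ Bd.card * X.card ^ 2 := by
  have hsub : E.filter (fun e => v ∈ e ∧ ∃ w ∈ Bd, w ≠ v ∧ w ∈ e) ⊆
      (Bd ×ˢ X ×ˢ X).image (fun p => ({v, p.1, p.2.1, p.2.2} : Finset ℕ)) := by
    intro e he
    obtain ⟨heE, hv, w, hw, hwv, hwe⟩ := Finset.mem_filter.1 he
    have hcard : ((e.erase v).erase w).card = 2 := by
      rw [Finset.card_erase_of_mem (Finset.mem_erase.2 ⟨hwv, hwe⟩), Finset.card_erase_of_mem hv, (hU e heE).2]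
    obtain ⟨x, y, hxy, hxye⟩ := Finset.card_eq_two.1 hcard
    have hee : e = {v, w, x, y} := by
      rw [← hxye, Finset.insert_erase (Finset.mem_erase.2 ⟨hwv, hwe⟩), Finset.insert_erase hv]
    rw [Finset.mem_image]
    refine ⟨(w, x, y), ?_, hee.symm⟩
    have hX := (hU e heE).1
    simp only [Finset.mem_product]
    refine ⟨hw, hX ?_, hX ?_⟩ <;> rw [hee] <;> simp
  refine (Finset.card_le_card hsub).trans (Finset.card_image_le.trans ?_)
  rw [Finset.card_product, Finset.card_product]
  apply le_of_eq; ring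

theorem amgm4 (x y z w : ℝ) (hx : 0 ≤ x) (hy : 0 ≤ y) (hz : 0 ≤ z) (hw : 0 ≤ w) :
    x * y * z * w ≤ ((x + y + z + w) / 4) ^ 4 := by
  have h1 : x * y ≤ ((x + y) / 2) ^ 2 := by nlinarith [sq_nonneg (x - y)]
  have h2 : z * w ≤ ((z + w) / 2) ^ 2 := by nlinarith [sq_nonneg (z - w)]
  have h3 : ((x + y) / 2) * ((z + w) / 2) ≤ ((x + y + z + w) / 4) ^ 2 := by
    nlinarith [sq_nonneg (x + y - z - w)]
  have h4 : x * y * (z * w) ≤ ((x + y) / 2) ^ 2 * ((z + w) / 2) ^ 2 :=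
    mul_le_mul h1 h2 (mul_nonneg hz hw) (sq_nonneg _)
  have h5 : (((x + y) / 2) * ((z + w) / 2)) ^ 2 ≤ (((x + y + z + w) / 4) ^ 2) ^ 2 := by
    apply pow_le_pow_left₀ _ h3
    positivity
  nlinarith

theorem amgm3 (x y z : ℝ) (hx : 0 ≤ x) (hy : 0 ≤ y) (hz : 0 ≤ z) :
    x * y * z ≤ ((x + y + z) / 3) ^ 3 := by
  nlinarith [mul_nonneg hx (sq_nonneg (y - z)), mul_nonneg hy (sq_nonneg (x - z)),
        mul_nonneg hz (sq_nonneg (x - y)), mul_nonneg (add_nonneg (add_nonneg hx hy) hz) (sq_nonneg (y - z)),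
        mul_nonneg (add_nonneg (add_nonneg hx hy) hz) (sq_nonneg (x - z)),
        mul_nonneg (add_nonneg (add_nonneg hx hy) hz) (sq_nonneg (x - y))]

theorem num_part (x y z w : ℝ) (hx : 0 ≤ x) (hy : 0 ≤ y) (hz : 0 ≤ z) (hw : 0 ≤ w)
    (hs : x + y + z + w ≤ 1) (h : 1 / 256 - 1 / 10 ^ 8 ≤ x * y * z * w) :
    0.2485 ≤ x ∧ x ≤ 0.2515 ∧ 1 - 1 / 10 ^ 6 ≤ x + y + z + w := by
  have h1 := amgm3 y z w hy hz hw
  have h2 : ((y + z + w) / 3) ^ 3 ≤ ((1 - x) / 3) ^ 3 := by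
    apply pow_le_pow_left₀ (by positivity); linarith
  have h3 : x * (y * z * w) ≤ x * ((1 - x) / 3) ^ 3 := mul_le_mul_of_nonneg_left (h1.trans h2) hx
  have h4 : (x - 1 / 4) ^ 2 * (1 / 8) ≤ 27 / 10 ^ 8 := by
    have h5 : 27 / 256 - x * (1 - x) ^ 3 = (x - 1 / 4) ^ 2 * (x ^ 2 - 5 / 2 * x + 27 / 16) := by ring
    have h6 : (x - 1 / 4) ^ 2 * (1 / 8) ≤ (x - 1 / 4) ^ 2 * (x ^ 2 - 5 / 2 * x + 27 / 16) := by
      apply mul_le_mul_of_nonneg_left _ (sq_nonneg _)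
      nlinarith [sq_nonneg (x - 5 / 4)]
    have h7 : x * ((1 - x) / 3) ^ 3 = x * (1 - x) ^ 3 / 27 := by ring
    have h8 : x * y * z * w = x * (y * z * w) := by ring
    norm_num at *
    linarith
  have h9 : |x - 1 / 4| ≤ 0.0015 := by
    apply abs_le_of_sq_le_sq _ (by norm_num)
    norm_num at *
    linarith
  rw [abs_le] at h9
  refine ⟨by linarith, by linarith, ?_⟩
  have h10 := amgm4 x y z w hx hy hz hw
  by_contra hc
  push Not at hc
  have : ((x + y + z + w) / 4) ^ 4 ≤ ((1 - 1 / 10 ^ 6) / 4) ^ 4 := by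
    apply pow_le_pow_left₀ (by positivity); linarith
  norm_num at *
  linarith

theorem cover {E : Finset (Finset ℕ)} {X : Finset ℕ} (hU : Uni E X) (g : Fin 4 → Finset ℕ)
    (hK : ∀ i, ∀ v ∈ g i, ∀ w ∈ g i, v ≠ w → ∀ e ∈ E, v ∈ e → w ∈ e → False)
    {e : Finset ℕ} (he : e ∈ E) {v : ℕ} (hv : v ∈ e) (hg : ∀ w ∈ e, w ≠ v → ∃ i, w ∈ g i) :
    ∃ i : Fin 4, ∃ a ∈ g (i + 1), ∃ b ∈ g (i + 2), ∃ c ∈ g (i + 3), e = {v, a, b, c} := by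
  have hg' : ∀ w : ℕ, ∃ i : Fin 4, w ∈ e → w ≠ v → w ∈ g i := by
    intro w
    by_cases h : w ∈ e ∧ w ≠ v
    · obtain ⟨i, hi⟩ := hg w h.1 h.2
      exact ⟨i, fun _ _ => hi⟩
    · exact ⟨0, fun h1 h2 => absurd ⟨h1, h2⟩ h⟩
  choose κ hκ using hg'
  have hinj : Set.InjOn κ ((e.erase v : Finset ℕ) : Set ℕ) := by
    intro x hx y hy hxy
    have hx' := Finset.mem_erase.1 (Finset.mem_coe.1 hx)
    have hy' := Finset.mem_erase.1 (Finset.mem_coe.1 hy)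
    by_contra hne
    have h1 := hκ x hx'.2 hx'.1
    have h2 := hκ y hy'.2 hy'.1
    rw [← hxy] at h2
    exact hK _ x h1 y h2 hne e he hx'.2 hy'.2
  have hc3 : (e.erase v).card = 3 := by rw [Finset.card_erase_of_mem hv, (hU e he).2]
  have hcard : ((e.erase v).image κ).card = 3 := by
    rw [Finset.card_image_of_injOn hinj, hc3]
  obtain ⟨i, hi⟩ : ∃ i, i ∉ (e.erase v).image κ := by
    by_contra hcon
    push Not at hcon
    have : (Finset.univ : Finset (Fin 4)) ⊆ (e.erase v).image κ := fun i _ => hcon i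
    have := Finset.card_le_card this
    rw [hcard] at this
    simp at this
  have himg : (e.erase v).image κ = Finset.univ.erase i := by
    apply Finset.eq_of_subset_of_card_le
    · intro j hj
      exact Finset.mem_erase.2 ⟨fun h => hi (h ▸ hj), Finset.mem_univ _⟩
    · rw [hcard, Finset.card_erase_of_mem (Finset.mem_univ _)]; simp
  have hget : ∀ j, j ≠ i → ∃ w ∈ e.erase v, κ w = j := by
    intro j hj
    have : j ∈ (e.erase v).image κ := by rw [himg]; simp [hj]
    exact Finset.mem_image.1 this
  obtain ⟨a, ha, hai⟩ := hget (i + 1) (by fin_cases i <;> decide)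
  obtain ⟨b, hb, hbi⟩ := hget (i + 2) (by fin_cases i <;> decide)
  obtain ⟨c, hc, hci⟩ := hget (i + 3) (by fin_cases i <;> decide)
  have ha' := Finset.mem_erase.1 ha
  have hb' := Finset.mem_erase.1 hb
  have hc' := Finset.mem_erase.1 hc
  have n1 : a ≠ b := by rintro rfl; rw [hai] at hbi; revert hbi; fin_cases i <;> decide
  have n2 : a ≠ c := by rintro rfl; rw [hai] at hci; revert hci; fin_cases i <;> decide
  have n3 : b ≠ c := by rintro rfl; rw [hbi] at hci; revert hci; fin_cases i <;> decide
  refine ⟨i, a, hai ▸ hκ a ha'.2 ha'.1, b, hbi ▸ hκ b hb'.2 hb'.1, c, hci ▸ hκ c hc'.2 hc'.1, ?_⟩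
  have : ({a, b, c} : Finset ℕ) = e.erase v := by
    apply Finset.eq_of_subset_of_card_le
    · intro x hx
      simp only [Finset.mem_insert, Finset.mem_singleton] at hx
      rcases hx with rfl | rfl | rfl <;> assumption
    · rw [hc3, Finset.card_eq_three.2 ⟨a, b, c, n1, n2, n3, rfl⟩]
  rw [this, Finset.insert_erase hv]

theorem fin4_cases : ∀ i j : Fin 4, j ≠ i → j = i + 1 ∨ j = i + 2 ∨ j = i + 3 := by decide

set_option maxHeartbeats 2000000 in
theorem ext_lemma {E : Finset (Finset ℕ)} {X : Finset ℕ} (hU : Uni E X) (hT : T4free E)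
    (hn : 10 ^ 6 ≤ X.card) (P : Fin 4 → Finset ℕ) (hP : ∀ i, P i ⊆ X)
    (hd : ∀ i j, i ≠ j → Disjoint (P i) (P j))
    (h : (1 / 256 - 1 / 10 ^ 8) * (X.card : ℝ) ^ 4 ≤ tup E (P 0) (P 1) (P 2) (P 3)) :
    (∀ v, (dg E v : ℝ) ≤ 0.02 * (X.card : ℝ) ^ 3) ∧
    (∃ χ : ℕ → Fin 4, ∀ e ∈ E, (∀ v ∈ e, (X.card : ℝ) ^ 3 / 100 ≤ dg E v) → Set.InjOn χ (e : Set ℕ)) ∧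
    ((X.filter (fun v => (dg E v : ℝ) < (X.card : ℝ) ^ 3 / 100)).card : ℝ) ≤ 0.0005 * X.card := by
  classical
  have hnR : (10 : ℝ) ^ 6 ≤ (X.card : ℝ) := by exact_mod_cast hn
  set n : ℝ := (X.card : ℝ) with hndef
  have hn0 : 0 < n := by norm_num at hnR; linarith
  set D : Fin 4 → ℕ → ℕ := fun i v => d3 E (P (i + 1)) (P (i + 2)) (P (i + 3)) v with hD
  set q : Fin 4 → ℝ := fun i => ((P (i + 1)).card : ℝ) * (P (i + 2)).card * (P (i + 3)).card with hq
  have hrot : ∀ i : Fin 4, tup E (P i) (P (i + 1)) (P (i + 2)) (P (i + 3)) = tup E (P 0) (P 1) (P 2) (P 3) := by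
    have r1 := tup_rot E (P 0) (P 1) (P 2) (P 3)
    have r2 := tup_rot E (P 1) (P 2) (P 3) (P 0)
    have r3 := tup_rot E (P 2) (P 3) (P 0) (P 1)
    intro i
    fin_cases i
    · rfl
    · exact r1.symm
    · exact (r1.trans r2).symm
    · exact (r1.trans (r2.trans r3)).symm
  have hsum : (P 0).card + (P 1).card + (P 2).card + (P 3).card ≤ X.card := by
    have h1 : (Finset.univ.biUnion P).card = ∑ i, (P i).card :=
      Finset.card_biUnion (fun i _ j _ hij => hd i j hij)
    have h2 : (Finset.univ.biUnion P).card ≤ X.card :=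
      Finset.card_le_card (Finset.biUnion_subset.2 (fun i _ => hP i))
    rw [h1, Fin.sum_univ_four] at h2
    exact h2
  have hsumi : ∀ i : Fin 4, ((P i).card : ℝ) + (P (i + 1)).card + (P (i + 2)).card + (P (i + 3)).card =
      ((P 0).card : ℝ) + (P 1).card + (P 2).card + (P 3).card := by
    intro i
    fin_cases i <;> simp <;> ring_nf
  have hsumR : ((P 0).card : ℝ) + (P 1).card + (P 2).card + (P 3).card ≤ n := by
    rw [hndef]; exact_mod_cast hsum
  have hTle : ∀ i, (tup E (P 0) (P 1) (P 2) (P 3) : ℝ) ≤ (P i).card * q i := by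
    intro i
    rw [← hrot i]
    have := tup_le E (P i) (P (i + 1)) (P (i + 2)) (P (i + 3))
    have h2 : (tup E (P i) (P (i + 1)) (P (i + 2)) (P (i + 3)) : ℝ) ≤
      (P i).card * (P (i + 1)).card * (P (i + 2)).card * (P (i + 3)).card := by exact_mod_cast this
    refine h2.trans (le_of_eq ?_)
    simp only [hq]; ring
  have hsz : ∀ i, 0.2485 * n ≤ (P i).card ∧ ((P i).card : ℝ) ≤ 0.2515 * n ∧
      (1 - 1 / 10 ^ 6) * n ≤ ((P 0).card : ℝ) + (P 1).card + (P 2).card + (P 3).card := by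
    intro i
    have h1 := num_part ((P i).card / n) ((P (i + 1)).card / n) ((P (i + 2)).card / n) ((P (i + 3)).card / n)
      (by positivity) (by positivity) (by positivity) (by positivity)
      (by rw [← add_div, ← add_div, ← add_div, hsumi i]; exact (div_le_one hn0).2 hsumR)
      (by
        have h2 := h.trans (hTle i)
        have h3 : ((P i).card / n) * ((P (i + 1)).card / n) * ((P (i + 2)).card / n) * ((P (i + 3)).card / n) =
          ((P i).card * q i) / n ^ 4 := by
          simp only [hq]; field_simp
        rw [h3, le_div_iff₀ (by positivity)]
        exact h2)
    rw [← add_div, ← add_div, ← add_div, hsumi i, le_div_iff₀ hn0, le_div_iff₀ hn0, div_le_iff₀ hn0] at h1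
    exact h1
  have hqlo : ∀ i, 0.0153 * n ^ 3 ≤ q i := by
    intro i
    have : (0.2485 * n) * (0.2485 * n) * (0.2485 * n) ≤ q i := by
      simp only [hq]
      gcongr
      · exact (hsz _).1
      · exact (hsz _).1
      · exact (hsz _).1
    have h0 : 0 ≤ n ^ 3 := by positivity
    nlinarith
  have hqhi : ∀ i, q i ≤ 0.01591 * n ^ 3 := by
    intro i
    have : q i ≤ (0.2515 * n) * (0.2515 * n) * (0.2515 * n) := by
      simp only [hq]
      gcongr
      · exact (hsz _).2.1
      · exact (hsz _).2.1
      · exact (hsz _).2.1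
    have h0 : 0 ≤ n ^ 3 := by positivity
    nlinarith
  have hDq : ∀ i v, (D i v : ℝ) ≤ q i := by
    intro i v
    have := d3_le E (P (i + 1)) (P (i + 2)) (P (i + 3)) v
    simp only [hD, hq]
    exact_mod_cast this
  have hn23 : n ^ 2 * 10 ^ 6 ≤ n ^ 3 := by
    have : n ^ 3 = n ^ 2 * n := by ring
    rw [this]
    apply mul_le_mul_of_nonneg_left hnR (by positivity)
  have hn3 : 0 < n ^ 3 := by positivity
  -- key claim in real form
  have hK : ∀ i v w, v ≠ w → q i + 0.00001 * n ^ 3 ≤ D i v + D i w → ∀ e ∈ E, v ∈ e → w ∈ e → False := by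
    intro i v w hvw hlt
    apply key_claim hU hT (hP (i + 1)) (hP (i + 2)) (hP (i + 3)) hvw
    have h1 : q i + 6 * n ^ 2 < D i v + D i w := by
      norm_num at hn23 hlt ⊢
      nlinarith
    simp only [hq, hD, hndef] at h1
    exact_mod_cast h1
  set bad : Fin 4 → Finset ℕ := fun i => (P i).filter (fun v => (D i v : ℝ) < q i - 0.0001 * n ^ 3) with hbad
  have hbadcard : ∀ i, ((bad i).card : ℝ) ≤ 0.0001 * n := by
    intro i
    have h1 : ∑ v ∈ P i, (q i - D i v) ≤ 1 / 10 ^ 8 * n ^ 4 := by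
      rw [Finset.sum_sub_distrib, Finset.sum_const, nsmul_eq_mul]
      have h2 : ∑ v ∈ P i, (D i v : ℝ) = tup E (P 0) (P 1) (P 2) (P 3) := by
        rw [← hrot i, tup_eq_sum]; push_cast; rfl
      rw [h2]
      have h3 : ((P i).card : ℝ) * q i ≤ n ^ 4 / 256 := by
        have h4 := amgm4 (P i).card (P (i + 1)).card (P (i + 2)).card (P (i + 3)).card
          (by positivity) (by positivity) (by positivity) (by positivity)
        rw [hsumi i] at h4
        have h5 : ((((P 0).card : ℝ) + (P 1).card + (P 2).card + (P 3).card) / 4) ^ 4 ≤ (n / 4) ^ 4 := by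
          gcongr
        calc ((P i).card : ℝ) * q i = (P i).card * (P (i + 1)).card * (P (i + 2)).card * (P (i + 3)).card := by
              simp only [hq]; ring
          _ ≤ (n / 4) ^ 4 := h4.trans h5
          _ = n ^ 4 / 256 := by ring
      linarith
    have h6 : ∑ v ∈ bad i, (0.0001 * n ^ 3) ≤ ∑ v ∈ P i, (q i - D i v) := by
      refine (Finset.sum_le_sum (g := fun v => q i - D i v) ?_).trans
        (Finset.sum_le_sum_of_subset_of_nonneg (Finset.filter_subset _ _) ?_)
      · intro v hv
        have := (Finset.mem_filter.1 hv).2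
        linarith
      · intro v _ _
        have := hDq i v
        linarith
    rw [Finset.sum_const, nsmul_eq_mul] at h6
    have h7 : ((bad i).card : ℝ) * (0.0001 * n ^ 3) ≤ (0.0001 * n) * (0.0001 * n ^ 3) := by
      refine (h6.trans h1).trans (le_of_eq ?_)
      ring
    exact le_of_mul_le_mul_right h7 (by positivity)
  set g : Fin 4 → Finset ℕ := fun i => P i \ bad i with hgdef
  have hgP : ∀ i, g i ⊆ P i := fun i => Finset.sdiff_subset
  have hgD : ∀ i, ∀ v ∈ g i, q i - 0.0001 * n ^ 3 ≤ D i v := by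
    intro i v hv
    obtain ⟨h1, h2⟩ := Finset.mem_sdiff.1 hv
    by_contra hc
    push Not at hc
    exact h2 (Finset.mem_filter.2 ⟨h1, hc⟩)
  set Bd : Finset ℕ := X \ Finset.univ.biUnion g with hBd
  have hBdcard : (Bd.card : ℝ) ≤ 0.0005 * n := by
    have h1 : (Finset.univ.biUnion g).card = ∑ i, (g i).card :=
      Finset.card_biUnion (fun i _ j _ hij => Finset.disjoint_of_subset_left (hgP i)
        (Finset.disjoint_of_subset_right (hgP j) (hd i j hij)))
    have h2 : Finset.univ.biUnion g ⊆ X := Finset.biUnion_subset.2 (fun i _ => (hgP i).trans (hP i))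
    have h3 : Bd.card + (Finset.univ.biUnion g).card = X.card := by
      rw [hBd]; exact Finset.card_sdiff_add_card_eq_card h2
    have h4 : ∀ i, ((P i).card : ℝ) ≤ (g i).card + 0.0001 * n := by
      intro i
      have h5 : (P i).card ≤ (g i).card + (bad i).card := by
        have := Finset.card_sdiff_add_card_eq_card (s := bad i) (t := P i) (Finset.filter_subset _ _)
        exact this.ge
      have h6 : ((P i).card : ℝ) ≤ (g i).card + (bad i).card := by exact_mod_cast h5
      linarith [hbadcard i]
    have h5 : (Bd.card : ℝ) + ((g 0).card + (g 1).card + (g 2).card + (g 3).card) = n := by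
      rw [h1, Fin.sum_univ_four] at h3
      rw [hndef]; exact_mod_cast h3
    have h6 := (hsz 0).2.2
    have := h4 0; have := h4 1; have := h4 2; have := h4 3
    norm_num at *
    linarith
  have hKg : ∀ i, ∀ v ∈ g i, ∀ w ∈ g i, v ≠ w → ∀ e ∈ E, v ∈ e → w ∈ e → False := by
    intro i v hv w hw hvw
    apply hK i v w hvw
    have h1 := hgD i v hv
    have h2 := hgD i w hw
    have h3 := hqlo i
    linarith
  have hBdE : ∀ v, ((E.filter (fun e => v ∈ e ∧ ∃ w ∈ Bd, w ≠ v ∧ w ∈ e)).card : ℝ) ≤ 0.0005 * n ^ 3 := by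
    intro v
    have h1 := bad_edges hU Bd v
    have h2 : ((E.filter (fun e => v ∈ e ∧ ∃ w ∈ Bd, w ≠ v ∧ w ∈ e)).card : ℝ) ≤ Bd.card * n ^ 2 := by
      rw [hndef]; exact_mod_cast h1
    refine h2.trans ?_
    calc (Bd.card : ℝ) * n ^ 2 ≤ 0.0005 * n * n ^ 2 := by gcongr
      _ = 0.0005 * n ^ 3 := by ring
  set img : Fin 4 → ℕ → Finset (Finset ℕ) := fun i v =>
    ((P (i + 1) ×ˢ P (i + 2) ×ˢ P (i + 3)).filter (fun p => ({v, p.1, p.2.1, p.2.2} : Finset ℕ) ∈ E)).image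
      (fun p => ({v, p.1, p.2.1, p.2.2} : Finset ℕ)) with himg
  have himgc : ∀ i v, (img i v).card ≤ D i v := fun i v => Finset.card_image_le
  have hcov : ∀ v, ∀ e ∈ E, v ∈ e → e ∉ E.filter (fun e => v ∈ e ∧ ∃ w ∈ Bd, w ≠ v ∧ w ∈ e) →
      ∃ i, e ∈ img i v ∧ ∀ j, j ≠ i → ∃ w ∈ g j, w ∈ e ∧ w ≠ v := by
    intro v e he hv hnot
    have hgood : ∀ w ∈ e, w ≠ v → ∃ i, w ∈ g i := by
      intro w hw hwv
      by_contra hc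
      push Not at hc
      apply hnot
      refine Finset.mem_filter.2 ⟨he, hv, w, ?_, hwv, hw⟩
      rw [hBd, Finset.mem_sdiff]
      refine ⟨(hU e he).1 hw, ?_⟩
      simp only [Finset.mem_biUnion, not_exists, not_and]
      intro i _; exact hc i
    obtain ⟨i, a, ha, b, hb, c, hc, hee⟩ := cover hU g hKg he hv hgood
    have hc4 := (hU e he).2
    have hne : v ∉ ({a, b, c} : Finset ℕ) := by
      intro hh
      rw [hee, Finset.insert_eq_of_mem hh] at hc4
      have := Finset.card_le_three (a := a) (b := b) (c := c)
      omega
    simp only [Finset.mem_insert, Finset.mem_singleton, not_or] at hne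
    refine ⟨i, ?_, ?_⟩
    · simp only [himg, Finset.mem_image]
      refine ⟨(a, b, c), Finset.mem_filter.2 ⟨?_, ?_⟩, hee.symm⟩
      · simp only [Finset.mem_product]
        exact ⟨hgP _ ha, hgP _ hb, hgP _ hc⟩
      · simp only; rw [← hee]; exact he
    · intro j hj
      have hj3 : j = i + 1 ∨ j = i + 2 ∨ j = i + 3 := by
        exact fin4_cases i j hj
      rcases hj3 with rfl | rfl | rfl
      · exact ⟨a, ha, by rw [hee]; simp, fun hh => hne.1 hh.symm⟩
      · exact ⟨b, hb, by rw [hee]; simp, fun hh => hne.2.1 hh.symm⟩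
      · exact ⟨c, hc, by rw [hee]; simp, fun hh => hne.2.2 hh.symm⟩
  have hmain : ∀ v, (∃ i, (dg E v : ℝ) ≤ D i v + 0.0005 * n ^ 3) ∨ (dg E v : ℝ) ≤ 0.0013 * n ^ 3 := by
    intro v
    by_cases hex : ∃ i, 0.0002 * n ^ 3 ≤ D i v
    · left
      obtain ⟨i, hi⟩ := hex
      refine ⟨i, ?_⟩
      have hsub : E.filter (fun e => v ∈ e) ⊆ E.filter (fun e => v ∈ e ∧ ∃ w ∈ Bd, w ≠ v ∧ w ∈ e) ∪ img i v := by
        intro e he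
        obtain ⟨he1, he2⟩ := Finset.mem_filter.1 he
        by_cases hb : e ∈ E.filter (fun e => v ∈ e ∧ ∃ w ∈ Bd, w ≠ v ∧ w ∈ e)
        · exact Finset.mem_union_left _ hb
        · apply Finset.mem_union_right
          obtain ⟨j, hj1, hj2⟩ := hcov v e he1 he2 hb
          by_cases hji : i = j
          · rw [hji]; exact hj1
          · exfalso
            obtain ⟨w, hw, hwe, hwv⟩ := hj2 i hji
            apply hK i v w (Ne.symm hwv) _ e he1 he2 hwe
            have := hgD i w hw
            linarith
      have h1 := (Finset.card_le_card hsub).trans (Finset.card_union_le _ _)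
      have h2 : (dg E v : ℝ) ≤ (E.filter (fun e => v ∈ e ∧ ∃ w ∈ Bd, w ≠ v ∧ w ∈ e)).card + D i v := by
        have := h1.trans (Nat.add_le_add_left (himgc i v) _)
        unfold dg
        exact_mod_cast this
      linarith [hBdE v]
    · right
      push Not at hex
      have hsub : E.filter (fun e => v ∈ e) ⊆ E.filter (fun e => v ∈ e ∧ ∃ w ∈ Bd, w ≠ v ∧ w ∈ e) ∪
          (Finset.univ.biUnion (fun i => img i v)) := by
        intro e he
        obtain ⟨he1, he2⟩ := Finset.mem_filter.1 he
        by_cases hb : e ∈ E.filter (fun e => v ∈ e ∧ ∃ w ∈ Bd, w ≠ v ∧ w ∈ e)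
        · exact Finset.mem_union_left _ hb
        · apply Finset.mem_union_right
          obtain ⟨j, hj1, hj2⟩ := hcov v e he1 he2 hb
          exact Finset.mem_biUnion.2 ⟨j, Finset.mem_univ _, hj1⟩
      have h1 := (Finset.card_le_card hsub).trans (Finset.card_union_le _ _)
      have h3 : (Finset.univ.biUnion (fun i => img i v)).card ≤ D 0 v + D 1 v + D 2 v + D 3 v := by
        refine Finset.card_biUnion_le.trans ?_
        rw [Fin.sum_univ_four]
        have := himgc 0 v; have := himgc 1 v; have := himgc 2 v; have := himgc 3 v
        omega
      have h2 : (dg E v : ℝ) ≤ (E.filter (fun e => v ∈ e ∧ ∃ w ∈ Bd, w ≠ v ∧ w ∈ e)).card +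
          (D 0 v + D 1 v + D 2 v + D 3 v) := by
        have := h1.trans (Nat.add_le_add_left h3 _)
        unfold dg
        exact_mod_cast this
      have := hex 0; have := hex 1; have := hex 2; have := hex 3
      linarith [hBdE v]
  refine ⟨?_, ?_, ?_⟩
  · intro v
    rcases hmain v with ⟨i, hi⟩ | hi
    · have := hDq i v
      have := hqhi i
      linarith
    · linarith
  · have hex : ∀ v, ∃ i, n ^ 3 / 100 ≤ (dg E v : ℝ) → 0.0095 * n ^ 3 ≤ D i v := by
      intro v
      rcases hmain v with ⟨i, hi⟩ | hi
      · exact ⟨i, fun hh => by linarith⟩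
      · exact ⟨0, fun hh => by exfalso; linarith⟩
    choose χ hχ using hex
    refine ⟨χ, ?_⟩
    intro e he hdeg v hv w hw hvw
    by_contra hne
    have h1 := hχ v (hdeg v hv)
    have h2 := hχ w (hdeg w hw)
    rw [← hvw] at h2
    apply hK (χ v) v w hne _ e he hv hw
    have := hqhi (χ v)
    linarith
  · have hsub : X.filter (fun v => (dg E v : ℝ) < n ^ 3 / 100) ⊆ Bd := by
      intro v hv
      obtain ⟨hvX, hlt⟩ := Finset.mem_filter.1 hv
      rw [hBd, Finset.mem_sdiff]
      refine ⟨hvX, ?_⟩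
      intro hmem
      obtain ⟨i, _, hi⟩ := Finset.mem_biUnion.1 hmem
      have h1 := hgD i v hi
      have h2 := hqlo i
      have hvP := hgP i hi
      have hnot : ∀ j, i ≠ j → v ∉ P j := fun j hj hh => Finset.disjoint_left.1 (hd i j hj) hvP hh
      have h3 : D i v ≤ dg E v := d3_le_dg (hnot _ (by fin_cases i <;> decide)) (hnot _ (by fin_cases i <;> decide))
        (hnot _ (by fin_cases i <;> decide)) (hd _ _ (by fin_cases i <;> decide)) (hd _ _ (by fin_cases i <;> decide))
        (hd _ _ (by fin_cases i <;> decide))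
      have h4 : (D i v : ℝ) ≤ dg E v := by exact_mod_cast h3
      linarith
    have : ((X.filter (fun v => (dg E v : ℝ) < n ^ 3 / 100)).card : ℝ) ≤ Bd.card := by
      exact_mod_cast Finset.card_le_card hsub
    linarith

theorem sum_dg {E : Finset (Finset ℕ)} {X : Finset ℕ} (hU : Uni E X) : ∑ v ∈ X, dg E v = 4 * E.card := by
  unfold dg
  simp_rw [Finset.card_filter]
  rw [Finset.sum_comm]
  rw [Finset.sum_congr rfl (g := fun _ => 4)]
  · simp [mul_comm]
  · intro e he
    rw [← Finset.card_filter]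
    have : X.filter (fun i => i ∈ e) = e := by
      ext x; simp only [Finset.mem_filter]
      exact ⟨fun h => h.2, fun h => ⟨(hU e he).1 h, h⟩⟩
    rw [this, (hU e he).2]

def codg (E : Finset (Finset ℕ)) (u w : ℕ) : ℕ := (E.filter (fun e => u ∈ e ∧ w ∈ e)).card

theorem codg_le {E : Finset (Finset ℕ)} {X : Finset ℕ} (hU : Uni E X) {u w : ℕ} (h : u ≠ w) :
    codg E u w ≤ X.card ^ 2 := by
  have := bad_edges hU {w} u
  rw [Finset.card_singleton, one_mul] at this
  refine le_trans (Finset.card_le_card ?_) this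
  intro e he
  obtain ⟨h1, h2, h3⟩ := Finset.mem_filter.1 he
  exact Finset.mem_filter.2 ⟨h1, h2, w, Finset.mem_singleton_self w, h.symm, h3⟩

theorem dg_le {E : Finset (Finset ℕ)} {X : Finset ℕ} (hU : Uni E X) (u : ℕ) : dg E u ≤ X.card ^ 3 := by
  have := bad_edges hU X u
  have h2 : X.card ^ 3 = X.card * X.card ^ 2 := by ring
  rw [h2]
  refine le_trans (Finset.card_le_card ?_) this
  intro e he
  obtain ⟨h1, h2⟩ := Finset.mem_filter.1 he
  refine Finset.mem_filter.2 ⟨h1, h2, ?_⟩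
  have h4 := (hU e h1).2
  obtain ⟨w, hw, hwu⟩ := Finset.exists_mem_ne (by omega : 1 < e.card) u
  exact ⟨w, (hU e h1).1 hw, hwu, hw⟩

theorem partition_get {χ : ℕ → Fin 4} {e : Finset ℕ} (hc : e.card = 4) (h : Set.InjOn χ (e : Set ℕ)) :
    ∃ a ∈ e, ∃ b ∈ e, ∃ c ∈ e, ∃ d ∈ e, χ a = 0 ∧ χ b = 1 ∧ χ c = 2 ∧ χ d = 3 ∧ e = {a, b, c, d} := by
  have himg : e.image χ = Finset.univ := by
    apply Finset.eq_univ_of_card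
    rw [Finset.card_image_of_injOn h, hc]; simp
  have hget : ∀ i, ∃ w ∈ e, χ w = i := fun i => Finset.mem_image.1 (by rw [himg]; simp)
  obtain ⟨a, ha, ha'⟩ := hget 0
  obtain ⟨b, hb, hb'⟩ := hget 1
  obtain ⟨c, hc1, hc'⟩ := hget 2
  obtain ⟨d, hd, hd'⟩ := hget 3
  refine ⟨a, ha, b, hb, c, hc1, d, hd, ha', hb', hc', hd', ?_⟩
  symm
  apply Finset.eq_of_subset_of_card_le
  · intro x hx
    simp only [Finset.mem_insert, Finset.mem_singleton] at hx
    rcases hx with rfl | rfl | rfl | rfl <;> assumption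
  · have n1 : a ≠ b := by rintro rfl; rw [ha'] at hb'; revert hb'; decide
    have n2 : a ≠ c := by rintro rfl; rw [ha'] at hc'; revert hc'; decide
    have n3 : a ≠ d := by rintro rfl; rw [ha'] at hd'; revert hd'; decide
    have n4 : b ≠ c := by rintro rfl; rw [hb'] at hc'; revert hc'; decide
    have n5 : b ≠ d := by rintro rfl; rw [hb'] at hd'; revert hd'; decide
    have n6 : c ≠ d := by rintro rfl; rw [hc'] at hd'; revert hd'; decide
    rw [hc]
    have : ({a, b, c, d} : Finset ℕ).card = 4 := by
      rw [Finset.card_insert_of_notMem (by simp [n1, n2, n3]), Finset.card_insert_of_notMem (by simp [n4, n5]),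
        Finset.card_pair n6]
    omega

theorem part_le_tup {E : Finset (Finset ℕ)} {X : Finset ℕ} (hU : Uni E X) (U : Finset ℕ) (χ : ℕ → Fin 4)
    (h : ∀ e ∈ E, e ⊆ U → Set.InjOn χ (e : Set ℕ)) :
    (E.filter (fun e => e ⊆ U)).card ≤ tup E (U.filter (fun v => χ v = 0)) (U.filter (fun v => χ v = 1))
      (U.filter (fun v => χ v = 2)) (U.filter (fun v => χ v = 3)) := by
  unfold tup
  refine (Finset.card_le_card ?_).trans (Finset.card_image_le (f := fun p : ℕ × ℕ × ℕ × ℕ =>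
    ({p.1, p.2.1, p.2.2.1, p.2.2.2} : Finset ℕ)))
  intro e he
  obtain ⟨he1, heU⟩ := Finset.mem_filter.1 he
  obtain ⟨a, ha, b, hb, c, hc, d, hd, h0, h1, h2, h3, hee⟩ := partition_get (hU e he1).2 (h e he1 heU)
  rw [Finset.mem_image]
  refine ⟨(a, b, c, d), Finset.mem_filter.2 ⟨?_, ?_⟩, hee.symm⟩
  · simp only [Finset.mem_product, Finset.mem_filter]
    exact ⟨⟨heU ha, h0⟩, ⟨heU hb, h1⟩, ⟨heU hc, h2⟩, ⟨heU hd, h3⟩⟩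
  · simp only; rw [← hee]; exact he1

theorem part_sum (U : Finset ℕ) (χ : ℕ → Fin 4) :
    (U.filter (fun v => χ v = 0)).card + (U.filter (fun v => χ v = 1)).card +
      (U.filter (fun v => χ v = 2)).card + (U.filter (fun v => χ v = 3)).card = U.card := by
  have := Finset.card_eq_sum_card_fiberwise (f := χ) (s := U) (t := Finset.univ) (fun _ _ => Finset.mem_coe.2 (Finset.mem_univ _))
  rw [Fin.sum_univ_four] at this
  exact this.symm

theorem part_card_le {E : Finset (Finset ℕ)} {X : Finset ℕ} (hU : Uni E X) (U : Finset ℕ) (χ : ℕ → Fin 4)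
    (h : ∀ e ∈ E, e ⊆ U → Set.InjOn χ (e : Set ℕ)) :
    ((E.filter (fun e => e ⊆ U)).card : ℝ) ≤ ((U.card : ℝ) / 4) ^ 4 := by
  have h1 := (part_le_tup hU U χ h).trans (tup_le _ _ _ _ _)
  have h2 := amgm4 (U.filter (fun v => χ v = 0)).card (U.filter (fun v => χ v = 1)).card
      (U.filter (fun v => χ v = 2)).card (U.filter (fun v => χ v = 3)).card
      (by positivity) (by positivity) (by positivity) (by positivity)
  have h3 : ((E.filter (fun e => e ⊆ U)).card : ℝ) ≤ (U.filter (fun v => χ v = 0)).card * (U.filter (fun v => χ v = 1)).card *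
      (U.filter (fun v => χ v = 2)).card * (U.filter (fun v => χ v = 3)).card := by exact_mod_cast h1
  have h4 : ((U.filter (fun v => χ v = 0)).card : ℝ) + (U.filter (fun v => χ v = 1)).card +
      (U.filter (fun v => χ v = 2)).card + (U.filter (fun v => χ v = 3)).card = U.card := by
    exact_mod_cast part_sum U χ
  rw [h4] at h2
  exact h3.trans h2

/-- removing vertices -/
theorem card_remove {E : Finset (Finset ℕ)} {X : Finset ℕ} (hU : Uni E X) (Z : Finset ℕ) :
    E.card ≤ (E.filter (fun e => e ⊆ X \ Z)).card + ∑ v ∈ Z, dg E v := by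
  have hsub : E ⊆ E.filter (fun e => e ⊆ X \ Z) ∪ Z.biUnion (fun v => E.filter (fun e => v ∈ e)) := by
    intro e he
    by_cases h : e ⊆ X \ Z
    · exact Finset.mem_union_left _ (Finset.mem_filter.2 ⟨he, h⟩)
    · apply Finset.mem_union_right
      rw [Finset.not_subset] at h
      obtain ⟨v, hv, hv2⟩ := h
      rw [Finset.mem_sdiff] at hv2
      have hvZ : v ∈ Z := by
        by_contra hc
        exact hv2 ⟨(hU e he).1 hv, hc⟩
      exact Finset.mem_biUnion.2 ⟨v, hvZ, Finset.mem_filter.2 ⟨he, hv⟩⟩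
  refine (Finset.card_le_card hsub).trans ((Finset.card_union_le _ _).trans ?_)
  exact Nat.add_le_add_left Finset.card_biUnion_le _

noncomputable def lowZ (E : Finset (Finset ℕ)) (X : Finset ℕ) : Finset ℕ :=
  X.filter (fun v => (dg E v : ℝ) < (X.card : ℝ) ^ 3 / 100)

def Good4 (E : Finset (Finset ℕ)) (X : Finset ℕ) : Prop :=
  FourPart E (X \ lowZ E X) ∧ ((lowZ E X).card : ℝ) ≤ X.card / 20

theorem good4_of_tup {E : Finset (Finset ℕ)} {X : Finset ℕ} (hU : Uni E X) (hT : T4free E)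
    (hn : 10 ^ 6 ≤ X.card) (P : Fin 4 → Finset ℕ) (hP : ∀ i, P i ⊆ X)
    (hd : ∀ i j, i ≠ j → Disjoint (P i) (P j))
    (h : (1 / 256 - 1 / 10 ^ 8) * (X.card : ℝ) ^ 4 ≤ tup E (P 0) (P 1) (P 2) (P 3)) : Good4 E X := by
  obtain ⟨_, ⟨χ, hχ⟩, h3⟩ := ext_lemma hU hT hn P hP hd h
  refine ⟨⟨χ, ?_⟩, ?_⟩
  · intro e he hsub
    apply hχ e he
    intro v hv
    have := Finset.mem_sdiff.1 (hsub hv)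
    by_contra hc
    push Not at hc
    exact this.2 (Finset.mem_filter.2 ⟨this.1, hc⟩)
  · have : (0:ℝ) ≤ X.card := by positivity
    unfold lowZ
    linarith

theorem boot {E : Finset (Finset ℕ)} {X : Finset ℕ} (hU : Uni E X) (hn : 10 ^ 11 ≤ X.card)
    (hE : (1 / 256 - 1 / 10 ^ 11) * (X.card : ℝ) ^ 4 ≤ E.card) (hG : Good4 E X) (u : ℕ) :
    ∃ P : Fin 4 → Finset ℕ, (∀ i, P i ⊆ X) ∧ (∀ i, u ∉ P i) ∧ (∀ i j, i ≠ j → Disjoint (P i) (P j)) ∧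
      (1 / 256 - 1 / 10 ^ 9) * (X.card : ℝ) ^ 4 ≤ tup E (P 0) (P 1) (P 2) (P 3) := by
  obtain ⟨⟨χ, hχ⟩, hz⟩ := hG
  set Z := lowZ E X with hZ
  have hZX : Z ⊆ X := Finset.filter_subset _ _
  have hnR : (10 : ℝ) ^ 11 ≤ (X.card : ℝ) := by exact_mod_cast hn
  set n : ℝ := (X.card : ℝ) with hndef
  have hn0 : 0 < n := by norm_num at hnR; linarith
  set z : ℝ := (Z.card : ℝ) with hzdef
  have hz0 : 0 ≤ z := by positivity
  have hsumZ : ((∑ v ∈ Z, dg E v : ℕ) : ℝ) ≤ z * (n ^ 3 / 100) := by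
    push_cast
    rw [hzdef, ← nsmul_eq_mul, ← Finset.sum_const]
    apply Finset.sum_le_sum
    intro v hv
    exact (Finset.mem_filter.1 hv).2.le
  have hcardU : ((X \ Z).card : ℝ) = n - z := by
    have := Finset.card_sdiff_add_card_eq_card hZX
    have h2 : ((X \ Z).card : ℝ) + z = n := by rw [hzdef, hndef]; exact_mod_cast this
    linarith
  have h1 := part_card_le hU (X \ Z) χ hχ
  rw [hcardU] at h1
  have h2 : (E.card : ℝ) ≤ (E.filter (fun e => e ⊆ X \ Z)).card + ((∑ v ∈ Z, dg E v : ℕ) : ℝ) := by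
    exact_mod_cast card_remove hU Z
  have hzn : z ≤ 1 / 10 ^ 8 * n := by
    have h3 : ((n - z) / 4) ^ 4 ≤ n ^ 4 / 256 - z * n ^ 3 * (3.7 / 256) := by
      have h4 : (n - z) ^ 4 ≤ n ^ 4 - 3.7 * z * n ^ 3 := by
        have h5 : (n - z) ^ 4 = n ^ 4 - 4 * n ^ 3 * z + 6 * n ^ 2 * z ^ 2 - 4 * n * z ^ 3 + z ^ 4 := by ring
        have h6 : n ^ 2 * z ^ 2 ≤ n ^ 2 * (z * (n / 20)) := by
          apply mul_le_mul_of_nonneg_left _ (by positivity)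
          nlinarith
        have h7 : z ^ 4 ≤ 4 * n * z ^ 3 := by
          have : z ^ 4 = z * z ^ 3 := by ring
          rw [this]
          apply mul_le_mul_of_nonneg_right _ (by positivity)
          linarith
        nlinarith
      have : ((n - z) / 4) ^ 4 = (n - z) ^ 4 / 256 := by ring
      rw [this]; linarith
    have h8 : z * n ^ 3 * 0.004 ≤ 1 / 10 ^ 11 * n ^ 4 := by nlinarith [mul_nonneg hz0 (pow_nonneg hn0.le 3)]
    have h9 : n ^ 4 = n * n ^ 3 := by ring
    rw [h9] at h8
    have h10 : (z * 0.004) * n ^ 3 ≤ (1 / 10 ^ 11 * n) * n ^ 3 := by linarith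
    have h11 := le_of_mul_le_mul_right h10 (by positivity)
    norm_num at *
    linarith
  set U := (X \ Z).erase u with hUdef
  have hUX : U ⊆ X := (Finset.erase_subset _ _).trans Finset.sdiff_subset
  have h3 : (E.filter (fun e => e ⊆ X \ Z)).card ≤ (E.filter (fun e => e ⊆ U)).card + dg E u := by
    have hsub : E.filter (fun e => e ⊆ X \ Z) ⊆ E.filter (fun e => e ⊆ U) ∪ E.filter (fun e => u ∈ e) := by
      intro e he
      obtain ⟨he1, he2⟩ := Finset.mem_filter.1 he
      by_cases hu : u ∈ e
      · exact Finset.mem_union_right _ (Finset.mem_filter.2 ⟨he1, hu⟩)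
      · apply Finset.mem_union_left
        refine Finset.mem_filter.2 ⟨he1, fun x hx => Finset.mem_erase.2 ⟨?_, he2 hx⟩⟩
        rintro rfl; exact hu hx
    exact (Finset.card_le_card hsub).trans (Finset.card_union_le _ _)
  have h4 := part_le_tup hU U χ (fun e he hs => hχ e he (hs.trans (Finset.erase_subset _ _)))
  refine ⟨fun i => U.filter (fun v => χ v = i), fun i => (Finset.filter_subset _ _).trans hUX, ?_, ?_, ?_⟩
  · intro i hi
    exact (Finset.mem_erase.1 (Finset.mem_filter.1 hi).1).1 rfl
  · intro i j hij
    rw [Finset.disjoint_left]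
    intro x hx hy
    exact hij ((Finset.mem_filter.1 hx).2.symm.trans (Finset.mem_filter.1 hy).2)
  · have h5 : ((E.filter (fun e => e ⊆ X \ Z)).card : ℝ) ≤ tup E (U.filter (fun v => χ v = 0)) (U.filter (fun v => χ v = 1))
      (U.filter (fun v => χ v = 2)) (U.filter (fun v => χ v = 3)) + n ^ 3 := by
      have := h3.trans (Nat.add_le_add h4 (dg_le hU u))
      rw [hndef]; exact_mod_cast this
    have h6 : n ^ 3 ≤ 1 / 10 ^ 11 * n ^ 4 := by
      have : n ^ 4 = n ^ 3 * n := by ring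
      rw [this]
      have h7 := mul_le_mul_of_nonneg_left hnR (pow_nonneg hn0.le 3)
      norm_num at *
      linarith
    have h7 : z * (n ^ 3 / 100) ≤ 1 / 10 ^ 10 * n ^ 4 := by
      calc z * (n ^ 3 / 100) ≤ (1 / 10 ^ 8 * n) * (n ^ 3 / 100) := by gcongr
        _ = 1 / 10 ^ 10 * n ^ 4 := by ring
    have hn4 : 0 < n ^ 4 := by positivity
    norm_num at *
    linarith

def cl (E : Finset (Finset ℕ)) (u w : ℕ) : Finset (Finset ℕ) :=
  E.filter (fun e => u ∉ e) ∪ (E.filter (fun e => w ∈ e ∧ u ∉ e)).image (fun e => insert u (e.erase w))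

theorem mem_cl {E : Finset (Finset ℕ)} {u w : ℕ} (huw : u ≠ w) {e : Finset ℕ} :
    e ∈ cl E u w ↔ (u ∉ e ∧ e ∈ E) ∨ (u ∈ e ∧ w ∉ e ∧ insert w (e.erase u) ∈ E) := by
  unfold cl
  rw [Finset.mem_union, Finset.mem_filter, Finset.mem_image]
  constructor
  · rintro (⟨h1, h2⟩ | ⟨f, hf, rfl⟩)
    · exact Or.inl ⟨h2, h1⟩
    · right
      obtain ⟨hf1, hf2, hf3⟩ := Finset.mem_filter.1 hf
      refine ⟨Finset.mem_insert_self _ _, ?_, ?_⟩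
      · simp [huw.symm]
      · have : (insert u (f.erase w)).erase u = f.erase w :=
          Finset.erase_insert (fun h => hf3 (Finset.mem_of_mem_erase h))
        rw [this, Finset.insert_erase hf2]; exact hf1
  · rintro (⟨h1, h2⟩ | ⟨h1, h2, h3⟩)
    · exact Or.inl ⟨h2, h1⟩
    · right
      refine ⟨insert w (e.erase u), Finset.mem_filter.2 ⟨h3, Finset.mem_insert_self _ _, ?_⟩, ?_⟩
      · simp [huw]
      · have : (insert w (e.erase u)).erase w = e.erase u :=
          Finset.erase_insert (fun h => h2 (Finset.mem_of_mem_erase h))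
        rw [this, Finset.insert_erase h1]

theorem cl_mem_off {E : Finset (Finset ℕ)} {u w : ℕ} (huw : u ≠ w) {e : Finset ℕ} (he : u ∉ e) :
    e ∈ cl E u w ↔ e ∈ E := by
  rw [mem_cl huw]; tauto

theorem cl_uni {E : Finset (Finset ℕ)} {X : Finset ℕ} (hU : Uni E X) {u w : ℕ} (huw : u ≠ w) (hu : u ∈ X) :
    Uni (cl E u w) X := by
  intro e he
  rw [mem_cl huw] at he
  rcases he with ⟨_, h⟩ | ⟨h1, h2, h3⟩
  · exact hU e h
  · obtain ⟨h4, h5⟩ := hU _ h3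
    constructor
    · intro x hx
      by_cases hxu : x = u
      · rw [hxu]; exact hu
      · exact h4 (Finset.mem_insert_of_mem (Finset.mem_erase.2 ⟨hxu, hx⟩))
    · rw [Finset.card_insert_of_notMem (fun h => h2 (Finset.mem_of_mem_erase h)), Finset.card_erase_of_mem h1] at h5
      have := Finset.card_pos.2 ⟨u, h1⟩
      omega

theorem cl_card {E : Finset (Finset ℕ)} {u w : ℕ} (huw : u ≠ w) :
    (cl E u w).card + dg E u + codg E u w = E.card + dg E w := by
  have hdis : Disjoint (E.filter (fun e => u ∉ e))
      ((E.filter (fun e => w ∈ e ∧ u ∉ e)).image (fun e => insert u (e.erase w))) := by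
    rw [Finset.disjoint_left]
    intro e h1 h2
    obtain ⟨f, _, rfl⟩ := Finset.mem_image.1 h2
    exact (Finset.mem_filter.1 h1).2 (Finset.mem_insert_self _ _)
  have hinj : Set.InjOn (fun e : Finset ℕ => insert u (e.erase w)) (E.filter (fun e => w ∈ e ∧ u ∉ e) : Finset (Finset ℕ)) := by
    intro e he f hf hef
    obtain ⟨_, he2, he3⟩ := Finset.mem_filter.1 (Finset.mem_coe.1 he)
    obtain ⟨_, hf2, hf3⟩ := Finset.mem_filter.1 (Finset.mem_coe.1 hf)
    simp only at hef
    have h1 : e.erase w = f.erase w := by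
      rw [← Finset.erase_insert (fun h => he3 (Finset.mem_of_mem_erase h) : u ∉ e.erase w), hef,
        Finset.erase_insert (fun h => hf3 (Finset.mem_of_mem_erase h) : u ∉ f.erase w)]
    rw [← Finset.insert_erase he2, h1, Finset.insert_erase hf2]
  have h1 : (cl E u w).card = (E.filter (fun e => u ∉ e)).card + (E.filter (fun e => w ∈ e ∧ u ∉ e)).card := by
    unfold cl
    rw [Finset.card_union_of_disjoint hdis, Finset.card_image_of_injOn hinj]
  have h2 := Finset.card_filter_add_card_filter_not (s := E) (fun e => u ∈ e)
  have h3 := Finset.card_filter_add_card_filter_not (s := E.filter (fun e => w ∈ e)) (fun e => u ∈ e)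
  rw [Finset.filter_filter, Finset.filter_filter] at h3
  have h4 : codg E u w = (E.filter (fun e => w ∈ e ∧ u ∈ e)).card := by
    unfold codg; congr 1; apply Finset.filter_congr; intros; tauto
  unfold dg
  omega

theorem cl_s4 {E : Finset (Finset ℕ)} (hS : S4free E) {u w : ℕ} (huw : u ≠ w) : S4free (cl E u w) := by
  classical
  set σ : ℕ → ℕ := fun v => if v = u then w else v with hσ
  have hno : ∀ e ∈ cl E u w, u ∈ e → w ∉ e := by
    intro e he hu
    rw [mem_cl huw] at he
    tauto
  have hinj : ∀ e ∈ cl E u w, ∀ x ∈ e, ∀ y ∈ e, σ x = σ y → x = y := by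
    intro e he x hx y hy hxy
    simp only [hσ] at hxy
    have := hno e he
    by_cases h1 : x = u <;> by_cases h2 : y = u
    · rw [h1, h2]
    · rw [if_pos h1, if_neg h2] at hxy
      subst h1; subst hxy; exact absurd hy (this hx)
    · rw [if_neg h1, if_pos h2] at hxy
      subst h2; subst hxy; exact absurd hx (this hy)
    · rw [if_neg h1, if_neg h2] at hxy; exact hxy
  have hmap : ∀ e ∈ cl E u w, e.image σ ∈ E := by
    intro e he
    rw [mem_cl huw] at he
    rcases he with ⟨h1, h2⟩ | ⟨h1, h2, h3⟩
    · have : e.image σ = e := by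
        rw [Finset.image_congr (g := id)]
        · simp
        · intro x hx
          simp only [hσ, id]
          rw [if_neg]
          rintro rfl; exact h1 hx
      rw [this]; exact h2
    · have : e.image σ = insert w (e.erase u) := by
        ext x
        simp only [Finset.mem_image, Finset.mem_insert, Finset.mem_erase, hσ]
        constructor
        · rintro ⟨y, hy, rfl⟩
          by_cases hyu : y = u
          · simp [hyu]
          · rw [if_neg hyu]; exact Or.inr ⟨hyu, hy⟩
        · rintro (rfl | ⟨h4, h5⟩)
          · exact ⟨u, h1, if_pos rfl⟩
          · exact ⟨x, h5, if_neg h4⟩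
      rw [this]; exact h3
  intro S x y C h1 h2 h3 h4 h5 h6 h7 h8
  have e1 := hmap _ h1
  have e2 := hmap _ h2
  rw [Finset.image_insert] at e1 e2
  refine hS (S.image σ) (σ x) (σ y) (C.image σ) e1 e2 (hmap _ h3) ?_ ?_ ?_ (Finset.mem_image_of_mem _ h7)
    (Finset.mem_image_of_mem _ h8)
  · intro hh; exact h4 (hinj C h3 x h7 y h8 hh)
  · intro hh
    obtain ⟨s, hs, hss⟩ := Finset.mem_image.1 hh
    have := hinj _ h1 s (Finset.mem_insert_of_mem hs) x (Finset.mem_insert_self _ _) hss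
    exact h5 (this ▸ hs)
  · intro hh
    obtain ⟨s, hs, hss⟩ := Finset.mem_image.1 hh
    have := hinj _ h2 s (Finset.mem_insert_of_mem hs) y (Finset.mem_insert_self _ _) hss
    exact h6 (this ▸ hs)

def tw (E : Finset (Finset ℕ)) (a b : ℕ) : Prop :=
  (∀ e ∈ E, a ∈ e → b ∈ e → a = b) ∧ ∀ S : Finset ℕ, a ∉ S → b ∉ S → (insert a S ∈ E ↔ insert b S ∈ E)

theorem tw_refl (E : Finset (Finset ℕ)) (a : ℕ) : tw E a a := ⟨fun _ _ _ _ => rfl, fun _ _ _ => Iff.rfl⟩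

theorem tw_symm {E : Finset (Finset ℕ)} {a b : ℕ} (h : tw E a b) : tw E b a :=
  ⟨fun e he h1 h2 => (h.1 e he h2 h1).symm, fun S h1 h2 => (h.2 S h2 h1).symm⟩

theorem tw_trans {E : Finset (Finset ℕ)} {a b c : ℕ} (h : tw E a b) (h' : tw E b c) : tw E a c := by
  by_cases hab : a = b
  · rw [hab]; exact h'
  by_cases hbc : b = c
  · rw [← hbc]; exact h
  constructor
  · intro e he ha hc
    by_contra hac
    have hb : b ∉ e := fun hb => hab (h.1 e he ha hb)
    have h1 : insert b (e.erase a) ∈ E := by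
      rw [← h.2 (e.erase a) (by simp) (fun hh => hb (Finset.mem_of_mem_erase hh)), Finset.insert_erase ha]
      exact he
    exact hbc (h'.1 _ h1 (Finset.mem_insert_self _ _)
      (Finset.mem_insert_of_mem (Finset.mem_erase.2 ⟨fun hh => hac hh.symm, hc⟩)))
  · intro S ha hc
    by_cases hb : b ∈ S
    · constructor
      · intro h1
        exact absurd (h.1 _ h1 (Finset.mem_insert_self _ _) (Finset.mem_insert_of_mem hb)) hab
      · intro h1
        exact absurd (h'.1 _ h1 (Finset.mem_insert_of_mem hb) (Finset.mem_insert_self _ _)) hbc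
    · exact (h.2 S ha hb).trans (h'.2 S hb hc)

theorem tw_cl_off {E : Finset (Finset ℕ)} {u w p q : ℕ} (huw : u ≠ w) (hp : p ≠ u) (hq : q ≠ u) (h : tw E p q) :
    tw (cl E u w) p q := by
  by_cases hpq : p = q
  · rw [hpq]; exact tw_refl _ _
  constructor
  · intro e he h1 h2
    rw [mem_cl huw] at he
    rcases he with ⟨_, he⟩ | ⟨_, _, he⟩
    · exact h.1 e he h1 h2
    · exact h.1 _ he (Finset.mem_insert_of_mem (Finset.mem_erase.2 ⟨hp, h1⟩))
        (Finset.mem_insert_of_mem (Finset.mem_erase.2 ⟨hq, h2⟩))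
  · intro S h1 h2
    by_cases hu : u ∈ S
    · rw [mem_cl huw, mem_cl huw]
      have a1 : u ∈ insert p S := Finset.mem_insert_of_mem hu
      have a2 : u ∈ insert q S := Finset.mem_insert_of_mem hu
      have a3 : (insert p S).erase u = insert p (S.erase u) := Finset.erase_insert_of_ne hp
      have a4 : (insert q S).erase u = insert q (S.erase u) := Finset.erase_insert_of_ne hq
      rw [a3, a4]
      have key : (w ∉ insert p S ∧ insert w (insert p (S.erase u)) ∈ E) ↔
          (w ∉ insert q S ∧ insert w (insert q (S.erase u)) ∈ E) := by
        by_cases hwp : w = p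
        · subst hwp
          constructor
          · intro hh; exact absurd (Finset.mem_insert_self _ _) hh.1
          · intro hh
            exact absurd (h.1 _ hh.2 (Finset.mem_insert_self _ _)
              (Finset.mem_insert_of_mem (Finset.mem_insert_self _ _))) hpq
        by_cases hwq : w = q
        · subst hwq
          constructor
          · intro hh
            exact absurd (h.1 _ hh.2 (Finset.mem_insert_of_mem (Finset.mem_insert_self _ _))
              (Finset.mem_insert_self _ _)) hpq
          · intro hh; exact absurd (Finset.mem_insert_self _ _) hh.1
        rw [Finset.insert_comm w p, Finset.insert_comm w q]
        have b1 : p ∉ insert w (S.erase u) := by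
          simp only [Finset.mem_insert, Finset.mem_erase]
          rintro (hh | hh)
          · exact hwp hh.symm
          · exact h1 hh.2
        have b2 : q ∉ insert w (S.erase u) := by
          simp only [Finset.mem_insert, Finset.mem_erase]
          rintro (hh | hh)
          · exact hwq hh.symm
          · exact h2 hh.2
        rw [h.2 _ b1 b2]
        simp only [Finset.mem_insert, hwp, hwq, false_or]
      tauto
    · have a1 : u ∉ insert p S := by simp [hu, hp.symm]
      have a2 : u ∉ insert q S := by simp [hu, hq.symm]
      rw [cl_mem_off huw a1, cl_mem_off huw a2]
      exact h.2 S h1 h2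

theorem tw_cl_on {E : Finset (Finset ℕ)} {u w p : ℕ} (huw : u ≠ w) (hp : p ≠ u) (h : tw E w p) :
    tw (cl E u w) u p := by
  constructor
  · intro e he h1 h2
    exfalso
    rw [mem_cl huw] at he
    rcases he with ⟨h3, _⟩ | ⟨_, hw, he⟩
    · exact h3 h1
    · have := h.1 _ he (Finset.mem_insert_self _ _) (Finset.mem_insert_of_mem (Finset.mem_erase.2 ⟨hp, h2⟩))
      rw [this] at hw; exact hw h2
  · intro S h1 h2
    have a1 : u ∉ insert p S := by simp [h1, hp.symm]
    rw [cl_mem_off huw a1, mem_cl huw]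
    have a2 : (insert u S).erase u = S := Finset.erase_insert h1
    rw [a2]
    have a3 : u ∈ insert u S := Finset.mem_insert_self _ _
    by_cases hw : w ∈ S
    · have hne : w ≠ p := by rintro rfl; exact h2 hw
      constructor
      · intro hh; exfalso
        rcases hh with hh | hh
        · exact hh.1 a3
        · exact hh.2.1 (Finset.mem_insert_of_mem hw)
      · intro hh
        exact absurd (h.1 _ hh (Finset.mem_insert_of_mem hw) (Finset.mem_insert_self _ _)) hne
    · rw [← h.2 S hw h2]
      have : w ∉ insert u S := by simp [hw, huw.symm]
      tauto

open Classical in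
noncomputable def twp (E : Finset (Finset ℕ)) (X : Finset ℕ) : ℕ :=
  ((X ×ˢ X).filter (fun p => tw E p.1 p.2)).card

open Classical in
noncomputable def cls (E : Finset (Finset ℕ)) (X : Finset ℕ) (v : ℕ) : Finset ℕ :=
  X.filter (fun y => tw E v y)

theorem twp_le (E : Finset (Finset ℕ)) (X : Finset ℕ) : twp E X ≤ X.card ^ 2 := by
  classical
  unfold twp
  refine (Finset.card_filter_le _ _).trans ?_
  rw [Finset.card_product, sq]

theorem twp_cl {E : Finset (Finset ℕ)} {X : Finset ℕ} {u w : ℕ} (hu : u ∈ X) (huw : u ≠ w) (hnt : ¬ tw E u w)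
    (hc : (cls E X u).card ≤ (cls E X w).card) : twp E X < twp (cl E u w) X := by
  classical
  set A := (X ×ˢ X).filter (fun p => tw E p.1 p.2 ∧ p.1 ≠ u ∧ p.2 ≠ u) with hA
  have h1 : twp E X ≤ A.card + (cls E X u).card + (cls E X u).card := by
    have hsub : (X ×ˢ X).filter (fun p => tw E p.1 p.2) ⊆
        (A ∪ (cls E X u).image (fun y => (u, y))) ∪ (cls E X u).image (fun y => (y, u)) := by
      rintro ⟨p, q⟩ hp
      obtain ⟨hp1, hp2⟩ := Finset.mem_filter.1 hp
      rw [Finset.mem_product] at hp1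
      simp only at hp1 hp2
      by_cases hpu : p = u
      · subst hpu
        apply Finset.mem_union_left; apply Finset.mem_union_right
        exact Finset.mem_image_of_mem (fun y => (p, y)) (Finset.mem_filter.2 ⟨hp1.2, hp2⟩)
      · by_cases hqu : q = u
        · subst hqu
          apply Finset.mem_union_right
          exact Finset.mem_image_of_mem (fun y => (y, q)) (Finset.mem_filter.2 ⟨hp1.1, tw_symm hp2⟩)
        · apply Finset.mem_union_left; apply Finset.mem_union_left
          exact Finset.mem_filter.2 ⟨Finset.mem_product.2 hp1, hp2, hpu, hqu⟩
    refine (Finset.card_le_card hsub).trans ((Finset.card_union_le _ _).trans ?_)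
    exact Nat.add_le_add ((Finset.card_union_le _ _).trans (Nat.add_le_add_left Finset.card_image_le _)) Finset.card_image_le
  have huc : ∀ y ∈ cls E X w, y ≠ u := by
    rintro y hy rfl
    exact hnt (tw_symm (Finset.mem_filter.1 hy).2)
  have h2 : A.card + ((cls E X w).card + ((cls E X w).card + 1)) ≤ twp (cl E u w) X := by
    have hsub : A ∪ ((cls E X w).image (fun y => (u, y)) ∪ ((cls E X w).image (fun y => (y, u)) ∪ {(u, u)})) ⊆
        (X ×ˢ X).filter (fun p => tw (cl E u w) p.1 p.2) := by
      rintro ⟨p, q⟩ hp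
      simp only [Finset.mem_union, Finset.mem_image, Finset.mem_singleton, Prod.mk.injEq] at hp
      rw [Finset.mem_filter, Finset.mem_product]
      simp only
      rcases hp with hp | ⟨y, hy, rfl, rfl⟩ | ⟨y, hy, rfl, rfl⟩ | ⟨rfl, rfl⟩
      · obtain ⟨hp1, hp2, hp3, hp4⟩ := Finset.mem_filter.1 hp
        rw [Finset.mem_product] at hp1
        exact ⟨hp1, tw_cl_off huw hp3 hp4 hp2⟩
      · obtain ⟨hy1, hy2⟩ := Finset.mem_filter.1 hy
        exact ⟨⟨hu, hy1⟩, tw_cl_on huw (huc _ hy) hy2⟩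
      · obtain ⟨hy1, hy2⟩ := Finset.mem_filter.1 hy
        exact ⟨⟨hy1, hu⟩, tw_symm (tw_cl_on huw (huc _ hy) hy2)⟩
      · exact ⟨⟨hu, hu⟩, tw_refl _ _⟩
    have h3 := Finset.card_le_card hsub
    rw [Finset.card_union_of_disjoint, Finset.card_union_of_disjoint, Finset.card_union_of_disjoint,
      Finset.card_image_of_injective, Finset.card_image_of_injective, Finset.card_singleton] at h3
    · exact h3
    · intro a b hab; simpa using hab
    · intro a b hab; simpa using hab
    · rw [Finset.disjoint_left]
      intro p hp hq
      obtain ⟨y, hy, rfl⟩ := Finset.mem_image.1 hp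
      have := Finset.mem_singleton.1 hq
      simp only [Prod.mk.injEq] at this
      exact huc y hy this.1
    · rw [Finset.disjoint_left]
      intro p hp hq
      obtain ⟨y, hy, rfl⟩ := Finset.mem_image.1 hp
      rcases Finset.mem_union.1 hq with hq | hq
      · obtain ⟨z, hz, hzz⟩ := Finset.mem_image.1 hq
        simp only [Prod.mk.injEq] at hzz
        exact huc y hy hzz.2.symm
      · have := Finset.mem_singleton.1 hq
        simp only [Prod.mk.injEq] at this
        exact huc y hy this.2
    · rw [Finset.disjoint_left]
      intro p hp hq
      obtain ⟨_, _, hp3, hp4⟩ := Finset.mem_filter.1 hp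
      simp only [Finset.mem_union, Finset.mem_image, Finset.mem_singleton] at hq
      rcases hq with ⟨y, _, rfl⟩ | ⟨y, _, rfl⟩ | rfl
      · exact hp3 rfl
      · exact hp4 rfl
      · exact hp3 rfl
  omega

theorem tw_repl1 {E : Finset (Finset ℕ)} {p q : ℕ} (h : tw E p q) {S : Finset ℕ} (hp : p ∉ S)
    (hE : insert p S ∈ E) : q ∉ S ∧ insert q S ∈ E := by
  have hq : q ∉ S := by
    intro hq
    have := h.1 _ hE (Finset.mem_insert_self _ _) (Finset.mem_insert_of_mem hq)
    exact hp (this ▸ hq)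
  exact ⟨hq, (h.2 S hp hq).1 hE⟩

theorem tw_repl {E : Finset (Finset ℕ)} (g : ℕ → ℕ) (A : Finset ℕ) :
    ∀ B : Finset ℕ, Disjoint A B → A ∪ B ∈ E → (∀ x ∈ A, tw E x (g x)) → A.image g ∪ B ∈ E := by
  induction A using Finset.induction_on with
  | empty => intro B _ h _; simpa using h
  | insert a A ha ih =>
    intro B hd hE ht
    rw [Finset.disjoint_insert_left] at hd
    rw [Finset.insert_union] at hE
    have hn : a ∉ A ∪ B := by
      rw [Finset.mem_union]; rintro (h | h)
      · exact ha h
      · exact hd.1 h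
    obtain ⟨h1, h2⟩ := tw_repl1 (ht a (Finset.mem_insert_self _ _)) hn hE
    have := ih (insert (g a) B) (by
      rw [Finset.disjoint_insert_right]
      exact ⟨fun h => h1 (Finset.mem_union_left _ h), hd.2⟩) (by
      rw [Finset.union_insert]; exact h2) (fun x hx => ht x (Finset.mem_insert_of_mem hx))
    rw [Finset.image_insert, Finset.insert_union, ← Finset.union_insert]
    exact this

theorem tw_image {E : Finset (Finset ℕ)} (g : ℕ → ℕ) {e : Finset ℕ} (he : e ∈ E)
    (ht : ∀ x ∈ e, tw E x (g x)) : e.image g ∈ E := by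
  have := tw_repl (E := E) g e ∅ (by simp) (by simpa using he) ht
  simpa using this

theorem exists_rep (E : Finset (Finset ℕ)) (X : Finset ℕ) : ∃ φ : ℕ → ℕ,
    (∀ v ∈ X, φ v ∈ X ∧ tw E v (φ v)) ∧ ∀ x y, tw E x y → φ x = φ y := by
  refine ⟨fun v => sInf {x | x ∈ X ∧ tw E v x}, ?_, ?_⟩
  · intro v hv
    exact Nat.sInf_mem (s := {x | x ∈ X ∧ tw E v x}) ⟨v, hv, tw_refl E v⟩
  · intro x y h
    have : {z | z ∈ X ∧ tw E x z} = {z | z ∈ X ∧ tw E y z} := by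
      ext z
      constructor
      · rintro ⟨h1, h2⟩; exact ⟨h1, tw_trans (tw_symm h) h2⟩
      · rintro ⟨h1, h2⟩; exact ⟨h1, tw_trans h h2⟩
    simp only [this]

theorem aux_e2 (a b c n : ℝ) (hn : 0 < n) : a / n * (b / n * (c / n)) = a * b * c / n ^ 3 := by
  field_simp

theorem aux_e3 (a b n : ℝ) (hn : 0 < n) : a / n * (b / n ^ 3) = a * b / n ^ 4 := by
  field_simp

set_option maxHeartbeats 1000000 in
theorem sym_case {E : Finset (Finset ℕ)} {X : Finset ℕ} (hU : Uni E X) (hS : S4free E)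
    (hn : 10 ^ 11 ≤ X.card) (hE : (1 / 256 - 1 / 10 ^ 11) * (X.card : ℝ) ^ 4 ≤ E.card)
    (P1 : ∀ u ∈ X, ∀ w ∈ X, u ≠ w → dg E w ≤ dg E u + codg E u w)
    (P2 : ∀ u ∈ X, ∀ w ∈ X, u ≠ w → (∀ e ∈ E, u ∈ e → w ∈ e → False) → tw E u w) : Good4 E X := by
  obtain ⟨φ, hφ1, hφ2⟩ := exists_rep E X
  have hφφ : ∀ v ∈ X, φ (φ v) = φ v := fun v hv => (hφ2 _ _ (hφ1 v hv).2).symm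
  have hφ3 : ∀ x ∈ X, ∀ y ∈ X, φ x = φ y → tw E x y := by
    intro x hx y hy h
    exact tw_trans (hφ1 x hx).2 (h ▸ tw_symm (hφ1 y hy).2)
  have hinj : ∀ e ∈ E, ∀ x ∈ e, ∀ y ∈ e, φ x = φ y → x = y := by
    intro e he x hx y hy h
    exact (hφ3 x ((hU e he).1 hx) y ((hU e he).1 hy) h).1 e he hx hy
  set C : ℕ → Finset ℕ := fun i => X.filter (fun x => φ x = i) with hC
  have hCm : ∀ i x, x ∈ C i ↔ x ∈ X ∧ φ x = i := fun i x => by simp [hC]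
  have hXne : X.Nonempty := Finset.card_pos.1 (by omega)
  obtain ⟨v1, hv1, hmax1⟩ := Finset.exists_max_image X (fun v => (C (φ v)).card) hXne
  obtain ⟨v0, hv0, hφ0, hmax⟩ : ∃ v0 ∈ X, φ v0 = v0 ∧ ∀ v ∈ X, (C (φ v)).card ≤ (C v0).card :=
    ⟨φ v1, (hφ1 v1 hv1).1, hφφ v1 hv1, hmax1⟩
  set n : ℝ := (X.card : ℝ) with hndef
  have hnR : (10 : ℝ) ^ 11 ≤ n := by rw [hndef]; exact_mod_cast hn
  have hnpos : (0 : ℝ) < n := by linarith [show (0 : ℝ) < 10 ^ 11 by norm_num]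
  -- degree
  have hdeg : (1 / 64 - 1 / 10 ^ 10) * n ^ 3 ≤ dg E v0 := by
    have h1 : ∀ w ∈ X, dg E w ≤ dg E v0 + X.card ^ 2 := by
      intro w hw
      by_cases h : v0 = w
      · rw [h]; omega
      · exact (P1 v0 hv0 w hw h).trans (Nat.add_le_add_left (codg_le hU h) _)
    have h2 : 4 * E.card ≤ X.card * (dg E v0 + X.card ^ 2) := by
      rw [← sum_dg hU, ← smul_eq_mul]
      exact Finset.sum_le_card_nsmul _ _ _ h1
    have h3 : 4 * (E.card : ℝ) ≤ n * (dg E v0 + n ^ 2) := by rw [hndef]; exact_mod_cast h2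
    have h4 : 4 * ((1 / 256 - 1 / 10 ^ 11) * n ^ 4) ≤ n * (dg E v0 + n ^ 2) := by linarith
    have h5 : 4 * ((1 / 256 - 1 / 10 ^ 11) * n ^ 3) ≤ dg E v0 + n ^ 2 := by
      have : n * (4 * ((1 / 256 - 1 / 10 ^ 11) * n ^ 3)) ≤ n * (dg E v0 + n ^ 2) := by
        refine le_trans (le_of_eq ?_) h4; ring
      exact le_of_mul_le_mul_left this hnpos
    have h6 : n ^ 2 * 10 ^ 11 ≤ n ^ 2 * n := mul_le_mul_of_nonneg_left hnR (pow_pos hnpos 2).le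
    have h7 : n ^ 2 * n = n ^ 3 := by ring
    rw [h7] at h6
    clear hn hE h1 h2 hmax1 hmax
    norm_num at h5 h6 ⊢
    linarith
  set L := E.filter (fun e => v0 ∈ e) with hL
  set ψ : Finset ℕ → Finset ℕ := fun e => (e.erase v0).image φ with hψ
  set G := L.image ψ with hGdef
  set I := (X.image φ).erase v0 with hI
  have hLm : ∀ e ∈ L, e ∈ E ∧ v0 ∈ e := fun e he => Finset.mem_filter.1 he
  have hGm : ∀ T ∈ G, insert v0 T ∈ E ∧ v0 ∉ T ∧ T.card = 3 ∧ (∀ i ∈ T, i ∈ X ∧ φ i = i) := by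
    intro T hT
    obtain ⟨e, he, rfl⟩ := Finset.mem_image.1 hT
    obtain ⟨heE, hv⟩ := hLm e he
    have h1 : e.image φ ∈ E := tw_image φ heE (fun x hx => (hφ1 x ((hU e heE).1 hx)).2)
    have h2 : e.image φ = insert v0 (ψ e) := by
      simp only [hψ]
      conv_lhs => rw [← Finset.insert_erase hv]
      rw [Finset.image_insert, hφ0]
    have h3 : v0 ∉ ψ e := by
      intro h
      obtain ⟨x, hx, hxv⟩ := Finset.mem_image.1 h
      have := hinj e heE x (Finset.mem_of_mem_erase hx) v0 hv (by rw [hxv, hφ0])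
      exact Finset.ne_of_mem_erase hx this
    refine ⟨h2 ▸ h1, h3, ?_, ?_⟩
    · have := (hU _ h1).2
      rw [h2, Finset.card_insert_of_notMem h3] at this
      omega
    · intro i hi
      obtain ⟨x, hx, rfl⟩ := Finset.mem_image.1 hi
      have hxX := (hU e heE).1 (Finset.mem_of_mem_erase hx)
      exact ⟨(hφ1 x hxX).1, hφφ x hxX⟩
  have hlin : ∀ S ∈ G, ∀ T ∈ G, S ≠ T → (S ∩ T).card ≤ 1 := by
    intro S hSG T hTG hne
    by_contra hcon
    push Not at hcon
    obtain ⟨s1, s2, s3, s4⟩ := hGm S hSG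
    obtain ⟨t1, t2, t3, t4⟩ := hGm T hTG
    have c1 := Finset.card_sdiff_add_card_inter S T
    have c2 := Finset.card_sdiff_add_card_inter T S
    rw [Finset.inter_comm T S] at c2
    have c0 : (S \ T).card ≠ 0 := by
      intro h0
      rw [Finset.card_eq_zero, Finset.sdiff_eq_empty_iff_subset] at h0
      exact hne (Finset.eq_of_subset_of_card_le h0 (by omega))
    obtain ⟨k, hk⟩ := Finset.card_eq_one.1 (show (S \ T).card = 1 by omega)
    obtain ⟨l, hl⟩ := Finset.card_eq_one.1 (show (T \ S).card = 1 by omega)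
    have hkm : k ∈ S \ T := by rw [hk]; simp
    have hlm : l ∈ T \ S := by rw [hl]; simp
    rw [Finset.mem_sdiff] at hkm hlm
    have hkl : k ≠ l := by rintro rfl; exact hkm.2 hlm.1
    have hSe : S = insert k (S ∩ T) := by
      rw [← Finset.sdiff_union_inter S T, hk]; ext x; simp; tauto
    have hTe : T = insert l (S ∩ T) := by
      rw [Finset.inter_comm]
      rw [← Finset.sdiff_union_inter T S, hl]; ext x; simp; tauto
    have hnt : ¬ tw E k l := by
      intro h
      have := hφ2 _ _ h
      rw [(s4 k hkm.1).2, (t4 l hlm.1).2] at this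
      exact hkl this
    have hcov : ¬ ∀ e ∈ E, k ∈ e → l ∈ e → False := fun h =>
      hnt (P2 k (s4 k hkm.1).1 l (t4 l hlm.1).1 hkl h)
    push Not at hcov
    obtain ⟨D, hD, hkD, hlD, _⟩ := hcov
    refine hS (insert v0 (S ∩ T)) k l D ?_ ?_ hD hkl ?_ ?_ hkD hlD
    · rw [Finset.insert_comm, ← hSe]; exact s1
    · rw [Finset.insert_comm, ← hTe]; exact t1
    · rw [Finset.mem_insert]; rintro (h | h)
      · exact s2 (h ▸ hkm.1)
      · exact hkm.2 (Finset.mem_inter.1 h).2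
    · rw [Finset.mem_insert]; rintro (h | h)
      · exact t2 (h ▸ hlm.1)
      · exact hlm.2 (Finset.mem_inter.1 h).1
  have hcount : dg E v0 ≤ ∑ T ∈ G, ∏ i ∈ T, (C i).card := by
    have h1 : dg E v0 = L.card := rfl
    rw [h1, Finset.card_eq_sum_card_image ψ L]
    apply Finset.sum_le_sum
    intro T hT
    rw [← Finset.card_pi]
    have hsub : L.filter (fun e => ψ e = T) ⊆
        (T.pi C).image (fun g => insert v0 (T.attach.image (fun i => g i.1 i.2))) := by
      intro e he
      obtain ⟨heL, heT⟩ := Finset.mem_filter.1 he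
      obtain ⟨heE, hv⟩ := hLm e heL
      have hch : ∀ i, i ∈ T → ∃ x ∈ e.erase v0, φ x = i := by
        intro i hi
        rw [← heT] at hi
        exact Finset.mem_image.1 hi
      choose g hg1 hg2 using hch
      rw [Finset.mem_image]
      refine ⟨g, ?_, ?_⟩
      · rw [Finset.mem_pi]
        intro i hi
        rw [hCm]
        exact ⟨(hU e heE).1 (Finset.mem_of_mem_erase (hg1 i hi)), hg2 i hi⟩
      · ext x
        simp only [Finset.mem_insert, Finset.mem_image, Finset.mem_attach, true_and, Subtype.exists]
        constructor
        · rintro (rfl | ⟨i, hi, rfl⟩)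
          · exact hv
          · exact Finset.mem_of_mem_erase (hg1 i hi)
        · intro hx
          by_cases hxv : x = v0
          · exact Or.inl hxv
          · right
            have hi : φ x ∈ T := by
              rw [← heT]; exact Finset.mem_image_of_mem _ (Finset.mem_erase.2 ⟨hxv, hx⟩)
            exact ⟨φ x, hi, hinj e heE _ (Finset.mem_of_mem_erase (hg1 _ hi)) x hx (hg2 _ hi)⟩
    exact (Finset.card_le_card hsub).trans Finset.card_image_le
  have hsumC : ∑ i ∈ X.image φ, (C i).card = X.card := by
    rw [Finset.card_eq_sum_card_image φ X]
  have hv0I : v0 ∈ X.image φ := Finset.mem_image.2 ⟨v0, hv0, hφ0⟩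
  obtain ⟨T, hTG, hTb⟩ := lagrangian I (fun i => (C i).card / n) (fun i => div_nonneg (Nat.cast_nonneg _) hnpos.le) ((C v0).card / n)
    (div_nonneg (Nat.cast_nonneg _) hnpos.le) (by
      rw [div_le_one hnpos, hndef]
      exact_mod_cast Finset.card_le_card (Finset.filter_subset _ _)) (by
      intro i hi
      obtain ⟨x, hx, rfl⟩ := Finset.mem_image.1 (Finset.mem_of_mem_erase hi)
      have := hmax x hx
      have h2 : ((C (φ x)).card : ℝ) ≤ (C v0).card := by exact_mod_cast this
      exact div_le_div_of_nonneg_right h2 hnpos.le) (by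
      rw [← Finset.sum_div]
      have h1 := Finset.add_sum_erase (X.image φ) (fun i => ((C i).card : ℝ)) hv0I
      have h2 : ∑ i ∈ X.image φ, ((C i).card : ℝ) = n := by rw [hndef]; exact_mod_cast hsumC
      rw [h2] at h1
      rw [eq_sub_iff_add_eq, ← add_div, add_comm, h1, div_self hnpos.ne']) G (by
      intro T hT i hi
      obtain ⟨_, t2, _, t4⟩ := hGm T hT
      refine Finset.mem_erase.2 ⟨?_, Finset.mem_image.2 ⟨i, (t4 i hi).1, (t4 i hi).2⟩⟩
      rintro rfl; exact t2 hi) (fun T hT => (hGm T hT).2.2.1) hlin (by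
      have h1 : ∑ T ∈ G, ∏ i ∈ T, ((C i).card : ℝ) / n = (∑ T ∈ G, ∏ i ∈ T, ((C i).card : ℝ)) / n ^ 3 := by
        rw [Finset.sum_div]
        apply Finset.sum_congr rfl
        intro T hT
        rw [Finset.prod_div_distrib, Finset.prod_const, (hGm T hT).2.2.1]
      rw [h1, le_div_iff₀ (pow_pos hnpos 3)]
      refine hdeg.trans ?_
      exact_mod_cast hcount)
  obtain ⟨t1, t2, t3, t4⟩ := hGm T hTG
  obtain ⟨i, j, k, hij, hik, hjk, rfl⟩ := Finset.card_eq_three.1 t3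
  simp only [Finset.mem_insert, Finset.mem_singleton, not_or] at t2
  obtain ⟨n1, n2, n3⟩ := t2
  have hi := t4 i (by simp)
  have hj := t4 j (by simp)
  have hk := t4 k (by simp)
  have hdis : ∀ a b, a ≠ b → Disjoint (C a) (C b) := by
    intro a b hab
    rw [Finset.disjoint_left]
    intro x h1 h2
    rw [hCm] at h1 h2
    exact hab (h1.2.symm.trans h2.2)
  have hinjv : Function.Injective ![v0, i, j, k] := by
    intro a b
    fin_cases a <;> fin_cases b <;> simp [n1, n2, n3, hij, hik, hjk, Ne.symm n1, Ne.symm n2, Ne.symm n3, hij.symm, hik.symm, hjk.symm]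
  have htup : tup E (C v0) (C i) (C j) (C k) = (C v0).card * (C i).card * (C j).card * (C k).card := by
    unfold tup
    rw [Finset.filter_true_of_mem]
    · rw [Finset.card_product, Finset.card_product, Finset.card_product]; ring
    · rintro ⟨p, q, r, s⟩ hp
      simp only [Finset.mem_product, hCm] at hp
      obtain ⟨⟨p1, p2⟩, ⟨q1, q2⟩, ⟨r1, r2⟩, ⟨s1, s2⟩⟩ := hp
      simp only
      have := tw_image (E := E) (fun x => if x = v0 then p else if x = i then q else if x = j then r else s) t1 (by
        intro x hx
        simp only [Finset.mem_insert, Finset.mem_singleton] at hx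
        rcases hx with rfl | rfl | rfl | rfl
        · simp only [if_true]
          exact hφ3 _ hv0 _ p1 (by rw [p2, hφ0])
        · rw [if_neg (Ne.symm n1), if_pos rfl]
          exact hφ3 _ hi.1 _ q1 (by rw [q2, hi.2])
        · rw [if_neg (Ne.symm n2), if_neg hij.symm, if_pos rfl]
          exact hφ3 _ hj.1 _ r1 (by rw [r2, hj.2])
        · rw [if_neg (Ne.symm n3), if_neg hik.symm, if_neg hjk.symm]
          exact hφ3 _ hk.1 _ s1 (by rw [s2, hk.2]))
      simpa [Ne.symm n1, Ne.symm n2, Ne.symm n3, hij.symm, hik.symm, hjk.symm] using this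
  refine good4_of_tup hU hS.t4 (by omega) (fun a => C (![v0, i, j, k] a)) (fun a => Finset.filter_subset _ _)
    (fun a b hab => hdis _ _ (fun h => hab (hinjv h))) ?_
  have e1 : tup E (C (![v0, i, j, k] 0)) (C (![v0, i, j, k] 1)) (C (![v0, i, j, k] 2)) (C (![v0, i, j, k] 3))
    = (C v0).card * (C i).card * (C j).card * (C k).card := htup
  rw [e1]
  have e2 : ∏ x ∈ ({i, j, k} : Finset ℕ), ((C x).card : ℝ) / n = (C i).card * (C j).card * (C k).card / n ^ 3 := by
    rw [Finset.prod_insert (by simp [hij, hik]), Finset.prod_insert (by simp [hjk]), Finset.prod_singleton]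
    exact aux_e2 _ _ _ _ hnpos
  rw [e2] at hTb
  have e3 : ((C v0).card : ℝ) / n * ((C i).card * (C j).card * (C k).card / n ^ 3)
     = ((C v0).card * (C i).card * (C j).card * (C k).card) / n ^ 4 := by
    rw [aux_e3 _ _ _ hnpos]; ring
  rw [e3, le_div_iff₀ (pow_pos hnpos 4)] at hTb
  push_cast
  exact hTb

theorem tup_congr_off {E E' : Finset (Finset ℕ)} {u : ℕ} (h : ∀ e, u ∉ e → (e ∈ E ↔ e ∈ E'))
    {A B C D : Finset ℕ} (hA : u ∉ A) (hB : u ∉ B) (hC : u ∉ C) (hD : u ∉ D) :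
    tup E A B C D = tup E' A B C D := by
  unfold tup
  congr 1
  apply Finset.filter_congr
  rintro ⟨a, b, c, d⟩ hp
  simp only [Finset.mem_product] at hp
  obtain ⟨h1, h2, h3, h4⟩ := hp
  apply h
  simp only [Finset.mem_insert, Finset.mem_singleton]
  rintro (rfl | rfl | rfl | rfl)
  · exact hA h1
  · exact hB h2
  · exact hC h3
  · exact hD h4

theorem num_89 (x : ℝ) : (1 / 256 - 1 / 10 ^ 8) * x ^ 4 ≤ (1 / 256 - 1 / 10 ^ 9) * x ^ 4 :=
  mul_le_mul_of_nonneg_right (by norm_num) (by positivity)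

theorem stab {X : Finset ℕ} (hn : 10 ^ 11 ≤ X.card) {E : Finset (Finset ℕ)} (hU : Uni E X) (hS : S4free E)
    (hE : (1 / 256 - 1 / 10 ^ 11) * (X.card : ℝ) ^ 4 ≤ E.card) : Good4 E X := by
  classical
  by_contra hbad
  set W := ((X.powersetCard 4).powerset).filter (fun E => S4free E ∧
    (1 / 256 - 1 / 10 ^ 11) * (X.card : ℝ) ^ 4 ≤ E.card ∧ ¬ Good4 E X) with hW
  have hWm : ∀ E, E ∈ W ↔ Uni E X ∧ S4free E ∧
    (1 / 256 - 1 / 10 ^ 11) * (X.card : ℝ) ^ 4 ≤ E.card ∧ ¬ Good4 E X := by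
    intro E
    rw [hW, Finset.mem_filter, Finset.mem_powerset]
    apply and_congr_left
    intro _
    constructor
    · intro h e he; exact Finset.mem_powersetCard.1 (h he)
    · intro h e he; exact Finset.mem_powersetCard.2 (h e he)
  have hWne : W.Nonempty := ⟨E, (hWm E).2 ⟨hU, hS, hE, hbad⟩⟩
  obtain ⟨F, hF, hmax⟩ := Finset.exists_max_image W (fun E => E.card * (X.card ^ 2 + 1) + twp E X) hWne
  clear hbad hE hS hU
  obtain ⟨hU, hS, hE, hbad⟩ := (hWm F).1 hF
  have key : ∀ u ∈ X, ∀ w ∈ X, u ≠ w → F.card ≤ (cl F u w).card → cl F u w ∈ W := by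
    intro u hu w hw huw hc
    rw [hWm]
    have hc' : (F.card : ℝ) ≤ (cl F u w).card := by exact_mod_cast hc
    refine ⟨cl_uni hU huw hu, cl_s4 hS huw, hE.trans hc', ?_⟩
    intro hgood
    obtain ⟨P, p1, p2, p3, p4⟩ := boot (cl_uni hU huw hu) hn (hE.trans hc') hgood u
    apply hbad
    refine good4_of_tup hU hS.t4 (le_trans (by norm_num) hn) P p1 p3 ?_
    rw [tup_congr_off (u := u) (E' := cl F u w) (fun e he => (cl_mem_off huw he).symm) (p2 0) (p2 1) (p2 2) (p2 3)]
    exact (num_89 _).trans p4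
  have hle : ∀ u ∈ X, ∀ w ∈ X, u ≠ w → (cl F u w).card ≤ F.card := by
    intro u hu w hw huw
    by_contra hc
    push Not at hc
    have h1 := hmax _ (key u hu w hw huw hc.le)
    have h2 := twp_le F X
    have h3 : (F.card + 1) * (X.card ^ 2 + 1) ≤ (cl F u w).card * (X.card ^ 2 + 1) := Nat.mul_le_mul_right _ hc
    rw [add_mul] at h3
    omega
  have P1 : ∀ u ∈ X, ∀ w ∈ X, u ≠ w → dg F w ≤ dg F u + codg F u w := by
    intro u hu w hw huw
    have := hle u hu w hw huw
    have := cl_card (E := F) huw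
    omega
  apply hbad
  refine sym_case hU hS hn hE P1 ?_
  have P2 : ∀ u ∈ X, ∀ w ∈ X, u ≠ w → (∀ e ∈ F, u ∈ e → w ∈ e → False) →
      (cls F X u).card ≤ (cls F X w).card → tw F u w := by
    intro u hu w hw huw hnc hcl
    by_contra hnt
    have c0 : codg F u w = 0 := by
      unfold codg
      rw [Finset.card_eq_zero, Finset.filter_eq_empty_iff]
      rintro e he ⟨h1, h2⟩; exact hnc e he h1 h2
    have c0' : codg F w u = 0 := by
      unfold codg
      rw [Finset.card_eq_zero, Finset.filter_eq_empty_iff]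
      rintro e he ⟨h1, h2⟩; exact hnc e he h2 h1
    have d1 := P1 u hu w hw huw
    have d2 := P1 w hw u hu huw.symm
    have d3 := cl_card (E := F) huw
    have d4 : (cl F u w).card = F.card := by omega
    have h1 := hmax _ (key u hu w hw huw d4.ge)
    have h2 := twp_cl hu huw hnt hcl
    simp only [d4] at h1
    omega
  intro u hu w hw huw hnc
  rcases le_total (cls F X u).card (cls F X w).card with h | h
  · exact P2 u hu w hw huw hnc h
  · exact tw_symm (P2 w hw u hu huw.symm (fun e he h1 h2 => hnc e he h2 h1) h)

theorem triple_le {E : Finset (Finset ℕ)} {X : Finset ℕ} (hU : Uni E X) {x y s : ℕ} (hxy : x ≠ y) (hxs : x ≠ s)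
    (hys : y ≠ s) : (E.filter (fun e => x ∈ e ∧ y ∈ e ∧ s ∈ e)).card ≤ X.card := by
  have hsub : E.filter (fun e => x ∈ e ∧ y ∈ e ∧ s ∈ e) ⊆ X.image (fun z => ({x, y, s, z} : Finset ℕ)) := by
    intro e he
    obtain ⟨heE, h1, h2, h3⟩ := Finset.mem_filter.1 he
    have hsub3 : ({x, y, s} : Finset ℕ) ⊆ e := by
      intro z hz
      simp only [Finset.mem_insert, Finset.mem_singleton] at hz
      rcases hz with rfl | rfl | rfl <;> assumption
    have hc3 : ({x, y, s} : Finset ℕ).card = 3 := Finset.card_eq_three.2 ⟨x, y, s, hxy, hxs, hys, rfl⟩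
    have hc : (e \ {x, y, s}).card = 1 := by
      rw [Finset.card_sdiff_of_subset hsub3, (hU e heE).2, hc3]
    obtain ⟨z, hz⟩ := Finset.card_eq_one.1 hc
    have hze : z ∈ e \ {x, y, s} := by rw [hz]; simp
    refine Finset.mem_image.2 ⟨z, (hU e heE).1 (Finset.mem_sdiff.1 hze).1, ?_⟩
    rw [← Finset.sdiff_union_of_subset hsub3, hz]
    ext w; simp; tauto
  exact (Finset.card_le_card hsub).trans Finset.card_image_le

theorem clean {E : Finset (Finset ℕ)} {X : Finset ℕ} (hU : Uni E X) (hT : T4free E) :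
    ∃ F ⊆ E, S4free F ∧ E.card ≤ F.card + (3 * X.card + 1) * X.card ^ 2 := by
  classical
  set M := 3 * X.card + 1 with hM
  set unc : Finset (Finset ℕ) → Finset (ℕ × ℕ) := fun F =>
    (X ×ˢ X).filter (fun p => ∀ e ∈ F, p.1 ∈ e → p.2 ∈ e → False) with hunc
  obtain ⟨F, hF, hmax⟩ := Finset.exists_max_image E.powerset (fun F => F.card + M * (unc F).card) ⟨E, by simp⟩
  rw [Finset.mem_powerset] at hF
  refine ⟨F, hF, ?_, ?_⟩
  · intro S x y C h1 h2 h3 hxy hxS hyS hxC hyC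
    have hcod : M ≤ codg F x y := by
      set F' := F.filter (fun e => ¬ (x ∈ e ∧ y ∈ e)) with hF'
      have hm := hmax F' (Finset.mem_powerset.2 ((Finset.filter_subset _ _).trans hF))
      have hsub : insert (x, y) (unc F) ⊆ unc F' := by
        intro p hp
        rw [Finset.mem_insert] at hp
        rcases hp with rfl | hp
        · refine Finset.mem_filter.2 ⟨Finset.mem_product.2 ⟨(hU C (hF h3)).1 hxC, (hU C (hF h3)).1 hyC⟩, ?_⟩
          intro e he hx hy
          exact (Finset.mem_filter.1 he).2 ⟨hx, hy⟩
        · obtain ⟨q1, q2⟩ := Finset.mem_filter.1 hp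
          exact Finset.mem_filter.2 ⟨q1, fun e he => q2 e (Finset.mem_of_mem_filter e he)⟩
      have hnot : (x, y) ∉ unc F := by
        intro h
        exact (Finset.mem_filter.1 h).2 C h3 hxC hyC
      have hc := Finset.card_le_card hsub
      rw [Finset.card_insert_of_notMem hnot] at hc
      have hs : (F.filter (fun e => x ∈ e ∧ y ∈ e)).card + F'.card = F.card := by
        rw [hF']
        convert Finset.card_filter_add_card_filter_not (s := F) (fun e => x ∈ e ∧ y ∈ e)
      have hmul : M * ((unc F).card + 1) ≤ M * (unc F').card := Nat.mul_le_mul_left _ hc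
      rw [mul_add] at hmul
      have e1 : codg F x y = (F.filter (fun e => x ∈ e ∧ y ∈ e)).card := rfl
      rw [e1]
      omega
    have hS3 : S.card = 3 := by
      have := (hU _ (hF h1)).2
      rw [Finset.card_insert_of_notMem hxS] at this
      omega
    obtain ⟨D, hD, hxD, hyD, hdis⟩ : ∃ D ∈ F, x ∈ D ∧ y ∈ D ∧ Disjoint S D := by
      by_contra hcon
      push Not at hcon
      have hsub : F.filter (fun e => x ∈ e ∧ y ∈ e) ⊆
          S.biUnion (fun s => F.filter (fun e => x ∈ e ∧ y ∈ e ∧ s ∈ e)) := by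
        intro e he
        obtain ⟨heF, hx, hy⟩ := Finset.mem_filter.1 he
        have := hcon e heF hx hy
        rw [Finset.not_disjoint_iff] at this
        obtain ⟨s, hs, hse⟩ := this
        exact Finset.mem_biUnion.2 ⟨s, hs, Finset.mem_filter.2 ⟨heF, hx, hy, hse⟩⟩
      have hc := (Finset.card_le_card hsub).trans (Finset.card_biUnion_le_card_mul S _ X.card (by
        intro s hs
        exact triple_le (hU.mono hF) hxy (fun h => hxS (h ▸ hs)) (fun h => hyS (h ▸ hs))))
      have e1 : codg F x y = (F.filter (fun e => x ∈ e ∧ y ∈ e)).card := rfl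
      rw [hS3] at hc
      omega
    exact hT S x y D (hF h1) (hF h2) (hF hD) hxy hxD hyD hdis
  · have hm := hmax E (by simp)
    have h2 : (unc F).card ≤ X.card ^ 2 := by
      refine (Finset.card_filter_le _ _).trans ?_
      rw [Finset.card_product, sq]
    have h3 := Nat.mul_le_mul_left M h2
    omega

theorem num_clean (n e f : ℝ) (hn : (10 : ℝ) ^ 12 ≤ n) (he : (1 / 256 - 5 / 10 ^ 12) * n ^ 4 ≤ e)
    (h : e ≤ f + (3 * n + 1) * n ^ 2) : (1 / 256 - 1 / 10 ^ 11) * n ^ 4 ≤ f := by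
  have h0 : 0 < n := lt_of_lt_of_le (by norm_num) hn
  have h1 : (3 * n + 1) * n ^ 2 ≤ 4 * n ^ 3 := by nlinarith [sq_nonneg n]
  have h2 : n ^ 3 * 10 ^ 12 ≤ n ^ 3 * n := mul_le_mul_of_nonneg_left hn (by positivity)
  have h3 : n ^ 3 * n = n ^ 4 := by ring
  rw [h3] at h2
  have h4 : 0 < n ^ 4 := by positivity
  norm_num at he h2 ⊢
  linarith

theorem tup_mono {E F : Finset (Finset ℕ)} (h : F ⊆ E) (A B C D : Finset ℕ) : tup F A B C D ≤ tup E A B C D := by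
  unfold tup
  apply Finset.card_le_card
  intro p hp
  obtain ⟨h1, h2⟩ := Finset.mem_filter.1 hp
  exact Finset.mem_filter.2 ⟨h1, h h2⟩

theorem t4stab {E : Finset (Finset ℕ)} {X : Finset ℕ} (hU : Uni E X) (hT : T4free E) (hn : 10 ^ 12 ≤ X.card)
    (hE : (1 / 256 - 5 / 10 ^ 12) * (X.card : ℝ) ^ 4 ≤ E.card) :
    (∀ v, (dg E v : ℝ) ≤ 0.02 * (X.card : ℝ) ^ 3) ∧
    ((∀ v ∈ X, (X.card : ℝ) ^ 3 / 100 ≤ dg E v) → ∃ χ : ℕ → Fin 4, ∀ e ∈ E, Set.InjOn χ (e : Set ℕ)) := by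
  obtain ⟨F, hF, hS, hc⟩ := clean hU hT
  have hn11 : 10 ^ 11 ≤ X.card := le_trans (by norm_num) hn
  have hFc := num_clean X.card E.card F.card (by exact_mod_cast hn) hE (by exact_mod_cast hc)
  obtain ⟨P, p1, _, p3, p4⟩ := boot (hU.mono hF) hn11 hFc (stab hn11 (hU.mono hF) hS hFc) 0
  have h5 : (tup F (P 0) (P 1) (P 2) (P 3) : ℝ) ≤ tup E (P 0) (P 1) (P 2) (P 3) := by
    exact_mod_cast tup_mono hF _ _ _ _
  obtain ⟨q1, ⟨χ, q2⟩, _⟩ := ext_lemma hU hT (le_trans (by norm_num) hn) P p1 p3 (((num_89 _).trans p4).trans h5)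
  refine ⟨q1, fun h => ⟨χ, fun e he => q2 e he (fun v hv => h v ((hU e he).1 hv))⟩⟩

def tn (m : ℕ) : ℕ := (m / 4) * ((m + 1) / 4) * ((m + 2) / 4) * ((m + 3) / 4)

theorem tn_succ (m : ℕ) : tn (m + 1) = tn m + ((m + 1) / 4) * ((m + 2) / 4) * ((m + 3) / 4) := by
  unfold tn
  have h : (m + 1 + 3) / 4 = m / 4 + 1 := by omega
  have h1 : m + 1 + 1 = m + 2 := by omega
  have h2 : m + 1 + 2 = m + 3 := by omega
  rw [h, h1, h2]; ring

def Pr (a b c d : ℕ) : Prop := a * b * c * d ≤ tn (a + b + c + d) ∧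
  (a * b * c * d = tn (a + b + c + d) → 4 ≤ a + b + c + d →
    (a = (a + b + c + d) / 4 ∨ a = (a + b + c + d) / 4 + 1) ∧ (b = (a + b + c + d) / 4 ∨ b = (a + b + c + d) / 4 + 1) ∧
    (c = (a + b + c + d) / 4 ∨ c = (a + b + c + d) / 4 + 1) ∧ (d = (a + b + c + d) / 4 ∨ d = (a + b + c + d) / 4 + 1))

theorem Pr.perm {x y z w a b c d : ℕ} (h : Pr x y z w) (hp : x * y * z * w = a * b * c * d)
    (hs : x + y + z + w = a + b + c + d) (ha : a = x ∨ a = y ∨ a = z ∨ a = w) (hb : b = x ∨ b = y ∨ b = z ∨ b = w)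
    (hc : c = x ∨ c = y ∨ c = z ∨ c = w) (hd : d = x ∨ d = y ∨ d = z ∨ d = w) : Pr a b c d := by
  unfold Pr at h ⊢
  rw [hp, hs] at h
  refine ⟨h.1, fun h1 h2 => ?_⟩
  obtain ⟨q1, q2, q3, q4⟩ := h.2 h1 h2
  generalize (a + b + c + d) / 4 = q at *
  clear h h1 h2 hp hs
  refine ⟨?_, ?_, ?_, ?_⟩
  · rcases ha with h | h | h | h <;> rw [h] <;> assumption
  · rcases hb with h | h | h | h <;> rw [h] <;> assumption
  · rcases hc with h | h | h | h <;> rw [h] <;> assumption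
  · rcases hd with h | h | h | h <;> rw [h] <;> assumption

theorem tn_pos {m : ℕ} (h : 4 ≤ m) : 0 < tn m := by
  unfold tn
  have h1 : 0 < m / 4 := by omega
  have h2 : 0 < (m + 1) / 4 := by omega
  have h3 : 0 < (m + 2) / 4 := by omega
  have h4 : 0 < (m + 3) / 4 := by omega
  positivity

theorem pr_step {a b c d : ℕ} (hd : a + 2 ≤ d) (ih : Pr (a + 1) b c (d - 1)) : Pr a b c d := by
  obtain ⟨d, rfl⟩ : ∃ k, d = k + 1 := ⟨d - 1, by omega⟩
  rw [Nat.add_sub_cancel] at ih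
  obtain ⟨h1, _⟩ := ih
  have hs : a + 1 + b + c + d = a + b + c + (d + 1) := by ring
  rw [hs] at h1
  have h2 : a * b * c * (d + 1) + b * c ≤ (a + 1) * b * c * d := by
    obtain ⟨k, rfl⟩ : ∃ k, d = a + 1 + k := ⟨d - (a + 1), by omega⟩
    have : (a + 1) * b * c * (a + 1 + k) = a * b * c * (a + 1 + k + 1) + b * c + (b * c) * k := by ring
    omega
  refine ⟨by omega, ?_⟩
  intro h3 h4
  exfalso
  have h5 : b * c = 0 := by omega
  have h6 : a * b * c * (d + 1) = 0 := by rw [mul_assoc a b c, h5]; simp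
  have := tn_pos h4
  omega

theorem pr_bal {a b c d q : ℕ} (ha : a = q ∨ a = q + 1) (hb : b = q ∨ b = q + 1) (hc : c = q ∨ c = q + 1)
    (hd : d = q ∨ d = q + 1) (hq : q = (a + b + c + d) / 4) : a * b * c * d = tn (a + b + c + d) := by
  unfold tn
  generalize hs : a + b + c + d = s at *
  rcases ha with rfl | rfl <;> rcases hb with rfl | rfl <;> rcases hc with rfl | rfl <;> rcases hd with rfl | rfl <;>
    first
    | (exfalso; omega)
    | (rw [← hq]
       (first | rw [show (s + 1) / 4 = s / 4 by omega, ← hq] | rw [show (s + 1) / 4 = s / 4 + 1 by omega, ← hq])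
       (first | rw [show (s + 2) / 4 = s / 4 by omega, ← hq] | rw [show (s + 2) / 4 = s / 4 + 1 by omega, ← hq])
       (first | rw [show (s + 3) / 4 = s / 4 by omega, ← hq] | rw [show (s + 3) / 4 = s / 4 + 1 by omega, ← hq])
       try ring)

theorem pr_all (N : ℕ) : ∀ a b c d : ℕ, a ^ 2 + b ^ 2 + c ^ 2 + d ^ 2 ≤ N → Pr a b c d := by
  induction N using Nat.strong_induction_on with
  | _ N ih =>
    intro a b c d hN
    have key : ∀ x y z w : ℕ, x ^ 2 + y ^ 2 + z ^ 2 + w ^ 2 ≤ N → x + 2 ≤ w → Pr x y z w := by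
      intro x y z w h1 h2
      apply pr_step h2
      obtain ⟨w, rfl⟩ : ∃ k, w = k + 1 := ⟨w - 1, by omega⟩
      rw [Nat.add_sub_cancel]
      have h3 : (x + 1) ^ 2 + y ^ 2 + z ^ 2 + w ^ 2 < x ^ 2 + y ^ 2 + z ^ 2 + (w + 1) ^ 2 := by
        have e1 : (x + 1) ^ 2 = x ^ 2 + 2 * x + 1 := by ring
        have e2 : (w + 1) ^ 2 = w ^ 2 + 2 * w + 1 := by ring
        omega
      exact ih _ (lt_of_lt_of_le h3 h1) _ _ _ _ le_rfl
    by_cases h1 : a + 2 ≤ b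
    · exact (key a c d b (by omega) h1).perm (by ring) (by ring) (by simp) (by simp) (by simp) (by simp)
    by_cases h2 : a + 2 ≤ c
    · exact (key a b d c (by omega) h2).perm (by ring) (by ring) (by simp) (by simp) (by simp) (by simp)
    by_cases h3 : a + 2 ≤ d
    · exact (key a b c d (by omega) h3).perm (by ring) (by ring) (by simp) (by simp) (by simp) (by simp)
    by_cases h4 : b + 2 ≤ a
    · exact (key b c d a (by omega) h4).perm (by ring) (by ring) (by simp) (by simp) (by simp) (by simp)
    by_cases h5 : b + 2 ≤ c
    · exact (key b a d c (by omega) h5).perm (by ring) (by ring) (by simp) (by simp) (by simp) (by simp)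
    by_cases h6 : b + 2 ≤ d
    · exact (key b a c d (by omega) h6).perm (by ring) (by ring) (by simp) (by simp) (by simp) (by simp)
    by_cases h7 : c + 2 ≤ a
    · exact (key c b d a (by omega) h7).perm (by ring) (by ring) (by simp) (by simp) (by simp) (by simp)
    by_cases h8 : c + 2 ≤ b
    · exact (key c a d b (by omega) h8).perm (by ring) (by ring) (by simp) (by simp) (by simp) (by simp)
    by_cases h9 : c + 2 ≤ d
    · exact (key c a b d (by omega) h9).perm (by ring) (by ring) (by simp) (by simp) (by simp) (by simp)
    by_cases h10 : d + 2 ≤ a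
    · exact (key d b c a (by omega) h10).perm (by ring) (by ring) (by simp) (by simp) (by simp) (by simp)
    by_cases h11 : d + 2 ≤ b
    · exact (key d a c b (by omega) h11).perm (by ring) (by ring) (by simp) (by simp) (by simp) (by simp)
    by_cases h12 : d + 2 ≤ c
    · exact (key d a b c (by omega) h12).perm (by ring) (by ring) (by simp) (by simp) (by simp) (by simp)
    have b1 : a = (a + b + c + d) / 4 ∨ a = (a + b + c + d) / 4 + 1 := by omega
    have b2 : b = (a + b + c + d) / 4 ∨ b = (a + b + c + d) / 4 + 1 := by omega
    have b3 : c = (a + b + c + d) / 4 ∨ c = (a + b + c + d) / 4 + 1 := by omega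
    have b4 : d = (a + b + c + d) / 4 ∨ d = (a + b + c + d) / 4 + 1 := by omega
    exact ⟨(pr_bal b1 b2 b3 b4 rfl).le, fun _ _ => ⟨b1, b2, b3, b4⟩⟩

theorem pr (a b c d : ℕ) : Pr a b c d := pr_all _ a b c d le_rfl

def Str0 (X : Finset ℕ) (E : Finset (Finset ℕ)) : Prop := ∃ χ : ℕ → Fin 4,
  (∀ i, (X.filter (fun v => χ v = i)).card = X.card / 4 ∨ (X.filter (fun v => χ v = i)).card = X.card / 4 + 1) ∧
  ∀ e : Finset ℕ, e ∈ E ↔ e ⊆ X ∧ e.card = 4 ∧ Set.InjOn χ (e : Set ℕ)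

theorem part_exact {E : Finset (Finset ℕ)} {X : Finset ℕ} (hU : Uni E X) (χ : ℕ → Fin 4)
    (h : ∀ e ∈ E, Set.InjOn χ (e : Set ℕ)) (hX : 4 ≤ X.card) :
    E.card ≤ tn X.card ∧ (E.card = tn X.card → Str0 X E) := by
  classical
  set F := (X.powersetCard 4).filter (fun e : Finset ℕ => Set.InjOn χ (e : Set ℕ)) with hF
  have hFm : ∀ e : Finset ℕ, e ∈ F ↔ e ⊆ X ∧ e.card = 4 ∧ Set.InjOn χ (e : Set ℕ) := by
    intro e; rw [hF, Finset.mem_filter, Finset.mem_powersetCard, and_assoc]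
  have hUF : Uni F X := fun e he => ⟨((hFm e).1 he).1, ((hFm e).1 he).2.1⟩
  have hEF : E ⊆ F := fun e he => (hFm e).2 ⟨(hU e he).1, (hU e he).2, h e he⟩
  have h1 := (part_le_tup hUF X χ (fun e he _ => ((hFm e).1 he).2.2)).trans (tup_le _ _ _ _ _)
  rw [Finset.filter_true_of_mem (fun e he => (hUF e he).1)] at h1
  obtain ⟨p1, p2⟩ := pr (X.filter (fun v => χ v = 0)).card (X.filter (fun v => χ v = 1)).card
    (X.filter (fun v => χ v = 2)).card (X.filter (fun v => χ v = 3)).card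
  rw [part_sum] at p1 p2
  have h2 := Finset.card_le_card hEF
  refine ⟨h2.trans (h1.trans p1), ?_⟩
  intro heq
  obtain ⟨b0, b1, b2, b3⟩ := p2 (by omega) hX
  have hEeq : E = F := Finset.eq_of_subset_of_card_le hEF (by omega)
  refine ⟨χ, ?_, ?_⟩
  · intro i
    fin_cases i
    · exact b0
    · exact b1
    · exact b2
    · exact b3
  · rw [hEeq]; exact hFm

theorem tn_lower (m : ℕ) (hm : 3 ≤ m) : (((m : ℝ) - 3) / 4) ^ 4 ≤ tn m := by
  have h1 : ((m : ℝ) - 3) / 4 ≤ ((m / 4 : ℕ) : ℝ) := by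
    have : m ≤ 4 * (m / 4) + 3 := by omega
    have : (m : ℝ) ≤ 4 * ((m / 4 : ℕ) : ℝ) + 3 := by exact_mod_cast this
    linarith
  have h0 : 0 ≤ ((m : ℝ) - 3) / 4 := by
    have : (3 : ℝ) ≤ m := by exact_mod_cast hm
    linarith
  have h2 : (m / 4) ^ 4 ≤ tn m := by
    unfold tn
    have a1 : m / 4 ≤ (m + 1) / 4 := by omega
    have a2 : m / 4 ≤ (m + 2) / 4 := by omega
    have a3 : m / 4 ≤ (m + 3) / 4 := by omega
    calc (m / 4) ^ 4 = (m / 4) * (m / 4) * (m / 4) * (m / 4) := by ring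
      _ ≤ _ := by gcongr
  have h3 : (((m / 4 : ℕ) : ℝ)) ^ 4 ≤ tn m := by exact_mod_cast h2
  exact (pow_le_pow_left₀ h0 h1 4).trans h3

theorem tn_near (n : ℝ) (hn : (10 : ℝ) ^ 12 ≤ n) : (1 / 256 - 1 / 10 ^ 12) * n ^ 4 ≤ ((n - 3) / 4) ^ 4 := by
  have h0 : 0 < n := lt_of_lt_of_le (by norm_num) hn
  have h1 : n ^ 3 * 10 ^ 12 ≤ n ^ 3 * n := mul_le_mul_of_nonneg_left hn (by positivity)
  have h2 : ((n - 3) / 4) ^ 4 = (n ^ 4 - 12 * n ^ 3 + 54 * n ^ 2 - 108 * n + 81) / 256 := by ring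
  have h3 : n ^ 3 * n = n ^ 4 := by ring
  have h4 : 108 * n ≤ 54 * n ^ 2 := by nlinarith
  have h5 : 0 < n ^ 3 := by positivity
  rw [h2]
  rw [h3] at h1
  norm_num at h1 ⊢
  linarith

theorem tn_diff_big (m d : ℕ) (hm : (10 : ℝ) ^ 12 ≤ ((m + 1 : ℕ) : ℝ)) (hd : (d : ℝ) < ((m + 1 : ℕ) : ℝ) ^ 3 / 100) :
    d + 1 ≤ ((m + 1) / 4) * ((m + 2) / 4) * ((m + 3) / 4) := by
  set q := (m + 1) / 4 with hq
  have h1 : ((m + 1 : ℕ) : ℝ) ≤ 4 * (q : ℝ) + 3 := by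
    have : m + 1 ≤ 4 * q + 3 := by omega
    exact_mod_cast this
  have h2 : q ^ 3 ≤ q * ((m + 2) / 4) * ((m + 3) / 4) := by
    have a1 : q ≤ (m + 2) / 4 := by omega
    have a2 : q ≤ (m + 3) / 4 := by omega
    calc q ^ 3 = q * q * q := by ring
      _ ≤ _ := by gcongr
  have h3 : d < q ^ 3 := by
    have : (d : ℝ) < (q : ℝ) ^ 3 := by
      set n : ℝ := ((m + 1 : ℕ) : ℝ)
      have hq1 : 0.24 * n ≤ q := by
        have : (1000 : ℝ) ≤ n := le_trans (by norm_num) hm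
        linarith
      have hn0 : 0 ≤ n := le_trans (by norm_num) hm
      have h4 : (0.24 * n) ^ 3 ≤ (q : ℝ) ^ 3 := pow_le_pow_left₀ (by positivity) hq1 3
      have h5 : 0 ≤ n ^ 3 := by positivity
      have h6 : (0.24 * n) ^ 3 = 0.013824 * n ^ 3 := by ring
      rw [h6] at h4
      linarith
    exact_mod_cast this
  omega

theorem del_vertex {E : Finset (Finset ℕ)} {X : Finset ℕ} (hU : Uni E X) (v : ℕ) :
    Uni (E.filter (fun e => v ∉ e)) (X.erase v) ∧ E.card = (E.filter (fun e => v ∉ e)).card + dg E v := by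
  constructor
  · intro e he
    obtain ⟨h1, h2⟩ := Finset.mem_filter.1 he
    refine ⟨fun x hx => Finset.mem_erase.2 ⟨?_, (hU e h1).1 hx⟩, (hU e h1).2⟩
    rintro rfl; exact h2 hx
  · have := Finset.card_filter_add_card_filter_not (s := E) (fun e => v ∈ e)
    unfold dg; omega

theorem uni_card_le {E : Finset (Finset ℕ)} {X : Finset ℕ} (hU : Uni E X) : E.card ≤ X.card.choose 4 := by
  rw [← Finset.card_powersetCard]
  exact Finset.card_le_card (fun e he => Finset.mem_powersetCard.2 (hU e he))

theorem turan_step {E : Finset (Finset ℕ)} {X : Finset ℕ} (hU : Uni E X) (hT : T4free E) {m : ℕ}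
    (hm : X.card = m + 1) (hn : 10 ^ 12 ≤ m + 1) (hE : tn (m + 1) ≤ E.card) :
    (E.card = tn (m + 1) ∧ Str0 X E) ∨ ∃ v ∈ X, dg E v + 1 ≤ ((m + 1) / 4) * ((m + 2) / 4) * ((m + 3) / 4) := by
  have hnR : (10 : ℝ) ^ 12 ≤ ((m + 1 : ℕ) : ℝ) := by exact_mod_cast hn
  have h1 : (1 / 256 - 5 / 10 ^ 12) * (X.card : ℝ) ^ 4 ≤ E.card := by
    rw [hm]
    have h2 := tn_lower (m + 1) (le_trans (by norm_num) hn)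
    have h3 := tn_near _ hnR
    have h4 : (tn (m + 1) : ℝ) ≤ E.card := by exact_mod_cast hE
    have h5 : (1 / 256 - 5 / 10 ^ 12) * ((m + 1 : ℕ) : ℝ) ^ 4 ≤ (1 / 256 - 1 / 10 ^ 12) * ((m + 1 : ℕ) : ℝ) ^ 4 :=
      mul_le_mul_of_nonneg_right (by norm_num) (by positivity)
    exact h5.trans (h3.trans (h2.trans h4))
  obtain ⟨_, h2⟩ := t4stab hU hT (by rw [hm]; exact hn) h1
  by_cases hall : ∀ v ∈ X, (X.card : ℝ) ^ 3 / 100 ≤ dg E v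
  · obtain ⟨χ, hχ⟩ := h2 hall
    left
    obtain ⟨p1, p2⟩ := part_exact hU χ hχ (by rw [hm]; exact le_trans (by norm_num) hn)
    rw [hm] at p1 p2
    exact ⟨le_antisymm p1 hE, p2 (le_antisymm p1 hE)⟩
  · right
    push Not at hall
    obtain ⟨v, hv, hd⟩ := hall
    rw [hm] at hd
    exact ⟨v, hv, tn_diff_big m _ hnR hd⟩

theorem turan_upper (N : ℕ) (hN : 10 ^ 12 ≤ N) : ∀ j : ℕ, ∀ X : Finset ℕ, ∀ E : Finset (Finset ℕ), X.card = N + j →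
    Uni E X → T4free E → E.card ≤ tn (N + j) + (N.choose 4 - j) := by
  intro j
  induction j with
  | zero =>
    intro X E hX hU _
    have := uni_card_le hU
    rw [hX] at this
    simp only [add_zero] at this ⊢
    omega
  | succ j ih =>
    intro X E hX hU hT
    by_cases hE : tn (N + j + 1) ≤ E.card
    · rcases turan_step hU hT (m := N + j) hX (by omega) hE with ⟨h, _⟩ | ⟨v, hv, hd⟩
      · rw [← add_assoc]; omega
      · obtain ⟨h1, h2⟩ := del_vertex hU v
        have h3 := ih (X.erase v) _ (by rw [Finset.card_erase_of_mem hv, hX]; omega) h1 (hT.mono (Finset.filter_subset _ _))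
        have h4 := tn_succ (N + j)
        rw [← add_assoc]
        omega
    · rw [← add_assoc]; omega

theorem turan_exact : ∃ M0 : ℕ, 10 ^ 12 ≤ M0 ∧ ∀ X : Finset ℕ, ∀ E : Finset (Finset ℕ), Uni E X → T4free E →
    M0 ≤ X.card → E.card ≤ tn X.card ∧ (E.card = tn X.card → Str0 X E) := by
  obtain ⟨N, hN⟩ : ∃ N : ℕ, 10 ^ 12 ≤ N := ⟨_, le_rfl⟩
  refine ⟨N + N.choose 4 + 1, by omega, ?_⟩
  intro X E hU hT hX
  obtain ⟨j, hj⟩ : ∃ j, X.card = N + j + 1 := ⟨X.card - N - 1, by omega⟩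
  have h1 := turan_upper N hN (j + 1) X E hj hU hT
  rw [← add_assoc] at h1
  rw [hj]
  refine ⟨by omega, ?_⟩
  intro heq
  rcases turan_step hU hT hj (by omega) heq.ge with ⟨_, h⟩ | ⟨v, hv, hd⟩
  · exact h
  · exfalso
    obtain ⟨h3, h4⟩ := del_vertex hU v
    have h5 := turan_upper N hN j (X.erase v) _ (by rw [Finset.card_erase_of_mem hv, hj]; omega) h3 (hT.mono (Finset.filter_subset _ _))
    have h6 := tn_succ (N + j)
    omega

def HasT (E : Finset (Finset ℕ)) (S : Finset ℕ) : Prop := ∃ (S0 : Finset ℕ) (x y : ℕ) (C : Finset ℕ),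
  insert x S0 ∈ E ∧ insert y S0 ∈ E ∧ C ∈ E ∧ x ≠ y ∧ x ∈ C ∧ y ∈ C ∧ Disjoint S0 C ∧ S0 ⊆ S ∧ C ⊆ S

def Mat (E : Finset (Finset ℕ)) (X : Finset ℕ) (k : ℕ) : Prop := ∃ S : Fin k → Finset ℕ,
  (∀ i, S i ⊆ X ∧ (S i).card = 7) ∧ (∀ i j, i ≠ j → Disjoint (S i) (S j)) ∧ ∀ i, HasT E (S i)

theorem HasT.mono {E F : Finset (Finset ℕ)} {S : Finset ℕ} (h : F ⊆ E) (hS : HasT F S) : HasT E S := by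
  obtain ⟨S0, x, y, C, h1, h2, h3, h4⟩ := hS
  exact ⟨S0, x, y, C, h h1, h h2, h h3, h4⟩

def Str (X : Finset ℕ) (E : Finset (Finset ℕ)) (t : ℕ) : Prop := ∃ K ⊆ X, K.card = t ∧ ∃ χ : ℕ → Fin 4,
  (∀ i, ((X \ K).filter (fun v => χ v = i)).card = (X \ K).card / 4 ∨
    ((X \ K).filter (fun v => χ v = i)).card = (X \ K).card / 4 + 1) ∧
  ∀ e : Finset ℕ, e ∈ E ↔ e ⊆ X ∧ e.card = 4 ∧ ((∃ v ∈ e, v ∈ K) ∨ Set.InjOn χ (e : Set ℕ))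

theorem hasT_of_not_free {E : Finset (Finset ℕ)} {X : Finset ℕ} (hU : Uni E X) (h : ¬ T4free E) :
    ∃ S ⊆ X, S.card = 7 ∧ HasT E S := by
  unfold T4free at h
  push Not at h
  obtain ⟨S, x, y, C, h1, h2, h3, h4, h5, h6, h7, _⟩ := h
  have hx : x ∉ S := fun hx => Finset.disjoint_left.1 h7 hx h5
  refine ⟨S ∪ C, ?_, ?_, S, x, y, C, h1, h2, h3, h4, h5, h6, h7, Finset.subset_union_left, Finset.subset_union_right⟩
  · exact Finset.union_subset ((Finset.subset_insert _ _).trans (hU _ h1).1) (hU _ h3).1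
  · rw [Finset.card_union_of_disjoint h7, (hU _ h3).2]
    have := (hU _ h1).2
    rw [Finset.card_insert_of_notMem hx] at this
    omega

theorem mat_cons {E : Finset (Finset ℕ)} {X : Finset ℕ} {k : ℕ} {S : Fin k → Finset ℕ}
    (h1 : ∀ i, S i ⊆ X ∧ (S i).card = 7) (h2 : ∀ i j, i ≠ j → Disjoint (S i) (S j)) (h3 : ∀ i, HasT E (S i))
    {A : Finset ℕ} (a1 : A ⊆ X) (a2 : A.card = 7) (a3 : HasT E A) (a4 : ∀ i, Disjoint A (S i)) : Mat E X (k + 1) := by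
  refine ⟨Fin.cons A S, ?_, ?_, ?_⟩
  · intro i
    refine Fin.cases ?_ (fun i => ?_) i
    · exact ⟨a1, a2⟩
    · exact h1 i
  · intro i j
    refine Fin.cases ?_ (fun i => ?_) i <;> refine Fin.cases ?_ (fun j => ?_) j
    · intro h; exact absurd rfl h
    · intro _; exact a4 j
    · intro _; exact (a4 i).symm
    · intro h; exact h2 i j (fun hij => h (by rw [hij]))
  · intro i
    refine Fin.cases ?_ (fun i => ?_) i
    · exact a3
    · exact h3 i

theorem pascal4 (k : ℕ) : (k + 1).choose 4 = k.choose 3 + k.choose 4 := Nat.choose_succ_succ k 3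

theorem choose_add_lower (m t : ℕ) : m.choose 4 + t * m.choose 3 ≤ (m + t).choose 4 := by
  induction t with
  | zero => simp
  | succ t ih =>
    rw [← add_assoc, pascal4]
    have : m.choose 3 ≤ (m + t).choose 3 := Nat.choose_le_choose 3 (by omega)
    have h2 : (t + 1) * m.choose 3 = t * m.choose 3 + m.choose 3 := by ring
    omega

theorem choose3_lower (m : ℕ) (hm : (10 : ℝ) ^ 12 ≤ m) : 0.16 * (m : ℝ) ^ 3 ≤ (m.choose 3 : ℝ) := by
  have h2 : 2 ≤ m := by
    have : (2 : ℝ) ≤ m := le_trans (by norm_num) hm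
    exact_mod_cast this
  obtain ⟨k, rfl⟩ : ∃ k, m = k + 2 := ⟨m - 2, by omega⟩
  have h := Nat.descFactorial_eq_factorial_mul_choose (k + 2) 3
  have h1 : (k + 2).descFactorial 3 = k * ((k + 1) * (k + 2)) := by
    simp [Nat.descFactorial]
  have h3 : Nat.factorial 3 = 6 := rfl
  rw [h1, h3] at h
  have h4 : (k : ℝ) * ((k + 1) * (k + 2)) = 6 * ((k + 2).choose 3 : ℝ) := by exact_mod_cast h
  push_cast at hm ⊢
  set x : ℝ := (k : ℝ) + 2
  have hk : (k : ℝ) = x - 2 := by simp [x]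
  rw [hk] at h4
  have h5 : (x - 2) * ((x - 2 + 1) * x) = x ^ 3 - 3 * x ^ 2 + 2 * x := by ring
  rw [h5] at h4
  have h6 : 3 * x ^ 2 ≤ 0.01 * x ^ 3 := by
    have : (1000 : ℝ) ≤ x := le_trans (by norm_num) hm
    nlinarith [sq_nonneg x]
  have h7 : 0 ≤ x := le_trans (by norm_num) hm
  have h8 : 0 ≤ x ^ 3 := by positivity
  linarith

theorem star_full (X : Finset ℕ) (v : ℕ) (hv : v ∈ X) :
    ((X.powersetCard 4).filter (fun e => v ∈ e)).card = (X.card - 1).choose 3 := by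
  have hU : Uni (X.powersetCard 4) X := fun e he => Finset.mem_powersetCard.1 he
  obtain ⟨_, h2⟩ := del_vertex hU v
  have h3 : (X.powersetCard 4).filter (fun e => v ∉ e) = (X.erase v).powersetCard 4 := by
    ext e
    rw [Finset.mem_filter, Finset.mem_powersetCard, Finset.mem_powersetCard, Finset.subset_erase]
    tauto
  rw [h3, Finset.card_powersetCard, Finset.card_powersetCard, Finset.card_erase_of_mem hv] at h2
  have hpos := Finset.card_pos.2 ⟨v, hv⟩
  obtain ⟨k, hk⟩ : ∃ k, X.card = k + 1 := ⟨X.card - 1, by omega⟩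
  rw [hk, pascal4] at h2
  rw [hk]
  unfold dg at h2
  rw [Nat.add_sub_cancel] at h2 ⊢
  omega

theorem num_main1 (m t n m' tnm e eb : ℝ) (hm : (10 : ℝ) ^ 13 ≤ m) (ht : 10 ^ 13 * t ≤ m) (ht0 : 0 ≤ t)
    (hn : n = m + t) (hm' : m' = m - 6 * t) (h1 : ((m - 3) / 4) ^ 4 ≤ tnm) (h2 : tnm ≤ e)
    (h3 : e ≤ eb + 7 * t * n ^ 3) : (1 / 256 - 5 / 10 ^ 12) * m' ^ 4 ≤ eb := by
  have hm0 : 0 < m := lt_of_lt_of_le (by norm_num) hm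
  have h4 := tn_near m (le_trans (by norm_num) hm)
  have h5 : m' ^ 4 ≤ m ^ 4 := by
    apply pow_le_pow_left₀
    · rw [hm']; linarith
    · rw [hm']; linarith
  have h6 : n ^ 3 ≤ (1.1 * m) ^ 3 := by
    apply pow_le_pow_left₀
    · rw [hn]; linarith
    · rw [hn]; linarith
  have h7 : 7 * t * n ^ 3 ≤ 7 * (m / 10 ^ 13) * (1.1 * m) ^ 3 := by
    apply mul_le_mul
    · have : t ≤ m / 10 ^ 13 := by rw [le_div_iff₀ (by norm_num)]; linarith
      linarith
    · exact h6
    · rw [hn]; positivity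
    · positivity
  have h8 : 7 * (m / 10 ^ 13) * (1.1 * m) ^ 3 = 7 * 1.331 / 10 ^ 13 * m ^ 4 := by ring
  have h9 : (1 / 256 - 5 / 10 ^ 12) * m' ^ 4 ≤ (1 / 256 - 5 / 10 ^ 12) * m ^ 4 :=
    mul_le_mul_of_nonneg_left h5 (by norm_num)
  have h10 : 0 < m ^ 4 := by positivity
  refine h9.trans ?_
  rw [h8] at h7
  norm_num at h4 h7 ⊢
  linarith

theorem num_main2 (m t n m' d db : ℝ) (hm : (10 : ℝ) ^ 13 ≤ m) (ht : 10 ^ 13 * t ≤ m) (ht0 : 0 ≤ t)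
    (hn : n = m + t) (hm' : m' = m - 6 * t) (h1 : db ≤ 0.02 * m' ^ 3) (h2 : d ≤ db + 7 * t * n ^ 2) :
    d ≤ 0.021 * m ^ 3 := by
  have hm0 : 0 < m := lt_of_lt_of_le (by norm_num) hm
  have h5 : m' ^ 3 ≤ m ^ 3 := by
    apply pow_le_pow_left₀
    · rw [hm']; linarith
    · rw [hm']; linarith
  have h6 : n ^ 2 ≤ (1.1 * m) ^ 2 := by
    apply pow_le_pow_left₀
    · rw [hn]; linarith
    · rw [hn]; linarith
  have h7 : 7 * t * n ^ 2 ≤ 7 * (m / 10 ^ 13) * (1.1 * m) ^ 2 := by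
    apply mul_le_mul
    · have : t ≤ m / 10 ^ 13 := by rw [le_div_iff₀ (by norm_num)]; linarith
      linarith
    · exact h6
    · rw [hn]; positivity
    · positivity
  have h8 : 7 * (m / 10 ^ 13) * (1.1 * m) ^ 2 = 7 * 1.21 / 10 ^ 13 * m ^ 3 := by ring
  have h10 : 0 < m ^ 3 := by positivity
  rw [h8] at h7
  norm_num at h1 h7 ⊢
  linarith

theorem num_main3 (m t A B c3 tnm tnm' e eb : ℝ) (hm : (10 : ℝ) ^ 13 ≤ m) (ht0 : 1 ≤ t)
    (h1 : A + t * c3 ≤ B) (h2 : 0.16 * m ^ 3 ≤ c3) (h3 : B + tnm ≤ e + A) (h4 : e ≤ eb + 7 * t * (0.021 * m ^ 3))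
    (h5 : eb ≤ tnm') (h6 : tnm' ≤ tnm) : False := by
  have hm0 : 0 < m := lt_of_lt_of_le (by norm_num) hm
  have h7 : t * (0.16 * m ^ 3) ≤ t * c3 := mul_le_mul_of_nonneg_left h2 (by linarith)
  have h8 : 0 < t * m ^ 3 := by positivity
  nlinarith

theorem tn_mono {a b : ℕ} (h : a ≤ b) : tn a ≤ tn b := by
  unfold tn; gcongr

theorem getB {E : Finset (Finset ℕ)} {X : Finset ℕ} (hU : Uni E X) {t v : ℕ} (hno : ¬ Mat E X (t + 1))
    (h : Mat (E.filter (fun e => v ∉ e)) (X.erase v) t) :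
    ∃ B ⊆ X, v ∉ B ∧ B.card = 7 * t ∧ T4free (E.filter (fun e => e ⊆ X \ B)) := by
  obtain ⟨S, h1, h2, h3⟩ := h
  have hsubB : ∀ i, S i ⊆ Finset.univ.biUnion S := fun i => Finset.subset_biUnion_of_mem S (Finset.mem_univ i)
  refine ⟨Finset.univ.biUnion S, ?_, ?_, ?_, ?_⟩
  · exact Finset.biUnion_subset.2 (fun i _ => (h1 i).1.trans (Finset.erase_subset _ _))
  · intro hv
    obtain ⟨i, _, hi⟩ := Finset.mem_biUnion.1 hv
    exact (Finset.mem_erase.1 ((h1 i).1 hi)).1 rfl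
  · rw [Finset.card_biUnion (fun i _ j _ hij => h2 i j hij), Finset.sum_congr rfl (fun i _ => (h1 i).2)]
    simp [mul_comm]
  · by_contra hT
    have hU' : Uni (E.filter (fun e => e ⊆ X \ Finset.univ.biUnion S)) (X \ Finset.univ.biUnion S) := by
      intro e he
      obtain ⟨q1, q2⟩ := Finset.mem_filter.1 he
      exact ⟨q2, (hU e q1).2⟩
    obtain ⟨A, a1, a2, a3⟩ := hasT_of_not_free hU' hT
    apply hno
    refine mat_cons (S := S) (fun i => ⟨(h1 i).1.trans (Finset.erase_subset _ _), (h1 i).2⟩) h2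
      (fun i => (h3 i).mono (Finset.filter_subset _ _)) (a1.trans Finset.sdiff_subset) a2
      (a3.mono (Finset.filter_subset _ _)) ?_
    intro i
    rw [Finset.disjoint_left]
    intro x hx hxi
    exact (Finset.mem_sdiff.1 (a1 hx)).2 (hsubB i hxi)

theorem dg_split {E : Finset (Finset ℕ)} {X : Finset ℕ} (hU : Uni E X) (B : Finset ℕ) {v : ℕ} (hv : v ∉ B) :
    dg E v ≤ dg (E.filter (fun e => e ⊆ X \ B)) v + B.card * X.card ^ 2 := by
  refine le_trans ?_ (Nat.add_le_add_left (bad_edges hU B v) _)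
  unfold dg
  refine le_trans (Finset.card_le_card ?_) (Finset.card_union_le _ _)
  intro e he
  obtain ⟨h1, h2⟩ := Finset.mem_filter.1 he
  by_cases h : e ⊆ X \ B
  · exact Finset.mem_union_left _ (Finset.mem_filter.2 ⟨Finset.mem_filter.2 ⟨h1, h⟩, h2⟩)
  · apply Finset.mem_union_right
    rw [Finset.not_subset] at h
    obtain ⟨w, hw, hwB⟩ := h
    have hwB' : w ∈ B := by
      by_contra hh
      exact hwB (Finset.mem_sdiff.2 ⟨(hU e h1).1 hw, hh⟩)
    refine Finset.mem_filter.2 ⟨h1, h2, w, hwB', ?_, hw⟩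
    rintro rfl; exact hv hwB'

theorem step_b {M0 : ℕ} (hM : ∀ X : Finset ℕ, ∀ E : Finset (Finset ℕ), Uni E X → T4free E →
    M0 ≤ X.card → E.card ≤ tn X.card ∧ (E.card = tn X.card → Str0 X E))
    {E : Finset (Finset ℕ)} {X : Finset ℕ} (hU : Uni E X) {m t : ℕ} (ht : 1 ≤ t) (hX : X.card = m + t)
    (hm : 10 ^ 13 ≤ m) (hmM : 2 * M0 ≤ m) (htm : 10 ^ 13 * t ≤ m) (hno : ¬ Mat E X (t + 1))
    (hall : ∀ v ∈ X, Mat (E.filter (fun e => v ∉ e)) (X.erase v) t)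
    (hbig : (m + t).choose 4 + tn m ≤ E.card + m.choose 4) : False := by
  have hmR : (10 : ℝ) ^ 13 ≤ m := by exact_mod_cast hm
  have htR : (10 : ℝ) ^ 13 * t ≤ m := by exact_mod_cast htm
  have ht0 : (1 : ℝ) ≤ t := by exact_mod_cast ht
  have hnR : (X.card : ℝ) = m + t := by rw [hX]; push_cast; rfl
  have h6t : 6 * t ≤ m := by omega
  have htnE : tn m ≤ E.card := by
    have := Nat.choose_le_choose 4 (show m ≤ m + t by omega)
    omega
  have hBcard : ∀ B ⊆ X, B.card = 7 * t → (X \ B).card = m - 6 * t := by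
    intro B hB hBc
    rw [Finset.card_sdiff_of_subset hB, hX, hBc]; omega
  have hcast : ((m - 6 * t : ℕ) : ℝ) = m - 6 * t := by
    rw [Nat.cast_sub h6t]; push_cast; rfl
  have hUB : ∀ B, Uni (E.filter (fun e => e ⊆ X \ B)) (X \ B) := by
    intro B e he
    obtain ⟨q1, q2⟩ := Finset.mem_filter.1 he
    exact ⟨q2, (hU e q1).2⟩
  have hdeg : ∀ v ∈ X, (dg E v : ℝ) ≤ 0.021 * (m : ℝ) ^ 3 := by
    intro v hv
    obtain ⟨B, hBX, hvB, hBc, hfree⟩ := getB hU hno (hall v hv)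
    have hc := hBcard B hBX hBc
    have h1 := card_remove hU B
    have h2 : ∑ v ∈ B, dg E v ≤ B.card * X.card ^ 3 := by
      rw [← smul_eq_mul]
      exact Finset.sum_le_card_nsmul _ _ _ (fun v _ => dg_le hU v)
    have h3 : (E.card : ℝ) ≤ (E.filter (fun e => e ⊆ X \ B)).card + 7 * (t : ℝ) * (X.card : ℝ) ^ 3 := by
      have h4 : E.card ≤ (E.filter (fun e => e ⊆ X \ B)).card + 7 * t * X.card ^ 3 := by
        rw [hBc] at h2; omega
      exact_mod_cast h4
    have h4 := num_main1 m t X.card ((X \ B).card : ℝ) (tn m) E.card (E.filter (fun e => e ⊆ X \ B)).card hmR htR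
      (by linarith) hnR (by rw [hc, hcast]) (tn_lower m (le_trans (by norm_num) hm)) (by exact_mod_cast htnE) h3
    obtain ⟨h5, _⟩ := t4stab (hUB B) hfree (by rw [hc]; omega) h4
    have h6 := dg_split hU B hvB
    rw [hBc] at h6
    exact num_main2 m t X.card ((X \ B).card : ℝ) (dg E v) _ hmR htR (by linarith) hnR (by rw [hc, hcast]) (h5 v)
      (by exact_mod_cast h6)
  have hXne : X.Nonempty := Finset.card_pos.1 (by omega)
  obtain ⟨v, hv⟩ := hXne
  obtain ⟨B, hBX, hvB, hBc, hfree⟩ := getB hU hno (hall v hv)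
  have hc := hBcard B hBX hBc
  have h1 := card_remove hU B
  have h2 : ∑ v ∈ B, (dg E v : ℝ) ≤ 7 * (t : ℝ) * (0.021 * (m : ℝ) ^ 3) := by
    have := Finset.sum_le_card_nsmul B (fun v => (dg E v : ℝ)) _ (fun v hv => hdeg v (hBX hv))
    rw [nsmul_eq_mul, hBc] at this
    push_cast at this
    exact this
  have h3 : (E.card : ℝ) ≤ (E.filter (fun e => e ⊆ X \ B)).card + ∑ v ∈ B, (dg E v : ℝ) := by exact_mod_cast h1
  obtain ⟨h4, _⟩ := hM _ _ (hUB B) hfree (by rw [hc]; omega)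
  rw [hc] at h4
  refine num_main3 m t (m.choose 4) ((m + t).choose 4) (m.choose 3) (tn m) (tn (m - 6 * t)) E.card
    (E.filter (fun e => e ⊆ X \ B)).card hmR ht0 ?_ (choose3_lower m (le_trans (by norm_num) hmR)) ?_ ?_ ?_ ?_
  · exact_mod_cast choose_add_lower m t
  · exact_mod_cast hbig
  · linarith
  · exact_mod_cast h4
  · exact_mod_cast tn_mono (show m - 6 * t ≤ m by omega)

theorem main_ind {M0 : ℕ} (hM : ∀ X : Finset ℕ, ∀ E : Finset (Finset ℕ), Uni E X → T4free E →
    M0 ≤ X.card → E.card ≤ tn X.card ∧ (E.card = tn X.card → Str0 X E)) {m : ℕ}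
    (hm : 10 ^ 13 ≤ m) (hmM : 2 * M0 ≤ m) : ∀ t : ℕ, 10 ^ 13 * t ≤ m → ∀ X : Finset ℕ, ∀ E : Finset (Finset ℕ),
    Uni E X → X.card = m + t → ¬ Mat E X (t + 1) →
    E.card + m.choose 4 ≤ (m + t).choose 4 + tn m ∧
    (E.card + m.choose 4 = (m + t).choose 4 + tn m → Str X E t) := by
  intro t
  induction t with
  | zero =>
    intro _ X E hU hX hno
    have hfree : T4free E := by
      by_contra h
      obtain ⟨A, a1, a2, a3⟩ := hasT_of_not_free hU h
      exact hno (mat_cons (S := Fin.elim0) (fun i => i.elim0) (fun i => i.elim0) (fun i => i.elim0) a1 a2 a3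
        (fun i => i.elim0))
    rw [add_zero] at hX ⊢
    obtain ⟨h1, h2⟩ := hM X E hU hfree (by omega)
    rw [hX] at h1 h2
    refine ⟨by omega, fun h => ?_⟩
    obtain ⟨χ, c1, c2⟩ := h2 (by omega)
    refine ⟨∅, by simp, by simp, χ, ?_, ?_⟩
    · intro i
      rw [Finset.sdiff_empty]
      exact c1 i
    · intro e
      rw [c2]
      simp
  | succ t ih =>
    intro htm X E hU hX hno
    by_cases hbig : (m + (t + 1)).choose 4 + tn m ≤ E.card + m.choose 4
    swap
    · exact ⟨by omega, fun h => by omega⟩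
    by_cases hall : ∀ v ∈ X, Mat (E.filter (fun e => v ∉ e)) (X.erase v) (t + 1)
    · exact (step_b hM hU (by omega) hX hm hmM htm hno hall hbig).elim
    push Not at hall
    obtain ⟨v, hv, hnov⟩ := hall
    obtain ⟨hU', hcard⟩ := del_vertex hU v
    have hXe : (X.erase v).card = m + t := by rw [Finset.card_erase_of_mem hv, hX]; omega
    obtain ⟨i1, i2⟩ := ih (by omega) (X.erase v) _ hU' hXe hnov
    have hsub : E.filter (fun e => v ∈ e) ⊆ (X.powersetCard 4).filter (fun e => v ∈ e) := by
      intro e he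
      obtain ⟨q1, q2⟩ := Finset.mem_filter.1 he
      exact Finset.mem_filter.2 ⟨Finset.mem_powersetCard.2 (hU e q1), q2⟩
    have hd := Finset.card_le_card hsub
    have hfull := star_full X v hv
    rw [hX, show m + (t + 1) - 1 = m + t by omega] at hfull
    have hp := pascal4 (m + t)
    rw [← add_assoc] at hbig ⊢
    have hdg : dg E v = (E.filter (fun e => v ∈ e)).card := rfl
    refine ⟨by omega, fun heq => ?_⟩
    obtain ⟨K, hKX, hKc, χ, c1, c2⟩ := i2 (by omega)
    have hall : E.filter (fun e => v ∈ e) = (X.powersetCard 4).filter (fun e => v ∈ e) :=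
      Finset.eq_of_subset_of_card_le hsub (by omega)
    have hvK : v ∉ K := fun h => (Finset.mem_erase.1 (hKX h)).1 rfl
    have hsd : X \ insert v K = X.erase v \ K := by
      ext x; simp only [Finset.mem_sdiff, Finset.mem_insert, Finset.mem_erase]; tauto
    refine ⟨insert v K, ?_, ?_, χ, ?_, ?_⟩
    · exact Finset.insert_subset hv (hKX.trans (Finset.erase_subset _ _))
    · rw [Finset.card_insert_of_notMem hvK, hKc]
    · rw [hsd]; exact c1
    · intro e
      by_cases hve : v ∈ e
      · have h1 : e ∈ E ↔ e ∈ E.filter (fun e => v ∈ e) := by simp [hve]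
        rw [h1, hall, Finset.mem_filter, Finset.mem_powersetCard]
        constructor
        · rintro ⟨⟨q1, q2⟩, _⟩
          exact ⟨q1, q2, Or.inl ⟨v, hve, Finset.mem_insert_self _ _⟩⟩
        · rintro ⟨q1, q2, _⟩
          exact ⟨⟨q1, q2⟩, hve⟩
      · have h1 : e ∈ E ↔ e ∈ E.filter (fun e => v ∉ e) := by simp [hve]
        rw [h1, c2, Finset.subset_erase]
        constructor
        · rintro ⟨⟨q1, _⟩, q2, q3⟩
          refine ⟨q1, q2, ?_⟩
          rcases q3 with ⟨w, w1, w2⟩ | q3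
          · exact Or.inl ⟨w, w1, Finset.mem_insert_of_mem w2⟩
          · exact Or.inr q3
        · rintro ⟨q1, q2, q3⟩
          refine ⟨⟨q1, hve⟩, q2, ?_⟩
          rcases q3 with ⟨w, w1, w2⟩ | q3
          · rcases Finset.mem_insert.1 w2 with rfl | w2
            · exact absurd w1 hve
            · exact Or.inl ⟨w, w1, w2⟩
          · exact Or.inr q3

theorem mem_induce (H : HGraph 4) (S e : Finset ℕ) : e ∈ (H.induce S).edges ↔ e ∈ H.edges ∧ e ⊆ S := by
  unfold HGraph.induce HGraph.ofEdges
  simp only [Finset.mem_filter]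
  constructor
  · rintro ⟨h, _⟩; exact h
  · rintro ⟨h1, h2⟩
    exact ⟨⟨h1, h2⟩, Finset.subset_inter (H.edges_sub e h1) h2, H.edges_card e h1⟩

theorem tri_edges : (genTri 4).edges = {{1, 2, 3, 4}, {1, 2, 3, 5}, {4, 5, 6, 7}} := by decide

theorem tri_verts : (genTri 4).verts = {1, 2, 3, 4, 5, 6, 7} := by decide

theorem copy_iff (H : HGraph 4) (S : Finset ℕ) (hS : S ⊆ H.verts) :
    (genTri 4).IsCopyIn (H.induce S) ↔ HasT H.edges S := by
  unfold HGraph.IsCopyIn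
  rw [tri_edges, tri_verts]
  have hV : (H.induce S).verts = H.verts ∩ S := rfl
  constructor
  · rintro ⟨f, h1, h2, h3⟩
    have e1 := h3 {1, 2, 3, 4} (by simp)
    have e2 := h3 {1, 2, 3, 5} (by simp)
    have e3 := h3 {4, 5, 6, 7} (by simp)
    rw [mem_induce] at e1 e2 e3
    refine ⟨({1, 2, 3} : Finset ℕ).image f, f 4, f 5, ({4, 5, 6, 7} : Finset ℕ).image f, ?_, ?_, e3.1, ?_, ?_, ?_, ?_, ?_, e3.2⟩
    · rw [← Finset.image_insert]; exact (by decide : ({1, 2, 3, 4} : Finset ℕ) = insert 4 {1, 2, 3}) ▸ e1.1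
    · rw [← Finset.image_insert]; exact (by decide : ({1, 2, 3, 5} : Finset ℕ) = insert 5 {1, 2, 3}) ▸ e2.1
    · intro h
      have := h1 (by simp) (by simp) h
      omega
    · exact Finset.mem_image_of_mem _ (by simp)
    · exact Finset.mem_image_of_mem _ (by simp)
    · rw [Finset.disjoint_left]
      intro z hz hz'
      obtain ⟨a, ha, rfl⟩ := Finset.mem_image.1 hz
      obtain ⟨b, hb, hab⟩ := Finset.mem_image.1 hz'
      have := h1 (by simp at hb ⊢; omega) (by simp at ha ⊢; omega) hab
      simp at ha hb; omega
    · exact (Finset.image_subset_image (by decide)).trans e1.2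
  · rintro ⟨S0, x, y, C, h1, h2, h3, h4, h5, h6, h7, h8, h9⟩
    have hx0 : x ∉ S0 := fun h => Finset.disjoint_left.1 h7 h h5
    have hy0 : y ∉ S0 := fun h => Finset.disjoint_left.1 h7 h h6
    have hc0 : S0.card = 3 := by
      have := H.edges_card _ h1
      rw [Finset.card_insert_of_notMem hx0] at this; omega
    have hC := H.edges_card _ h3
    obtain ⟨a, b, c, hab, hac, hbc, rfl⟩ := Finset.card_eq_three.1 hc0
    have hC2 : ((C.erase x).erase y).card = 2 := by
      rw [Finset.card_erase_of_mem (Finset.mem_erase.2 ⟨h4.symm, h6⟩), Finset.card_erase_of_mem h5, hC]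
    obtain ⟨z, w, hzw, hZ⟩ := Finset.card_eq_two.1 hC2
    have hCe : C = {x, y, z, w} := by
      rw [← hZ, Finset.insert_erase (Finset.mem_erase.2 ⟨h4.symm, h6⟩), Finset.insert_erase h5]
    have hzm : z ∈ (C.erase x).erase y := by rw [hZ]; simp
    have hwm : w ∈ (C.erase x).erase y := by rw [hZ]; simp
    simp only [Finset.mem_erase] at hzm hwm
    have hd : ∀ u ∈ C, u ≠ a ∧ u ≠ b ∧ u ≠ c := by
      intro u hu
      have := Finset.disjoint_right.1 h7 hu
      simpa using this
    obtain ⟨dx1, dx2, dx3⟩ := hd x h5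
    obtain ⟨dy1, dy2, dy3⟩ := hd y h6
    obtain ⟨dz1, dz2, dz3⟩ := hd z hzm.2.2
    obtain ⟨dw1, dw2, dw3⟩ := hd w hwm.2.2
    obtain ⟨z1, z2, z3⟩ := hzm
    obtain ⟨w1, w2, w3⟩ := hwm
    have sa : a ∈ S := h8 (by simp)
    have sb : b ∈ S := h8 (by simp)
    have sc : c ∈ S := h8 (by simp)
    have sx := h9 h5
    have sy := h9 h6
    have sz := h9 z3
    have sw := h9 w3
    obtain ⟨f, f1, f2, f3, f4, f5, f6, f7⟩ : ∃ f : ℕ → ℕ, f 1 = a ∧ f 2 = b ∧ f 3 = c ∧ f 4 = x ∧ f 5 = y ∧ f 6 = z ∧ f 7 = w := by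
      refine ⟨fun k => if k = 1 then a else if k = 2 then b else if k = 3 then c else if k = 4 then x else
        if k = 5 then y else if k = 6 then z else w, ?_⟩
      simp
    refine ⟨f, ?_, ?_, ?_⟩
    · rw [← Finset.card_image_iff]
      have him : ({1, 2, 3, 4, 5, 6, 7} : Finset ℕ).image f = {a, b, c} ∪ C := by
        rw [hCe]
        simp only [Finset.image_insert, Finset.image_singleton, f1, f2, f3, f4, f5, f6, f7, Finset.insert_union,
          Finset.singleton_union]
      rw [him, Finset.card_union_of_disjoint h7, hc0, hC]
      rfl
    · rw [hV, Finset.inter_eq_right.2 hS]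
      simp [f1, f2, f3, f4, f5, f6, f7, sa, sb, sc, sx, sy, sz, sw]
    · intro e he
      rw [mem_induce]
      simp only [Finset.mem_insert, Finset.mem_singleton] at he
      rcases he with rfl | rfl | rfl
      · have : ({1, 2, 3, 4} : Finset ℕ).image f = insert x {a, b, c} := by
          rw [(by decide : ({1, 2, 3, 4} : Finset ℕ) = insert 4 {1, 2, 3})]
          simp only [Finset.image_insert, Finset.image_singleton, f1, f2, f3, f4]
        rw [this]
        exact ⟨h1, Finset.insert_subset sx h8⟩
      · have : ({1, 2, 3, 5} : Finset ℕ).image f = insert y {a, b, c} := by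
          rw [(by decide : ({1, 2, 3, 5} : Finset ℕ) = insert 5 {1, 2, 3})]
          simp only [Finset.image_insert, Finset.image_singleton, f1, f2, f3, f5]
        rw [this]
        exact ⟨h2, Finset.insert_subset sy h8⟩
      · have : ({4, 5, 6, 7} : Finset ℕ).image f = C := by
          rw [hCe]; simp only [Finset.image_insert, Finset.image_singleton, f4, f5, f6, f7]
        rw [this]
        exact ⟨h3, h9⟩

theorem matching_iff (H : HGraph 4) (k : ℕ) : (genTri 4).HasMatching H k ↔ Mat H.edges H.verts k := by
  have h7 : (genTri 4).verts.card = 7 := by rw [tri_verts]; rfl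
  unfold HGraph.HasMatching Mat
  rw [h7]
  constructor
  · rintro ⟨S, h1, h2, h3⟩
    exact ⟨S, h1, h2, fun i => (copy_iff H _ (h1 i).1).1 (h3 i)⟩
  · rintro ⟨S, h1, h2, h3⟩
    exact ⟨S, h1, h2, fun i => (copy_iff H _ (h1 i).1).2 (h3 i)⟩

theorem str_not_mat {X : Finset ℕ} {E : Finset (Finset ℕ)} {t : ℕ} (h : Str X E t) : ¬ Mat E X (t + 1) := by
  rintro ⟨S, h1, h2, h3⟩
  obtain ⟨K, hK, hKt, χ, _, hE⟩ := h
  have key : ∀ i, ∃ v ∈ S i, v ∈ K := by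
    intro i
    by_contra hno
    push Not at hno
    obtain ⟨S0, x, y, C, a1, a2, a3, a4, a5, a6, a7, a8, a9⟩ := h3 i
    have hx0 : x ∉ S0 := fun h => Finset.disjoint_left.1 a7 h a5
    have hy0 : y ∉ S0 := fun h => Finset.disjoint_left.1 a7 h a6
    have inj : ∀ e ∈ E, e ⊆ S i → Set.InjOn χ (e : Set ℕ) := by
      intro e he hs
      rcases ((hE e).1 he).2.2 with ⟨v, hv, hvK⟩ | h
      · exact absurd hvK (hno v (hs hv))
      · exact h
    have i1 := inj _ a1 (Finset.insert_subset (a9 a5) a8)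
    have i2 := inj _ a2 (Finset.insert_subset (a9 a6) a8)
    have i3 := inj _ a3 a9
    have c1 := ((hE _).1 a1).2.1
    have c2 := ((hE _).1 a2).2.1
    have hxy : χ x ≠ χ y := fun h => a4 (i3 a5 a6 h)
    have hin : Set.InjOn χ ((insert x (insert y S0) : Finset ℕ) : Set ℕ) := by
      intro u hu v hv huv
      rw [Finset.mem_coe, Finset.mem_insert, Finset.mem_insert] at hu hv
      rcases hu with rfl | rfl | hu <;> rcases hv with rfl | rfl | hv
      · rfl
      · exact absurd huv hxy
      · exact i1 (by simp) (by simp [hv]) huv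
      · exact absurd huv.symm hxy
      · rfl
      · exact i2 (by simp) (by simp [hv]) huv
      · exact i1 (by simp [hu]) (by simp) huv
      · exact i2 (by simp [hu]) (by simp) huv
      · exact i1 (by simp [hu]) (by simp [hv]) huv
    have hc : (insert x (insert y S0)).card = 5 := by
      rw [Finset.card_insert_of_notMem (by simp [a4, hx0]), c2]
    have := Finset.card_image_of_injOn hin
    rw [hc] at this
    have h4 : ((insert x (insert y S0)).image χ).card ≤ 4 := by
      have := Finset.card_le_univ ((insert x (insert y S0)).image χ)
      simpa using this
    omega
  choose g g1 g2 using key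
  have ginj : Function.Injective g := by
    intro i j hij
    by_contra hne
    exact Finset.disjoint_left.1 (h2 i j hne) (g1 i) (hij ▸ g1 j)
  have : (Finset.univ.image g).card ≤ K.card := by
    apply Finset.card_le_card
    intro v hv
    obtain ⟨i, _, rfl⟩ := Finset.mem_image.1 hv
    exact g2 i
  rw [Finset.card_image_of_injective _ ginj, Finset.card_univ, Fintype.card_fin] at this
  omega

open Classical in
theorem rainbow_count (U : Finset ℕ) (χ : ℕ → Fin 4) :
    ((U.powersetCard 4).filter (fun e : Finset ℕ => Set.InjOn χ (e : Set ℕ))).card =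
      (U.filter (fun v => χ v = 0)).card * (U.filter (fun v => χ v = 1)).card *
      (U.filter (fun v => χ v = 2)).card * (U.filter (fun v => χ v = 3)).card := by
  rw [mul_assoc, mul_assoc, ← Finset.card_product, ← Finset.card_product, ← Finset.card_product]
  symm
  refine Finset.card_bij (fun p _ => ({p.1, p.2.1, p.2.2.1, p.2.2.2} : Finset ℕ)) ?_ ?_ ?_
  · rintro ⟨a, b, c, d⟩ hp
    simp only [Finset.mem_product, Finset.mem_filter] at hp
    obtain ⟨⟨ha, ha'⟩, ⟨hb, hb'⟩, ⟨hc, hc'⟩, ⟨hd, hd'⟩⟩ := hp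
    have hinj : Set.InjOn χ (({a, b, c, d} : Finset ℕ) : Set ℕ) := by
      intro u hu v hv huv
      simp only [Finset.coe_insert, Finset.coe_singleton, Set.mem_insert_iff, Set.mem_singleton_iff] at hu hv
      rcases hu with rfl | rfl | rfl | rfl <;> rcases hv with rfl | rfl | rfl | rfl <;>
        first
        | rfl
        | (exfalso; simp only [ha', hb', hc', hd'] at huv; revert huv; decide)
    rw [Finset.mem_filter, Finset.mem_powersetCard]
    refine ⟨⟨?_, ?_⟩, hinj⟩
    · intro u hu
      simp only [Finset.mem_insert, Finset.mem_singleton] at hu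
      rcases hu with rfl | rfl | rfl | rfl <;> assumption
    · rw [← Finset.card_image_of_injOn hinj]
      simp only [Finset.image_insert, Finset.image_singleton, ha', hb', hc', hd']
      rfl
  · rintro ⟨a, b, c, d⟩ hp ⟨a2, b2, c2, d2⟩ hp2 heq
    simp only [Finset.mem_product, Finset.mem_filter] at hp hp2
    obtain ⟨⟨_, ha'⟩, ⟨_, hb'⟩, ⟨_, hc'⟩, ⟨_, hd'⟩⟩ := hp
    obtain ⟨⟨_, pa'⟩, ⟨_, pb'⟩, ⟨_, pc'⟩, ⟨_, pd'⟩⟩ := hp2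
    have hm : ∀ u, u ∈ ({a, b, c, d} : Finset ℕ) → u = a2 ∨ u = b2 ∨ u = c2 ∨ u = d2 := by
      intro u hu
      have : u ∈ ({a2, b2, c2, d2} : Finset ℕ) := heq ▸ hu
      simpa using this
    have e1 : a = a2 := by
      rcases hm a (by simp) with h | h | h | h
      · exact h
      all_goals (exfalso; rw [h] at ha'; simp_all)
    have e2 : b = b2 := by
      rcases hm b (by simp) with h | h | h | h
      on_goal 2 => exact h
      all_goals (exfalso; rw [h] at hb'; simp_all)
    have e3 : c = c2 := by
      rcases hm c (by simp) with h | h | h | h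
      on_goal 3 => exact h
      all_goals (exfalso; rw [h] at hc'; simp_all)
    have e4 : d = d2 := by
      rcases hm d (by simp) with h | h | h | h
      on_goal 4 => exact h
      all_goals (exfalso; rw [h] at hd'; simp_all)
    rw [e1, e2, e3, e4]
  · intro e he
    rw [Finset.mem_filter, Finset.mem_powersetCard] at he
    obtain ⟨⟨hs, hc⟩, hi⟩ := he
    obtain ⟨a, ha, b, hb, c, hc, d, hd, h0, h1, h2, h3, rfl⟩ := partition_get hc hi
    refine ⟨(a, b, c, d), ?_, rfl⟩
    simp only [Finset.mem_product, Finset.mem_filter]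
    exact ⟨⟨hs ha, h0⟩, ⟨hs hb, h1⟩, ⟨hs hc, h2⟩, ⟨hs hd, h3⟩⟩

open Classical in
theorem str_count {X : Finset ℕ} {E : Finset (Finset ℕ)} {m t : ℕ} (h : Str X E t) (hX : X.card = m + t) :
    E.card + m.choose 4 = (m + t).choose 4 + tn m := by
  obtain ⟨K, hK, hKt, χ, hbal, hE⟩ := h
  have hm : (X \ K).card = m := by rw [Finset.card_sdiff_of_subset hK]; omega
  have h1 : E.filter (fun e => e ⊆ X \ K) = ((X \ K).powersetCard 4).filter (fun e : Finset ℕ => Set.InjOn χ (e : Set ℕ)) := by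
    ext e
    rw [Finset.mem_filter, Finset.mem_filter, Finset.mem_powersetCard, hE]
    constructor
    · rintro ⟨⟨_, h2, h3⟩, h4⟩
      refine ⟨⟨h4, h2⟩, ?_⟩
      rcases h3 with ⟨v, hv, hvK⟩ | h3
      · exact absurd hvK (Finset.mem_sdiff.1 (h4 hv)).2
      · exact h3
    · rintro ⟨⟨h1, h2⟩, h3⟩
      exact ⟨⟨h1.trans Finset.sdiff_subset, h2, Or.inr h3⟩, h1⟩
  have h2 : E.filter (fun e => ¬ e ⊆ X \ K) = (X.powersetCard 4).filter (fun e => ¬ e ⊆ X \ K) := by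
    ext e
    rw [Finset.mem_filter, Finset.mem_filter, Finset.mem_powersetCard, hE]
    constructor
    · rintro ⟨⟨h1, h2, _⟩, h4⟩
      exact ⟨⟨h1, h2⟩, h4⟩
    · rintro ⟨⟨h1, h2⟩, h3⟩
      refine ⟨⟨h1, h2, Or.inl ?_⟩, h3⟩
      by_contra hno
      push Not at hno
      exact h3 (fun v hv => Finset.mem_sdiff.2 ⟨h1 hv, hno v hv⟩)
  have h3 : (X.powersetCard 4).filter (fun e => e ⊆ X \ K) = (X \ K).powersetCard 4 := by
    ext e
    rw [Finset.mem_filter, Finset.mem_powersetCard, Finset.mem_powersetCard]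
    constructor
    · rintro ⟨⟨_, h⟩, h2⟩; exact ⟨h2, h⟩
    · rintro ⟨h2, h⟩; exact ⟨⟨h2.trans Finset.sdiff_subset, h⟩, h2⟩
  have c1 := Finset.card_filter_add_card_filter_not (s := E) (fun e => e ⊆ X \ K)
  have c2 := Finset.card_filter_add_card_filter_not (s := X.powersetCard 4) (fun e => e ⊆ X \ K)
  rw [h3, Finset.card_powersetCard, Finset.card_powersetCard, hX, hm] at c2
  rw [h1, h2, rainbow_count] at c1
  have hs := part_sum (X \ K) χ
  have hp := pr_bal (hbal 0) (hbal 1) (hbal 2) (hbal 3) (by rw [hs])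
  rw [hs, hm] at hp
  rw [hp] at c1
  omega

/-- transport of the structure along an isomorphism -/
theorem str_pull {G H : HGraph 4} {t : ℕ} (hiso : G.Iso H) (h : Str H.verts H.edges t) :
    Str G.verts G.edges t := by
  obtain ⟨f, hf, hfe⟩ := hiso
  obtain ⟨K, hK, hKt, χ, hbal, hE⟩ := h
  have hinj := hf.injOn
  have cnt : ∀ P : ℕ → Prop, [DecidablePred P] → (G.verts.filter (fun v => P (f v))).card = (H.verts.filter P).card := by
    intro P _
    have him : (G.verts.filter (fun v => P (f v))).image f = H.verts.filter P := by
      ext w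
      rw [Finset.mem_image, Finset.mem_filter]
      constructor
      · rintro ⟨v, hv, rfl⟩
        rw [Finset.mem_filter] at hv
        exact ⟨hf.mapsTo hv.1, hv.2⟩
      · rintro ⟨hw, hP⟩
        obtain ⟨v, hv, rfl⟩ := hf.surjOn hw
        exact ⟨v, Finset.mem_filter.2 ⟨hv, hP⟩, rfl⟩
    rw [← him, Finset.card_image_of_injOn]
    exact hinj.mono (fun v hv => (Finset.mem_filter.1 hv).1)
  have hKc : (G.verts.filter (fun v => f v ∈ K)).card = t := by
    rw [cnt (fun w => w ∈ K), Finset.filter_mem_eq_inter, Finset.inter_eq_right.2 hK, hKt]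
  have hsd : G.verts \ G.verts.filter (fun v => f v ∈ K) = G.verts.filter (fun v => f v ∉ K) := by
    ext v; simp only [Finset.mem_sdiff, Finset.mem_filter]; tauto
  have hsd2 : H.verts \ K = H.verts.filter (fun v => v ∉ K) := by
    ext v; simp only [Finset.mem_sdiff, Finset.mem_filter]
  refine ⟨G.verts.filter (fun v => f v ∈ K), Finset.filter_subset _ _, hKc, fun v => χ (f v), ?_, ?_⟩
  · intro i
    rw [hsd, Finset.filter_filter, cnt (fun w => w ∉ K ∧ χ w = i), cnt (fun w => w ∉ K)]
    have := hbal i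
    rw [hsd2, Finset.filter_filter] at this
    exact this
  · intro e
    constructor
    · intro he
      have hs := G.edges_sub e he
      have hc := G.edges_card e he
      have h1 := (hfe e (Finset.mem_powersetCard.2 ⟨hs, hc⟩)).1 he
      refine ⟨hs, hc, ?_⟩
      rcases ((hE _).1 h1).2.2 with ⟨w, hw, hwK⟩ | h2
      · obtain ⟨v, hv, rfl⟩ := Finset.mem_image.1 hw
        exact Or.inl ⟨v, hv, Finset.mem_filter.2 ⟨hs hv, hwK⟩⟩
      · right
        intro u hu v hv huv
        exact hinj (hs hu) (hs hv) (h2 (Finset.mem_coe.2 (Finset.mem_image_of_mem f hu))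
          (Finset.mem_coe.2 (Finset.mem_image_of_mem f hv)) huv)
    · rintro ⟨hs, hc, h2⟩
      rw [hfe e (Finset.mem_powersetCard.2 ⟨hs, hc⟩), hE]
      refine ⟨?_, ?_, ?_⟩
      · intro w hw
        obtain ⟨v, hv, rfl⟩ := Finset.mem_image.1 hw
        exact hf.mapsTo (hs hv)
      · rw [Finset.card_image_of_injOn (hinj.mono (Finset.coe_subset.2 hs)), hc]
      · rcases h2 with ⟨v, hv, hvK⟩ | h2
        · exact Or.inl ⟨f v, Finset.mem_image_of_mem f hv, (Finset.mem_filter.1 hvK).2⟩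
        · right
          intro a ha b hb hab
          obtain ⟨u, hu, rfl⟩ := Finset.mem_image.1 (Finset.mem_coe.1 ha)
          obtain ⟨v, hv, rfl⟩ := Finset.mem_image.1 (Finset.mem_coe.1 hb)
          rw [h2 hu hv hab]

theorem label_bij {L : Type} [DecidableEq L] (X Y : Finset ℕ) (l l2 : ℕ → L)
    (h : ∀ i, (X.filter (fun v => l v = i)).card = (Y.filter (fun v => l2 v = i)).card) :
    ∃ f : ℕ → ℕ, Set.BijOn f ↑X ↑Y ∧ ∀ v ∈ X, l2 (f v) = l v := by
  have hb : ∀ i, ∃ f : ℕ → ℕ, Set.BijOn f ↑(X.filter (fun v => l v = i)) ↑(Y.filter (fun v => l2 v = i)) := by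
    intro i
    apply Set.Finite.exists_bijOn_of_encard_eq (Finset.finite_toSet _)
    rw [Set.encard_coe_eq_coe_finsetCard, Set.encard_coe_eq_coe_finsetCard, h i]
  choose g hg using hb
  have hgm : ∀ v ∈ X, g (l v) v ∈ Y ∧ l2 (g (l v) v) = l v := by
    intro v hv
    have := (hg (l v)).mapsTo (Finset.mem_coe.2 (Finset.mem_filter.2 ⟨hv, rfl⟩))
    simpa using this
  refine ⟨fun v => g (l v) v, ⟨?_, ?_, ?_⟩, fun v hv => (hgm v hv).2⟩
  · intro v hv; exact (hgm v hv).1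
  · intro u hu v hv huv
    have huv' : g (l u) u = g (l v) v := huv
    have hl : l u = l v := by rw [← (hgm u hu).2, ← (hgm v hv).2, huv']
    rw [hl] at huv'
    exact (hg (l v)).injOn (Finset.mem_coe.2 (Finset.mem_filter.2 ⟨hu, hl⟩)) (Finset.mem_coe.2 (Finset.mem_filter.2 ⟨hv, rfl⟩)) huv'
  · intro w hw
    obtain ⟨v, hv, hvw⟩ := (hg (l2 w)).surjOn (Finset.mem_coe.2 (Finset.mem_filter.2 ⟨hw, rfl⟩))
    rw [Finset.mem_coe, Finset.mem_filter] at hv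
    refine ⟨v, hv.1, ?_⟩
    show g (l v) v = w
    rw [hv.2, hvw]

theorem perm_match (s s2 : Fin 4 → ℕ) (q : ℕ) (h1 : ∀ i, s i = q ∨ s i = q + 1) (h2 : ∀ i, s2 i = q ∨ s2 i = q + 1)
    (hsum : ∑ i, s i = ∑ i, s2 i) : ∃ σ : Equiv.Perm (Fin 4), ∀ i, s2 (σ i) = s i := by
  have cnt : ∀ r : Fin 4 → ℕ, (∀ i, r i = q ∨ r i = q + 1) → ∑ i, r i = 4 * q + Fintype.card {i // r i = q + 1} := by
    intro r hr
    have : ∀ i, r i = q + (if r i = q + 1 then 1 else 0) := by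
      intro i; split_ifs with h
      · exact h
      · rcases hr i with h' | h'
        · simpa using h'
        · exact absurd h' h
    rw [Finset.sum_congr rfl (fun i _ => this i), Finset.sum_add_distrib, Fintype.card_subtype]
    simp
  have hc : Fintype.card {i // s i = q + 1} = Fintype.card {i // s2 i = q + 1} := by
    have a := cnt s h1
    have b := cnt s2 h2
    omega
  obtain ⟨e⟩ := Fintype.card_eq.1 hc
  refine ⟨e.extendSubtype, fun i => ?_⟩
  by_cases hi : s i = q + 1
  · rw [e.extendSubtype_mem i hi, hi]
  · have h3 := e.extendSubtype_not_mem i hi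
    rcases h1 i with h | h
    · rcases h2 (e.extendSubtype i) with h' | h'
      · rw [h, h']
      · exact absurd h' h3
    · exact absurd h hi

theorem str_iso {G H : HGraph 4} {t : ℕ} (hG : Str G.verts G.edges t) (hH : Str H.verts H.edges t)
    (hc : G.verts.card = H.verts.card) : G.Iso H := by
  obtain ⟨K, hK, hKt, χ, hbal, hE⟩ := hG
  obtain ⟨K2, hK2, hKt2, χ2, hbal2, hE2⟩ := hH
  have hm : (G.verts \ K).card = (H.verts \ K2).card := by
    rw [Finset.card_sdiff_of_subset hK, Finset.card_sdiff_of_subset hK2, hc, hKt, hKt2]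
  obtain ⟨σ, hσ⟩ := perm_match (fun i => ((G.verts \ K).filter (fun v => χ v = i)).card)
    (fun i => ((H.verts \ K2).filter (fun v => χ2 v = i)).card) _ hbal (by rw [hm]; exact hbal2) (by
      rw [Fin.sum_univ_four, Fin.sum_univ_four, part_sum, part_sum, hm])
  obtain ⟨f, hf, hfl⟩ := label_bij G.verts H.verts (fun v => if v ∈ K then none else some (σ (χ v)))
    (fun v => if v ∈ K2 then none else some (χ2 v)) (by
      intro i
      cases i with
      | none =>
        have a : G.verts.filter (fun v => (if v ∈ K then none else some (σ (χ v))) = none) = K := by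
          ext v
          rw [Finset.mem_filter]
          by_cases hv : v ∈ K
          · simp [hv, hK hv]
          · simp [hv]
        have b : H.verts.filter (fun v => (if v ∈ K2 then none else some (χ2 v)) = none) = K2 := by
          ext v
          rw [Finset.mem_filter]
          by_cases hv : v ∈ K2
          · simp [hv, hK2 hv]
          · simp [hv]
        rw [a, b, hKt, hKt2]
      | some j =>
        have a : G.verts.filter (fun v => (if v ∈ K then none else some (σ (χ v))) = some j) =
            (G.verts \ K).filter (fun v => χ v = σ.symm j) := by
          ext v
          rw [Finset.mem_filter, Finset.mem_filter, Finset.mem_sdiff]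
          by_cases hv : v ∈ K
          · simp [hv]
          · simp [hv, Equiv.eq_symm_apply]
        have b : H.verts.filter (fun v => (if v ∈ K2 then none else some (χ2 v)) = some j) =
            (H.verts \ K2).filter (fun v => χ2 v = j) := by
          ext v
          rw [Finset.mem_filter, Finset.mem_filter, Finset.mem_sdiff]
          by_cases hv : v ∈ K2
          · simp [hv]
          · simp [hv]
        rw [a, b, ← hσ (σ.symm j), Equiv.apply_symm_apply])
  have hfK : ∀ v ∈ G.verts, (f v ∈ K2 ↔ v ∈ K) := by
    intro v hv
    have := hfl v hv
    by_cases h1 : v ∈ K <;> by_cases h2 : f v ∈ K2 <;> simp [h1, h2] at this ⊢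
  have hfχ : ∀ v ∈ G.verts, v ∉ K → χ2 (f v) = σ (χ v) := by
    intro v hv h1
    have h2 : f v ∉ K2 := fun h => h1 ((hfK v hv).1 h)
    have := hfl v hv
    simpa [h1, h2] using this
  refine ⟨f, hf, fun e he => ?_⟩
  obtain ⟨hs, hc⟩ := Finset.mem_powersetCard.1 he
  have hinj := hf.injOn
  have him : e.image f ⊆ H.verts := by
    intro w hw
    obtain ⟨v, hv, rfl⟩ := Finset.mem_image.1 hw
    exact hf.mapsTo (hs hv)
  have hic : (e.image f).card = 4 := by
    rw [Finset.card_image_of_injOn (hinj.mono (Finset.coe_subset.2 hs)), hc]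
  rw [hE, hE2]
  by_cases hk : ∃ v ∈ e, v ∈ K
  · have hk2 : ∃ w ∈ e.image f, w ∈ K2 := by
      obtain ⟨v, hv, hvK⟩ := hk
      exact ⟨f v, Finset.mem_image_of_mem f hv, (hfK v (hs hv)).2 hvK⟩
    exact ⟨fun _ => ⟨him, hic, Or.inl hk2⟩, fun _ => ⟨hs, hc, Or.inl hk⟩⟩
  · have hk2 : ¬ ∃ w ∈ e.image f, w ∈ K2 := by
      rintro ⟨w, hw, hwK⟩
      obtain ⟨v, hv, rfl⟩ := Finset.mem_image.1 hw
      exact hk ⟨v, hv, (hfK v (hs hv)).1 hwK⟩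
    push Not at hk
    constructor
    · rintro ⟨_, _, h⟩
      rcases h with ⟨v, hv, h⟩ | h
      · exact absurd h (hk v hv)
      · refine ⟨him, hic, Or.inr ?_⟩
        intro a ha b hb hab
        obtain ⟨u, hu, rfl⟩ := Finset.mem_image.1 (Finset.mem_coe.1 ha)
        obtain ⟨v, hv, rfl⟩ := Finset.mem_image.1 (Finset.mem_coe.1 hb)
        rw [hfχ u (hs hu) (hk u hu), hfχ v (hs hv) (hk v hv)] at hab
        rw [h hu hv (σ.injective hab)]
    · rintro ⟨_, _, h⟩
      rcases h with h | h
      · exact absurd h hk2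
      · refine ⟨hs, hc, Or.inr ?_⟩
        intro u hu v hv huv
        refine hinj (hs hu) (hs hv) (h (Finset.mem_coe.2 (Finset.mem_image_of_mem f hu))
          (Finset.mem_coe.2 (Finset.mem_image_of_mem f hv)) ?_)
        rw [hfχ u (hs hu) (hk u hu), hfχ v (hs hv) (hk v hv), huv]

theorem res_count (t k i : ℕ) (hi : i < 4) :
    ((Finset.Ico t (t + k)).filter (fun v => v % 4 = i)).card = (t + k + 3 - i) / 4 - (t + 3 - i) / 4 := by
  induction k with
  | zero => simp
  | succ k ih =>
    rw [← add_assoc, ← Finset.insert_Ico_right_eq_Ico_add_one (by omega), Finset.filter_insert]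
    split_ifs with h
    · rw [Finset.card_insert_of_notMem (by simp), ih]; omega
    · rw [ih]; omega

theorem target_str (n t : ℕ) (h : t ≤ n) :
    ((completeOn 4 (Finset.range t)).join (turanOn 4 4 (Finset.Ico t n))).verts.card = n ∧
    Str ((completeOn 4 (Finset.range t)).join (turanOn 4 4 (Finset.Ico t n))).verts
      ((completeOn 4 (Finset.range t)).join (turanOn 4 4 (Finset.Ico t n))).edges t := by
  have hv : ((completeOn 4 (Finset.range t)).join (turanOn 4 4 (Finset.Ico t n))).verts = Finset.range n := by
    show Finset.range t ∪ Finset.Ico t n = Finset.range n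
    ext v; simp only [Finset.mem_union, Finset.mem_range, Finset.mem_Ico]; omega
  have hsd : Finset.range n \ Finset.range t = Finset.Ico t n := by
    ext v; simp only [Finset.mem_sdiff, Finset.mem_range, Finset.mem_Ico]; omega
  have hfin : ∀ u v : ℕ, (Fin.ofNat 4 u = Fin.ofNat 4 v ↔ u % 4 = v % 4) := by
    intro u v
    rw [Fin.ext_iff]; rfl
  rw [hv]
  refine ⟨Finset.card_range n, Finset.range t, Finset.range_subset_range.2 h, Finset.card_range t, fun v => Fin.ofNat 4 v, ?_, ?_⟩
  · intro i
    rw [hsd, Nat.card_Ico]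
    obtain ⟨k, rfl⟩ := Nat.exists_eq_add_of_le h
    have : (Finset.Ico t (t + k)).filter (fun v => Fin.ofNat 4 v = i) = (Finset.Ico t (t + k)).filter (fun v => v % 4 = i.1) := by
      apply Finset.filter_congr
      intro v _
      rw [Fin.ext_iff]; rfl
    rw [this, res_count t k i.1 i.2]
    have := i.2
    omega
  · intro e
    have hedge : e ∈ ((completeOn 4 (Finset.range t)).join (turanOn 4 4 (Finset.Ico t n))).edges ↔
      (((e ⊆ Finset.range t ∧ e.card = 4) ∨ ((e ⊆ Finset.Ico t n ∧ e.card = 4) ∧ ∀ u ∈ e, ∀ v ∈ e, u % 4 = v % 4 → u = v) ∨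
        ((e ∩ Finset.range t).Nonempty ∧ (e ∩ Finset.Ico t n).Nonempty)) ∧ (e ⊆ Finset.range n ∧ e.card = 4)) := by
      rw [← hv]
      unfold HGraph.join completeOn turanOn HGraph.ofEdges
      simp only [Finset.mem_filter, Finset.mem_union, Finset.mem_powersetCard]
      tauto
    rw [hedge]
    constructor
    · rintro ⟨h1, h2, h3⟩
      refine ⟨h2, h3, ?_⟩
      rcases h1 with ⟨h1, _⟩ | ⟨_, h1⟩ | ⟨⟨v, hv⟩, _⟩
      · obtain ⟨v, hv⟩ : e.Nonempty := Finset.card_pos.1 (by omega)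
        exact Or.inl ⟨v, hv, h1 hv⟩
      · right
        intro u hu v hv huv
        exact h1 u hu v hv ((hfin u v).1 huv)
      · rw [Finset.mem_inter] at hv
        exact Or.inl ⟨v, hv.1, hv.2⟩
    · rintro ⟨h1, h2, h3⟩
      refine ⟨?_, h1, h2⟩
      by_cases hk : ∃ v ∈ e, v ∈ Finset.range t
      · by_cases hk2 : e ⊆ Finset.range t
        · exact Or.inl ⟨hk2, h2⟩
        · obtain ⟨w, hw, hw2⟩ := Finset.not_subset.1 hk2
          obtain ⟨v, hv, hv2⟩ := hk
          refine Or.inr (Or.inr ⟨⟨v, Finset.mem_inter.2 ⟨hv, hv2⟩⟩, ⟨w, Finset.mem_inter.2 ⟨hw, ?_⟩⟩⟩)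
          rw [← hsd]; exact Finset.mem_sdiff.2 ⟨h1 hw, hw2⟩
      · rcases h3 with h3 | h3
        · exact absurd h3 hk
        · push Not at hk
          refine Or.inr (Or.inl ⟨⟨?_, h2⟩, ?_⟩)
          · intro v hv
            rw [← hsd]; exact Finset.mem_sdiff.2 ⟨h1 hv, hk v hv⟩
          · intro u hu v hv huv
            exact h3 hu hv ((hfin u v).2 huv)

theorem arith3 {Q m t : ℕ} (hQ : 1 ≤ Q) (ht : 2 * Q * t ≤ m + t) : Q * t ≤ m := by
  have : t ≤ Q * t := Nat.le_mul_of_pos_left t hQ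
  have h2 : 2 * Q * t = Q * t + Q * t := by ring
  omega

theorem arith1 {Q M0 m t : ℕ} (hQ : 1 ≤ Q) (hn : 2 * (2 * M0 + Q) ≤ m + t) (ht : 2 * Q * t ≤ m + t) : Q ≤ m := by
  have h1 := arith3 hQ ht
  have : t ≤ Q * t := Nat.le_mul_of_pos_left t hQ
  omega

theorem arith2 {Q M0 m t : ℕ} (hQ : 1 ≤ Q) (hn : 2 * (2 * M0 + Q) ≤ m + t) (ht : 2 * Q * t ≤ m + t) : 2 * M0 ≤ m := by
  have h1 := arith3 hQ ht
  have : t ≤ Q * t := Nat.le_mul_of_pos_left t hQ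
  omega

theorem arith4 {Q n t : ℕ} (hQ : 1 ≤ Q) (ht : 2 * Q * t ≤ n) : t ≤ n := by
  have : t ≤ Q * t := Nat.le_mul_of_pos_left t hQ
  have h2 : 2 * Q * t = Q * t + Q * t := by ring
  omega

/-- the density Corrádi–Hajnal theorem for the 4-uniform
generalized triangle. -/
theorem statement_8 :
    ∃ N₀ : ℕ, ∃ c : ℝ, 0 < c ∧ ∀ n : ℕ, N₀ ≤ n → ∀ t : ℕ, (t : ℝ) ≤ c * n →
      ∀ H : HGraph 4, IsExtremalMatchingFree 4 n t (genTri 4) H ↔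
        H.Iso ((completeOn 4 (Finset.range t)).join (turanOn 4 4 (Finset.Ico t n))) := by
  obtain ⟨M0, hM0, hM⟩ := turan_exact
  refine ⟨2 * (2 * M0 + 10 ^ 13), 1 / (2 * 10 ^ 13), by norm_num, ?_⟩
  intro n hn t ht H
  have ht2 : 2 * 10 ^ 13 * t ≤ n := by
    have h1 : (2 * 10 ^ 13 : ℝ) * t ≤ n := by
      have : (n : ℝ) = (2 * 10 ^ 13 : ℝ) * (1 / (2 * 10 ^ 13) * n) := by
        rw [← mul_assoc, mul_one_div_cancel (by norm_num), one_mul]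
      rw [this]
      exact mul_le_mul_of_nonneg_left ht (by norm_num)
    exact_mod_cast h1
  have hQ : 1 ≤ 10 ^ 13 := by norm_num
  have htn : t ≤ n := arith4 hQ ht2
  obtain ⟨m, rfl⟩ : ∃ m, n = m + t := ⟨n - t, (Nat.sub_add_cancel htn).symm⟩
  have main := main_ind hM (m := m) (arith1 hQ hn ht2) (arith2 hQ hn ht2) t (arith3 hQ ht2)
  have uni : ∀ G : HGraph 4, Uni G.edges G.verts := fun G e he => ⟨G.edges_sub e he, G.edges_card e he⟩
  obtain ⟨tc, tS⟩ := target_str (m + t) t htn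
  set T := (completeOn 4 (Finset.range t)).join (turanOn 4 4 (Finset.Ico t (m + t))) with hT
  have tcount := str_count tS tc
  have hex : exMatchN 4 (m + t) t (genTri 4) = T.edges.card := by
    unfold exMatchN
    apply IsGreatest.csSup_eq
    constructor
    · refine ⟨T, tc, ?_, rfl⟩
      rw [matching_iff]
      exact str_not_mat tS
    · rintro k ⟨G, g1, g2, rfl⟩
      rw [matching_iff] at g2
      have := (main G.verts G.edges (uni G) g1 g2).1
      omega
  unfold IsExtremalMatchingFree
  rw [hex, matching_iff]
  constructor
  · rintro ⟨h1, h2, h3⟩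
    have hS := (main H.verts H.edges (uni H) h1 h2).2 (by rw [h3]; exact tcount)
    exact str_iso hS tS (by rw [h1, tc])
  · intro hiso
    have hS := str_pull hiso tS
    have hc : H.verts.card = m + t := by
      obtain ⟨f, hf, _⟩ := hiso
      rw [← tc]
      exact Finset.card_bij (fun v _ => f v) (fun v hv => hf.mapsTo hv) (fun u hu v hv h => hf.injOn hu hv h)
        (fun w hw => by obtain ⟨v, hv, h⟩ := hf.surjOn hw; exact ⟨v, hv, h⟩)
    refine ⟨hc, str_not_mat hS, ?_⟩
    have := str_count hS hc
    omega

end DensityCH
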